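/- arXiv:1708.05218 — 9 statements merged into one kernel-verified Lean document; each statement's English description precedes it below -/
import Mathlib

section
/- Let X be a real Banach space and U ⊂ X a nonempty bounded set. A sequence {V_n : n ∈ ℕ} of nonempty subsets of U is determining for U if and only if every slice of U contains one of the sets V_n. -/
open Bornology Set Pointwise

variable {X : Type*} [NormedAddCommGroup X] [NormedSpace ℝ X]

/-- The sliceSet of `A` given by the functional `f` and `ε > 0`. -/
noncomputable def sliceSet (A : Set X) (f : X →L[ℝ] ℝ) (ε : ℝ) : Set X :=
  {x ∈ A | sSup (f '' A) - ε < f x}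

/-- `S` is a sliceSet of `A`: a nonempty set of the form `sliceSet A f ε` with `f ≠ 0`, `ε > 0`. -/
def IsSlice (A S : Set X) : Prop :=
  S.Nonempty ∧ ∃ f : X →L[ℝ] ℝ, f ≠ 0 ∧ ∃ ε : ℝ, 0 < ε ∧ S = sliceSet A f ε

/-- A sequence of subsets of `A` is determining if every set `B` meeting all of them
has `A` inside the closed convex hull of `B`. -/
def Determining (A : Set X) (V : ℕ → Set X) : Prop :=
  ∀ B : Set X, (∀ n, (B ∩ V n).Nonempty) → A ⊆ closure (convexHull ℝ B)

/-- A bounded set is slicely countably determined if it has a determining sequence of slices. -/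
def IsSCD (A : Set X) : Prop :=
  ∃ V : ℕ → Set X, (∀ n, IsSlice A (V n)) ∧ Determining A V

/-- The Daugavet property: every rank-one operator `x ↦ f x • y` satisfies the
Daugavet equation `‖Id + T‖ = 1 + ‖T‖`. -/
def DaugavetProperty (X : Type*) [NormedAddCommGroup X] [NormedSpace ℝ X] : Prop :=
  ∀ (f : X →L[ℝ] ℝ) (y : X),
    ‖ContinuousLinearMap.id ℝ X + f.smulRight y‖ = 1 + ‖f.smulRight y‖


theorem determining_iff_every_slice_contains
    {X : Type*} [NormedAddCommGroup X] [NormedSpace ℝ X] [CompleteSpace X]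
    (U : Set X) (hU : U.Nonempty) (hUb : IsBounded U)
    (V : ℕ → Set X) (hVne : ∀ n, (V n).Nonempty) (hVU : ∀ n, V n ⊆ U) :
    Determining U V ↔
      ∀ (f : X →L[ℝ] ℝ), f ≠ 0 → ∀ ε : ℝ, 0 < ε → ∃ n, V n ⊆ sliceSet U f ε := by
  have hbdd : ∀ f : X →L[ℝ] ℝ, BddAbove (f '' U) := fun f =>
    (f.lipschitz.isBounded_image hUb).bddAbove
  constructor
  · intro h f hf ε hε
    by_contra! hcon
    have hb : ∀ n, ∃ b ∈ V n, f b ≤ sSup (f '' U) - ε := by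
      intro n
      obtain ⟨b, hb, hbn⟩ := Set.not_subset.1 (hcon n)
      refine ⟨b, hb, ?_⟩
      by_contra! hlt
      exact hbn ⟨hVU n hb, hlt⟩
    choose b hbV hbf using hb
    have hsub := h (Set.range b) (fun n => ⟨b n, ⟨n, rfl⟩, hbV n⟩)
    have hcl : closure (convexHull ℝ (Set.range b)) ⊆ {x | f x ≤ sSup (f '' U) - ε} := by
      apply closure_minimal
      · apply convexHull_min
        · rintro _ ⟨n, rfl⟩
          exact hbf n
        · exact convex_halfSpace_le f.toLinearMap.isLinear _
      · exact isClosed_le f.continuous continuous_const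
    have : sSup (f '' U) ≤ sSup (f '' U) - ε := by
      apply csSup_le (hU.image f)
      rintro _ ⟨x, hx, rfl⟩
      exact hcl (hsub hx)
    linarith
  · intro h B hB a ha
    by_contra hna
    obtain ⟨f, u, hfu, hua⟩ := geometric_hahn_banach_closed_point
      (convex_convexHull ℝ B).closure isClosed_closure hna
    have hBu : ∀ b ∈ B, f b < u := fun b hb =>
      hfu b (subset_closure (subset_convexHull ℝ B hb))
    have hf : f ≠ 0 := by
      rintro rfl
      obtain ⟨b, hb, -⟩ := hB 0
      have := hBu b hb
      simp at this hua
      linarith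
    have hs : f a ≤ sSup (f '' U) := le_csSup (hbdd f) ⟨a, ha, rfl⟩
    obtain ⟨n, hn⟩ := h f hf (sSup (f '' U) - u) (by linarith)
    obtain ⟨b, hb, hbV⟩ := hB n
    have h1 := (hn hbV).2
    have h2 := hBu b hb
    linarith
end

section
/- Let X be a real Banach space and A ⊂ X a nonempty bounded set. Then the following are equivalent: (1) A is SCD; (2) the convex hull conv(A) is SCD; (3) the closed convex hull closure(conv(A)) is SCD. -/
open Bornology Set Pointwise

variable {X : Type*} [NormedAddCommGroup X] [NormedSpace ℝ X]

theorem aux_le {X : Type*} [NormedAddCommGroup X] [NormedSpace ℝ X]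
    {A : Set X} (f : X →L[ℝ] ℝ) (u : ℝ) (h : ∀ x ∈ A, f x ≤ u) :
    ∀ x ∈ closure (convexHull ℝ A), f x ≤ u := by
  intro x hx
  have h1 : convexHull ℝ A ⊆ {x | f x ≤ u} :=
    convexHull_min h (convex_halfSpace_le f.toLinearMap.isLinear u)
  exact closure_minimal h1 (isClosed_le f.continuous continuous_const) hx

theorem aux_bdd {X : Type*} [NormedAddCommGroup X] [NormedSpace ℝ X]
    {A : Set X} (hAb : IsBounded A) (f : X →L[ℝ] ℝ) : BddAbove (f '' A) := by
  obtain ⟨R, hR⟩ := hAb.exists_norm_le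
  refine ⟨‖f‖ * R, ?_⟩
  rintro _ ⟨x, hx, rfl⟩
  calc f x ≤ ‖f x‖ := Real.le_norm_self _
    _ ≤ ‖f‖ * ‖x‖ := f.le_opNorm x
    _ ≤ ‖f‖ * R := by gcongr; exact hR x hx

theorem aux_sup {X : Type*} [NormedAddCommGroup X] [NormedSpace ℝ X]
    {A C : Set X} (hA : A.Nonempty) (hAb : IsBounded A) (hAC : A ⊆ C)
    (hC : C ⊆ closure (convexHull ℝ A)) (f : X →L[ℝ] ℝ) :
    sSup (f '' C) = sSup (f '' A) := by
  have h1 := isLUB_csSup (hA.image f) (aux_bdd hAb f)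
  have h2 : IsLUB (f '' C) (sSup (f '' A)) := by
    constructor
    · rintro _ ⟨x, hx, rfl⟩
      exact aux_le f _ (fun y hy => h1.1 (mem_image_of_mem f hy)) x (hC hx)
    · intro b hb
      exact h1.2 (fun y hy => hb (image_mono hAC hy))
  exact h2.csSup_eq ((hA.mono hAC).image f)

theorem aux_ne {X : Type*} [NormedAddCommGroup X] [NormedSpace ℝ X]
    {A : Set X} (hA : A.Nonempty) (f : X →L[ℝ] ℝ) {ε : ℝ} (hε : 0 < ε) :
    (sliceSet A f ε).Nonempty := by
  obtain ⟨_, ⟨x, hx, rfl⟩, h⟩ :=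
    exists_lt_of_lt_csSup (hA.image f) (show sSup (f '' A) - ε < sSup (f '' A) by linarith)
  exact ⟨x, hx, h⟩

theorem aux_main {X : Type*} [NormedAddCommGroup X] [NormedSpace ℝ X]
    {A C : Set X} (hA : A.Nonempty) (hAb : IsBounded A) (hAC : A ⊆ C)
    (hC : C ⊆ closure (convexHull ℝ A)) : IsSCD A ↔ IsSCD C := by
  have hsup := aux_sup hA hAb hAC hC
  constructor
  · rintro ⟨V, hV, hdet⟩
    choose hne f hf ε hε hVe using hV
    refine ⟨fun k => sliceSet C (f k.unpair.1) (ε k.unpair.1 / (k.unpair.2 + 1)), ?_, ?_⟩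
    · intro k
      have hp : 0 < ε k.unpair.1 / ((k.unpair.2 : ℝ) + 1) := div_pos (hε _) (by positivity)
      exact ⟨aux_ne (hA.mono hAC) _ hp, _, hf _, _, hp, rfl⟩
    · intro B hB
      have key : A ⊆ closure (convexHull ℝ B) := by
        intro a ha
        by_contra hna
        obtain ⟨g, u', hg, hga⟩ := geometric_hahn_banach_closed_point
          ((convex_convexHull ℝ B).closure) isClosed_closure hna
        obtain ⟨u, hu', hu⟩ := exists_between hga
        have hex : ∀ n, ∃ x ∈ V n, g x ≤ u := by
          intro n
          by_contra! hcon
          obtain ⟨M, hM⟩ := aux_bdd hAb (-g)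
          have hM' : ∀ x ∈ A, - g x ≤ M := fun x hx => hM ⟨x, hx, rfl⟩
          set s := sSup (f n '' A) with hs
          set K := max (u + M) 0 with hK
          have hK0 : 0 ≤ K := le_max_right _ _
          have hK1 : u + M ≤ K := le_max_left _ _
          have hen := hε n
          have hlin : ∀ x ∈ A, ((K / ε n) • f n - g) x ≤ (K / ε n) * s - u := by
            intro x hx
            have hxs : f n x ≤ s := le_csSup (aux_bdd hAb (f n)) ⟨x, hx, rfl⟩
            have hKe : 0 ≤ K / ε n := by positivity
            simp only [ContinuousLinearMap.sub_apply, ContinuousLinearMap.smul_apply, smul_eq_mul]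
            by_cases hxV : s - ε n < f n x
            · have := hcon x (by rw [hVe n]; exact ⟨hx, hxV⟩)
              nlinarith [mul_le_mul_of_nonneg_left hxs hKe]
            · have h3 : f n x ≤ s - ε n := not_lt.mp hxV
              have h4 := mul_le_mul_of_nonneg_left h3 hKe
              have h5 : K / ε n * ε n = K := div_mul_cancel₀ _ hen.ne'
              have := hM' x hx
              nlinarith
          obtain ⟨m, hm⟩ := exists_nat_gt (K / (u - u'))
          obtain ⟨b, hbB, hbC, hb⟩ := hB (Nat.pair n m)
          simp only [Nat.unpair_pair] at hb
          rw [hsup, ← hs] at hb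
          have h6 := aux_le _ _ hlin b (hC hbC)
          simp only [ContinuousLinearMap.sub_apply, ContinuousLinearMap.smul_apply,
            smul_eq_mul] at h6
          have h7 := hg b (subset_closure (subset_convexHull ℝ B hbB))
          have hKe : 0 ≤ K / ε n := by positivity
          have h8 := mul_le_mul_of_nonneg_left hb.le hKe
          have h9 : K / ε n * (ε n / ((m : ℝ) + 1)) = K / ((m : ℝ) + 1) := by
            field_simp
          have h10 : K / ((m : ℝ) + 1) < u - u' := by
            rw [div_lt_iff₀ (by linarith)] at hm
            rw [div_lt_iff₀ (by positivity)]
            nlinarith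
          nlinarith
        choose x hxV hxg using hex
        have h11 := hdet (range x) (fun n => ⟨x n, mem_range_self n, hxV n⟩) ha
        have h12 := aux_le g u (by rintro _ ⟨n, rfl⟩; exact hxg n) a h11
        linarith
      exact hC.trans (closure_minimal (convexHull_min key (convex_convexHull ℝ B).closure)
        isClosed_closure)
  · rintro ⟨V, hV, hdet⟩
    choose hne f hf ε hε hVe using hV
    refine ⟨fun n => sliceSet A (f n) (ε n), fun n => ⟨aux_ne hA _ (hε n), _, hf n, _, hε n, rfl⟩, ?_⟩
    intro B hB
    refine hAC.trans (hdet B fun n => ?_)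
    obtain ⟨b, hbB, hbA, hb⟩ := hB n
    refine ⟨b, hbB, ?_⟩
    rw [hVe n]
    refine ⟨hAC hbA, ?_⟩
    rw [hsup]
    exact hb

theorem isSCD_iff_convexHull_iff_closedConvexHull
    {X : Type*} [NormedAddCommGroup X] [NormedSpace ℝ X] [CompleteSpace X]
    (A : Set X) (hA : A.Nonempty) (hAb : IsBounded A) :
    (IsSCD A ↔ IsSCD (convexHull ℝ A)) ∧
    (IsSCD A ↔ IsSCD (closure (convexHull ℝ A))) := by
  exact ⟨aux_main hA hAb (subset_convexHull ℝ A) subset_closure,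
    aux_main hA hAb ((subset_convexHull ℝ A).trans subset_closure) subset_rfl⟩
end

section
/- Let X be a real Banach space with the Daugavet property. Then for every sequence (S_n) of slices of the closed unit ball B_X and every x ∈ X with ‖x‖ = 1 there exist points x_n ∈ S_n, n ∈ ℕ, such that x does not belong to the closed linear span of {x_n : n ∈ ℕ}. -/
open Bornology Set Pointwise

variable {X : Type*} [NormedAddCommGroup X] [NormedSpace ℝ X]

theorem aux_slice {X : Type*} [NormedAddCommGroup X] [NormedSpace ℝ X]
    (h : DaugavetProperty X) (F : X →L[ℝ] ℝ) (c : ℝ) (hc : 0 ≤ c) (hcF : c < ‖F‖)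
    (y : X) (hy : ‖y‖ = 1) (ε : ℝ) (hε : 0 < ε) :
    ∃ (F' : X →L[ℝ] ℝ) (c' : ℝ), 0 ≤ c' ∧ c' < ‖F'‖ ∧
      ∀ u : X, ‖u‖ ≤ 1 → c' < F' u → c < F u ∧ 2 - ε < ‖y + u‖ := by
  have hF : 0 < ‖F‖ := lt_of_le_of_lt hc hcF
  obtain ⟨δ, hδ0, hδ1, hδε, hδc⟩ : ∃ δ : ℝ, 0 < δ ∧ δ ≤ 1 ∧ δ ≤ ε / 2 ∧ c ≤ ‖F‖ * (1 - δ) := by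
    refine ⟨min (ε / 2) (1 - c / ‖F‖), ?_, ?_, min_le_left _ _, ?_⟩
    · have : c / ‖F‖ < 1 := by rw [div_lt_one hF]; exact hcF
      exact lt_min (by linarith) (by linarith)
    · have : 0 ≤ c / ‖F‖ := by positivity
      exact (min_le_right _ _).trans (by linarith)
    · have h1 := min_le_right (ε / 2) (1 - c / ‖F‖)
      have h2 : c / ‖F‖ ≤ 1 - min (ε / 2) (1 - c / ‖F‖) := by linarith
      rw [div_le_iff₀ hF] at h2
      linarith
  obtain ⟨f, hfdef⟩ : ∃ f : X →L[ℝ] ℝ, f = ‖F‖⁻¹ • F := ⟨_, rfl⟩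
  have hf : ‖f‖ = 1 := by
    rw [hfdef, norm_smul, norm_inv, norm_norm, inv_mul_cancel₀ hF.ne']
  have hFf : ∀ u, F u = ‖F‖ * f u := by
    intro u
    rw [hfdef]
    simp only [smul_apply, smul_eq_mul]
    rw [mul_inv_cancel_left₀ hF.ne']
  have hnorm : ‖ContinuousLinearMap.id ℝ X + f.smulRight y‖ = 2 := by
    rw [h f y, ContinuousLinearMap.norm_smulRight_apply, hf, hy]; norm_num
  obtain ⟨x0, hx0, hx0'⟩ := ContinuousLinearMap.exists_lt_apply_of_lt_opNorm
    (ContinuousLinearMap.id ℝ X + f.smulRight y) (r := 2 - δ) (by rw [hnorm]; linarith)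
  have key : ∃ (g : X →L[ℝ] ℝ) (x1 : X), ‖g‖ ≤ 1 ∧ ‖x1‖ ≤ 1 ∧ 0 ≤ g y ∧
      2 - δ < g x1 + g y * f x1 := by
    obtain ⟨g, hg, hgx⟩ := exists_dual_vector'' ℝ
      ((ContinuousLinearMap.id ℝ X + f.smulRight y) x0)
    have hv : 2 - δ < g x0 + g y * f x0 := by
      have hgx2 := hx0'.trans_eq (show _ = g _ from hgx.symm)
      simp at hgx2
      linarith
    rcases le_total 0 (g y) with h0 | h0
    · exact ⟨g, x0, hg, hx0.le, h0, hv⟩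
    · refine ⟨-g, -x0, by simpa using hg, by simpa using hx0.le, by simpa using h0, ?_⟩
      simpa using hv
  obtain ⟨g, x1, hg, hx1, hgy, hgx⟩ := key
  refine ⟨g + g y • f, 2 - δ, by linarith, ?_, ?_⟩
  · have h1 := (g + g y • f).le_opNorm x1
    have h2 : ‖g + g y • f‖ * ‖x1‖ ≤ ‖g + g y • f‖ * 1 :=
      mul_le_mul_of_nonneg_left hx1 (norm_nonneg _)
    have h3 := Real.le_norm_self ((g + g y • f) x1)
    simp only [add_apply, smul_apply, smul_eq_mul] at h1 h3
    linarith
  · intro u hu hcu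
    simp only [add_apply, smul_apply, smul_eq_mul] at hcu
    have bd : ∀ (φ : X →L[ℝ] ℝ) (v : X), ‖φ‖ ≤ 1 → φ v ≤ ‖v‖ := by
      intro φ v hφ
      have h1 := φ.le_opNorm v
      have h2 : ‖φ‖ * ‖v‖ ≤ 1 * ‖v‖ := mul_le_mul_of_nonneg_right hφ (norm_nonneg _)
      have h3 := Real.le_norm_self (φ v)
      linarith
    have a1 := bd g u hg
    have a2 := bd f u hf.le
    have a3 := bd g y hg
    have a4 := bd g (y + u) hg
    rw [map_add] at a4
    rw [hy] at a3
    have p : 1 - δ < g y * f u := by linarith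
    have p0 : 0 < g y * f u := by linarith
    have q : 0 < f u := by
      by_contra hn
      push Not at hn
      nlinarith
    have q1 : 1 - δ < f u := by nlinarith
    have q2 : 1 - δ < g y := by nlinarith
    have q3 : g y * f u ≤ g y := by nlinarith
    have q4 : g y * f u ≤ f u := by nlinarith
    constructor
    · rw [hFf u]
      have := mul_lt_mul_of_pos_left q1 hF
      linarith
    · -- sum the two parts
      have : g y * f u ≤ 1 := by linarith
      linarith

theorem aux_finite {X : Type*} [NormedAddCommGroup X] [NormedSpace ℝ X]
    (h : DaugavetProperty X) (ε : ℝ) (hε : 0 < ε) (N : Set X) (hN : N.Finite) :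
    (∀ y ∈ N, ‖y‖ = 1) → ∀ (F : X →L[ℝ] ℝ) (c : ℝ), 0 ≤ c → c < ‖F‖ →
    ∃ (F' : X →L[ℝ] ℝ) (c' : ℝ), 0 ≤ c' ∧ c' < ‖F'‖ ∧
      ∀ u : X, ‖u‖ ≤ 1 → c' < F' u → c < F u ∧ ∀ y ∈ N, 2 - ε < ‖y + u‖ := by
  induction N, hN using Set.Finite.induction_on with
  | empty =>
    intro _ F c hc hcF
    exact ⟨F, c, hc, hcF, fun u _ hu => ⟨hu, by simp⟩⟩
  | @insert a s _ _ ih =>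
    intro hs F c hc hcF
    obtain ⟨F1, c1, h1, h2, h3⟩ := ih (fun y hy => hs y (Set.mem_insert_of_mem _ hy)) F c hc hcF
    obtain ⟨F2, c2, k1, k2, k3⟩ := aux_slice h F1 c1 h1 h2 a (hs a (Set.mem_insert _ _)) ε hε
    refine ⟨F2, c2, k1, k2, fun u hu hcu => ?_⟩
    obtain ⟨m1, m2⟩ := k3 u hu hcu
    obtain ⟨m3, m4⟩ := h3 u hu m1
    refine ⟨m3, fun y hy => ?_⟩
    rcases hy with rfl | hy
    · exact m2
    · exact m4 y hy

theorem aux_subspace {X : Type*} [NormedAddCommGroup X] [NormedSpace ℝ X]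
    (h : DaugavetProperty X) (Y : Submodule ℝ X) [FiniteDimensional ℝ Y]
    (F : X →L[ℝ] ℝ) (c : ℝ) (hc : 0 ≤ c) (hcF : c < ‖F‖) (η : ℝ) (hη : 0 < η) (hη1 : η ≤ 1) :
    ∃ u : X, ‖u‖ ≤ 1 ∧ c < F u ∧ ∀ y ∈ Y, ∀ t : ℝ, (1 - η) * ‖y‖ ≤ ‖y + t • u‖ := by
  have hcomp : IsCompact (Metric.sphere (0 : Y) 1) := isCompact_sphere _ _
  obtain ⟨N, hNs, hNf, hcov⟩ := hcomp.finite_cover_balls (e := η / 2) (by linarith)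
  obtain ⟨F', c', h1, h2, h3⟩ := aux_finite h (η / 2) (by linarith) ((fun y : Y => (y : X)) '' N)
    (hNf.image _) (by
      rintro _ ⟨y, hy, rfl⟩
      have := hNs hy
      simpa using this) F c hc hcF
  obtain ⟨u, hu, hcu⟩ := F'.exists_lt_apply_of_lt_opNorm h2
  have key : ∃ u : X, ‖u‖ ≤ 1 ∧ c' < F' u := by
    rw [Real.norm_eq_abs] at hcu
    rcases lt_abs.1 hcu with h' | h'
    · exact ⟨u, hu.le, h'⟩
    · exact ⟨-u, by simpa using hu.le, by simpa using h'⟩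
  clear hu hcu u
  obtain ⟨u, hu, hcu⟩ := key
  obtain ⟨k1, k2⟩ := h3 u hu hcu
  refine ⟨u, hu, k1, ?_⟩
  have S1 : ∀ y ∈ Y, ‖y‖ = 1 → 2 - η ≤ ‖y + u‖ := by
    intro y hy hy1
    have hm : (⟨y, hy⟩ : Y) ∈ Metric.sphere (0 : Y) 1 := by simpa using hy1
    obtain ⟨z, hz, hyz⟩ := Set.mem_iUnion₂.1 (hcov hm)
    have e1 := k2 z ⟨z, hz, rfl⟩
    have e2 : ‖y - z‖ < η / 2 := by
      rw [Metric.mem_ball, dist_eq_norm] at hyz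
      simpa using hyz
    have e3 : ‖(z : X) + u‖ ≤ ‖y + u‖ + ‖y - z‖ := by
      have : (z : X) + u = (y + u) - (y - z) := by abel
      rw [this]; exact norm_sub_le _ _
    linarith
  have S2 : ∀ y ∈ Y, ‖y‖ = 1 → ∀ t : ℝ, 0 ≤ t → 1 - η ≤ ‖y + t • u‖ := by
    intro y hy hy1 t ht
    have e := S1 y hy hy1
    rcases le_total t 1 with h' | h'
    · have e3 : ‖y + u‖ ≤ ‖y + t • u‖ + ‖(1 - t) • u‖ := by
        have : y + u = (y + t • u) + (1 - t) • u := by module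
        rw [this]; exact norm_add_le _ _
      rw [norm_smul, Real.norm_of_nonneg (by linarith : (0:ℝ) ≤ 1 - t)] at e3
      nlinarith
    · have e3 : ‖t • (y + u)‖ ≤ ‖y + t • u‖ + ‖(t - 1) • y‖ := by
        have : t • (y + u) = (y + t • u) + (t - 1) • y := by module
        rw [this]; exact norm_add_le _ _
      rw [norm_smul, norm_smul, Real.norm_of_nonneg ht,
        Real.norm_of_nonneg (by linarith : (0:ℝ) ≤ t - 1), hy1] at e3
      nlinarith
  have S3 : ∀ y ∈ Y, ‖y‖ = 1 → ∀ t : ℝ, 1 - η ≤ ‖y + t • u‖ := by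
    intro y hy hy1 t
    rcases le_total 0 t with h' | h'
    · exact S2 y hy hy1 t h'
    · have := S2 (-y) (Y.neg_mem hy) (by simpa using hy1) (-t) (by linarith)
      have e : -y + (-t) • u = -(y + t • u) := by module
      rwa [e, norm_neg] at this
  intro y hy t
  by_cases hy0 : y = 0
  · subst hy0; simp
  have hp : 0 < ‖y‖ := norm_pos_iff.2 hy0
  have := S3 (‖y‖⁻¹ • y) (Y.smul_mem _ hy)
    (by rw [norm_smul, norm_inv, norm_norm, inv_mul_cancel₀ hp.ne']) (‖y‖⁻¹ * t)
  rw [mul_smul, ← smul_add, norm_smul, norm_inv, norm_norm, inv_mul_eq_div, le_div_iff₀ hp] at this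
  exact this

theorem daugavet_anti_scd
    {X : Type*} [NormedAddCommGroup X] [NormedSpace ℝ X] [CompleteSpace X]
    (h : DaugavetProperty X)
    (S : ℕ → Set X) (hS : ∀ n, IsSlice (Metric.closedBall (0 : X) 1) (S n))
    (x : X) (hx : ‖x‖ = 1) :
    ∃ xs : ℕ → X, (∀ n, xs n ∈ S n) ∧
      x ∉ closure (Submodule.span ℝ (Set.range xs) : Set X) := by
  have step : ∀ (n : ℕ) (Y : Submodule ℝ X), ∃ u ∈ S n, FiniteDimensional ℝ Y →
      ∀ y ∈ Y, ∀ t : ℝ, (1 - 1 / ((n : ℝ) + 2) ^ 2) * ‖y‖ ≤ ‖y + t • u‖ := by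
    intro n Y
    obtain ⟨⟨u0, hu0⟩, f, hf, ε, hε, hSe⟩ := hS n
    by_cases hY : FiniteDimensional ℝ Y
    · rw [hSe] at hu0
      obtain ⟨hu1, hu2⟩ := hu0
      rw [mem_closedBall_zero_iff] at hu1
      set c := sSup (f '' Metric.closedBall (0 : X) 1) - ε with hcdef
      have hcf : c < ‖f‖ := by
        have h1 := f.le_opNorm u0
        have h2 : ‖f‖ * ‖u0‖ ≤ ‖f‖ * 1 := mul_le_mul_of_nonneg_left hu1 (norm_nonneg _)
        have h3 := Real.le_norm_self (f u0)
        linarith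
      have hη1 : 1 / ((n : ℝ) + 2) ^ 2 ≤ 1 := by
        rw [div_le_one (by positivity)]
        have : (0 : ℝ) ≤ n := n.cast_nonneg
        nlinarith
      obtain ⟨u, k1, k2, k3⟩ := aux_subspace h Y f (max c 0) (le_max_right _ _)
        (max_lt hcf (norm_pos_iff.2 hf)) (1 / ((n : ℝ) + 2) ^ 2) (by positivity) hη1
      refine ⟨u, ?_, fun _ => k3⟩
      rw [hSe]
      exact ⟨by simpa using k1, lt_of_le_of_lt (le_max_left _ _) k2⟩
    · exact ⟨u0, hu0, fun h' => absurd h' hY⟩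
  choose G hGS hG using step
  let W : ℕ → Submodule ℝ X := fun n =>
    Nat.rec (Submodule.span ℝ {x}) (fun k Y => Y ⊔ Submodule.span ℝ {G k Y}) n
  have W0 : W 0 = Submodule.span ℝ {x} := rfl
  have Ws : ∀ n, W (n + 1) = W n ⊔ Submodule.span ℝ {G n (W n)} := fun n => rfl
  let V : ℕ → Submodule ℝ X := fun n =>
    Nat.rec ⊥ (fun k Y => Y ⊔ Submodule.span ℝ {G k (W k)}) n
  have V0 : V 0 = ⊥ := rfl
  have Vs : ∀ n, V (n + 1) = V n ⊔ Submodule.span ℝ {G n (W n)} := fun n => rfl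
  clear_value W V
  have Wfd : ∀ n, FiniteDimensional ℝ (W n) := by
    intro n
    induction n with
    | zero => rw [W0]; infer_instance
    | succ n ih => rw [Ws]; infer_instance
  have VW : ∀ n, V n ≤ W n := by
    intro n
    induction n with
    | zero => rw [V0]; exact bot_le
    | succ n ih => rw [Ws, Vs]; exact sup_le_sup_right ih _
  have xW : ∀ n, x ∈ W n := by
    intro n
    induction n with
    | zero => rw [W0]; exact Submodule.mem_span_singleton_self x
    | succ n ih => rw [Ws]; exact Submodule.mem_sup_left ih
  have bound : ∀ n, ∀ z ∈ V n, ((n : ℝ) + 2) / (2 * ((n : ℝ) + 1)) ≤ ‖x - z‖ := by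
    intro n
    induction n with
    | zero =>
      intro z hz
      rw [V0, Submodule.mem_bot] at hz
      subst hz
      simp [hx]
    | succ n ih =>
      intro z hz
      rw [Vs, Submodule.mem_sup] at hz
      obtain ⟨z', hz', w, hw, rfl⟩ := hz
      obtain ⟨a, rfl⟩ := Submodule.mem_span_singleton.1 hw
      have e1 := ih z' hz'
      have e2 := hG n (W n) (Wfd n) (x - z') ((W n).sub_mem (xW n) (VW n hz')) (-a)
      have e3 : x - z' + (-a) • G n (W n) = x - (z' + a • G n (W n)) := by module
      rw [e3] at e2
      refine le_trans ?_ e2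
      have hη1 : 0 ≤ 1 - 1 / ((n : ℝ) + 2) ^ 2 := by
        rw [sub_nonneg, div_le_one (by positivity)]
        have : (0 : ℝ) ≤ n := n.cast_nonneg
        nlinarith
      refine le_trans (le_of_eq ?_) (mul_le_mul_of_nonneg_left e1 hη1)
      have : (n : ℝ) + 1 ≠ 0 := by positivity
      have : (n : ℝ) + 2 ≠ 0 := by positivity
      have : (n : ℝ) + 1 + 1 ≠ 0 := by positivity
      push_cast
      field_simp
      ring
  have Vmono : Monotone V := monotone_nat_of_le_succ (fun n => by rw [Vs]; exact le_sup_left)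
  refine ⟨fun n => G n (W n), fun n => hGS n (W n), ?_⟩
  intro hcl
  obtain ⟨z, hz, hd⟩ := Metric.mem_closure_iff.1 hcl (1 / 2) (by norm_num)
  have hle : Submodule.span ℝ (Set.range fun n => G n (W n)) ≤ ⨆ n, V n := by
    rw [Submodule.span_le]
    rintro _ ⟨n, rfl⟩
    refine (le_iSup V (n + 1)) ?_
    rw [Vs]
    exact Submodule.mem_sup_right (Submodule.mem_span_singleton_self _)
  obtain ⟨n, hn⟩ := (Submodule.mem_iSup_of_directed V Vmono.directed_le).1 (hle hz)
  have b := bound n z hn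
  rw [dist_eq_norm] at hd
  have : (1 : ℝ) / 2 ≤ ((n : ℝ) + 2) / (2 * ((n : ℝ) + 1)) := by
    rw [div_le_div_iff₀ (by norm_num) (by positivity)]
    linarith
  linarith
end

section
/- Let X be a real Banach space with the Daugavet property. Then there exist convex, closed, bounded SCD sets A, D ⊂ X such that the intersection A ∩ D is nonempty and is not SCD. -/
open Bornology Set Pointwise

variable {X : Type*} [NormedAddCommGroup X] [NormedSpace ℝ X]

/-- Basic Daugavet lemma for `y ≠ 0`, norm-one functional. -/
lemma dau_aux (h : DaugavetProperty X) (φ : X →L[ℝ] ℝ) (hφ : ‖φ‖ = 1) (y : X) (hy : y ≠ 0)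
    (δ : ℝ) (hδ : 0 < δ) :
    ∃ x : X, ‖x‖ ≤ 1 ∧ ‖y‖ + 1 - δ ≤ ‖y + x‖ ∧ 1 - δ < φ x := by
  have hy0 : 0 < ‖y‖ := norm_pos_iff.mpr hy
  set η := min (δ / 2) (min (δ * ‖y‖) ((1 + ‖y‖) / 2)) with hη
  have hη0 : 0 < η := by
    rw [hη]; positivity
  have h1 : η ≤ δ / 2 := min_le_left _ _
  have h2 : η ≤ δ * ‖y‖ := (min_le_right _ _).trans (min_le_left _ _)
  have h3 : η ≤ (1 + ‖y‖) / 2 := (min_le_right _ _).trans (min_le_right _ _)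
  have hn := h φ y
  rw [ContinuousLinearMap.norm_smulRight_apply, hφ, one_mul] at hn
  obtain ⟨x, hx1, hx2⟩ := (ContinuousLinearMap.id ℝ X + φ.smulRight y).exists_lt_apply_of_lt_opNorm
    (r := 1 + ‖y‖ - η) (by rw [hn]; linarith)
  simp only [ContinuousLinearMap.add_apply, ContinuousLinearMap.id_apply,
    ContinuousLinearMap.smulRight_apply] at hx2
  obtain ⟨x, hx1, hx2, hx3⟩ : ∃ x : X, ‖x‖ < 1 ∧ 1 + ‖y‖ - η < ‖x + φ x • y‖ ∧ 0 ≤ φ x := by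
    rcases le_total 0 (φ x) with h0 | h0
    · exact ⟨x, hx1, hx2, h0⟩
    · refine ⟨-x, by simpa using hx1, ?_, by simpa using h0⟩
      have : -x + φ (-x) • y = -(x + φ x • y) := by
        rw [map_neg, neg_smul]; abel
      rw [this, norm_neg]; exact hx2
  have hle : φ x ≤ 1 := by
    have := φ.le_opNorm x
    rw [hφ, one_mul, Real.norm_eq_abs] at this
    linarith [le_abs_self (φ x)]
  have e1 : ‖x + φ x • y‖ ≤ ‖x‖ + φ x * ‖y‖ := by
    refine (norm_add_le _ _).trans ?_
    rw [norm_smul, Real.norm_eq_abs, abs_of_nonneg hx3]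
  have e2 : ‖x + φ x • y‖ ≤ ‖y + x‖ + (1 - φ x) * ‖y‖ := by
    have : x + φ x • y = (y + x) - (1 - φ x) • y := by
      rw [sub_smul, one_smul]; abel
    rw [this]
    refine (norm_sub_le _ _).trans ?_
    rw [norm_smul, Real.norm_eq_abs, abs_of_nonneg (by linarith)]
  refine ⟨x, hx1.le, by nlinarith, ?_⟩
  by_contra hc
  push Not at hc
  nlinarith

lemma dau_slice (h : DaugavetProperty X) (f : X →L[ℝ] ℝ) (a : ℝ) (ha : a < ‖f‖) (y : X)
    (δ : ℝ) (hδ : 0 < δ) (e : X) (he : ‖e‖ = 1) :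
    ∃ x : X, ‖x‖ ≤ 1 ∧ ‖y‖ + 1 - δ ≤ ‖y + x‖ ∧ a < f x := by
  have key : ∀ φ : X →L[ℝ] ℝ, ‖φ‖ = 1 → ∀ δ > 0, ∃ x : X, ‖x‖ ≤ 1 ∧ ‖y‖ + 1 - δ ≤ ‖y + x‖ ∧
      1 - δ < φ x := by
    intro φ hφ δ hδ
    by_cases hy : y = 0
    · have he0 : e ≠ 0 := by
        rintro rfl; simp at he
      obtain ⟨x, hx1, hx2, hx3⟩ := dau_aux h φ hφ e he0 δ hδ
      refine ⟨x, hx1, ?_, hx3⟩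
      have := norm_add_le e x
      subst hy
      simp only [norm_zero, zero_add]
      linarith
    · exact dau_aux h φ hφ y hy δ hδ
  have he0 : e ≠ 0 := by
    rintro rfl; simp at he
  by_cases hf : f = 0
  · subst hf
    obtain ⟨g, hg, -⟩ := exists_dual_vector ℝ e (norm_ne_zero_iff.mpr he0)
    obtain ⟨x, hx1, hx2, -⟩ := key g hg δ hδ
    exact ⟨x, hx1, hx2, by simpa using ha⟩
  · have hf0 : 0 < ‖f‖ := norm_pos_iff.mpr hf
    obtain ⟨x, hx1, hx2, hx3⟩ := key (‖f‖⁻¹ • f) (by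
      rw [norm_smul, norm_inv, norm_norm, inv_mul_cancel₀ hf0.ne'])
      (min δ ((‖f‖ - a) / ‖f‖)) (lt_min hδ (div_pos (by linarith) hf0))
    refine ⟨x, hx1, ?_, ?_⟩
    · linarith [min_le_left δ ((‖f‖ - a) / ‖f‖)]
    · have h4 := min_le_right δ ((‖f‖ - a) / ‖f‖)
      have h5 : 1 - (‖f‖ - a) / ‖f‖ < ‖f‖⁻¹ * f x := by
        have : (‖f‖⁻¹ • f) x = ‖f‖⁻¹ * f x := rfl
        linarith
      have h6 : ‖f‖ * (1 - (‖f‖ - a) / ‖f‖) < ‖f‖ * (‖f‖⁻¹ * f x) :=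
        mul_lt_mul_of_pos_left h5 hf0
      have h7 : ‖f‖ * (1 - (‖f‖ - a) / ‖f‖) = a := by field_simp; ring
      have h8 : ‖f‖ * (‖f‖⁻¹ * f x) = f x := by field_simp
      linarith

lemma dau_hull (h : DaugavetProperty X) (y c : X) (hc : ‖c‖ ≤ 1)
    (δ : ℝ) (hδ : 0 < δ) (e : X) (he : ‖e‖ = 1) :
    c ∈ closure (convexHull ℝ {x : X | ‖x‖ ≤ 1 ∧ ‖y‖ + 1 - δ ≤ ‖y + x‖}) := by
  by_contra hcon
  obtain ⟨f, u, hf1, hf2⟩ := geometric_hahn_banach_closed_point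
    (convex_convexHull ℝ {x : X | ‖x‖ ≤ 1 ∧ ‖y‖ + 1 - δ ≤ ‖y + x‖}).closure isClosed_closure hcon
  have : f c ≤ ‖f‖ := by
    have := f.le_opNorm c
    rw [Real.norm_eq_abs] at this
    nlinarith [le_abs_self (f c), norm_nonneg f]
  obtain ⟨x, hx1, hx2, hx3⟩ := dau_slice h f u (by linarith) y δ hδ e he
  exact absurd (hf1 x (subset_closure (subset_convexHull ℝ _ ⟨hx1, hx2⟩))) (by linarith)

/-- Countably many good points suffice. -/
lemma dau_seq (h : DaugavetProperty X) (y c : X) (hc : ‖c‖ ≤ 1)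
    (δ : ℝ) (hδ : 0 < δ) (e : X) (he : ‖e‖ = 1) :
    ∃ g : ℕ → X, (∀ j, ‖g j‖ ≤ 1 ∧ ‖y‖ + 1 - δ ≤ ‖y + g j‖) ∧
      ∃ z ∈ convexHull ℝ (range g), ‖c - z‖ < δ := by
  have hm := dau_hull h y c hc δ hδ e he
  obtain ⟨z, hz, hcz⟩ := Metric.mem_closure_iff.mp hm δ hδ
  rw [convexHull_eq_union_convexHull_finite_subsets] at hz
  simp only [mem_iUnion] at hz
  obtain ⟨t, ht, hzt⟩ := hz
  have htn : (t : Set X).Nonempty := convexHull_nonempty_iff.mp ⟨z, hzt⟩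
  obtain ⟨g, hg⟩ := t.countable_toSet.exists_eq_range htn
  refine ⟨g, fun j => ht (hg ▸ mem_range_self j), z, hg ▸ hzt, by rwa [← dist_eq_norm]⟩

lemma countable_closed_ops {ι : Type*} [Countable ι] (op : ι → X → X → X) (S : Set X)
    (hS : S.Countable) : ∃ W : Set X, W.Countable ∧ S ⊆ W ∧
      ∀ i, ∀ x ∈ W, ∀ y ∈ W, op i x y ∈ W := by
  let T : ℕ → Set X := fun n => Nat.rec S (fun _ U => U ∪ ⋃ i, image2 (op i) U U) n
  have hT : ∀ n, T (n + 1) = T n ∪ ⋃ i, image2 (op i) (T n) (T n) := fun n => rfl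
  have hmono : Monotone T := monotone_nat_of_le_succ (fun n => by
    rw [hT]; exact subset_union_left)
  refine ⟨⋃ n, T n, ?_, subset_iUnion T 0, ?_⟩
  · refine countable_iUnion (fun n => ?_)
    induction n with
    | zero => exact hS
    | succ n ih =>
      rw [hT]
      exact ih.union (countable_iUnion (fun i => ih.image2 ih _))
  · intro i x hx y hy
    obtain ⟨n, hn⟩ := mem_iUnion.mp hx
    obtain ⟨m, hm⟩ := mem_iUnion.mp hy
    refine mem_iUnion.mpr ⟨max n m + 1, ?_⟩
    rw [hT]
    exact Or.inr (mem_iUnion.mpr ⟨i, mem_image2_of_mem (hmono (le_max_left _ _) hn)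
      (hmono (le_max_right _ _) hm)⟩)

/-- A countable set which is closed under rational combinations and is Daugavet-like. -/
lemma exists_W (h : DaugavetProperty X) (e : X) (he : ‖e‖ = 1) (S : Set X) (hS : S.Countable) :
    ∃ W : Set X, W.Countable ∧ S ⊆ W ∧
      (∀ a b : ℚ, ∀ x ∈ W, ∀ y ∈ W, (a : ℝ) • x + (b : ℝ) • y ∈ W) ∧
      (∀ c ∈ W, ‖c‖ ≤ 1 → ∀ y ∈ W, ∀ δ > 0, ∀ f : X →L[ℝ] ℝ,
        ∃ x ∈ W, ‖x‖ ≤ 1 ∧ f c - δ < f x ∧ ‖y‖ + 1 - δ ≤ ‖y + x‖) := by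
  have hG : ∀ (k : ℕ) (c y : X), ∃ g : ℕ → X, ‖c‖ ≤ 1 →
      (∀ j, ‖g j‖ ≤ 1 ∧ ‖y‖ + 1 - 1 / ((k : ℝ) + 1) ≤ ‖y + g j‖) ∧
      ∃ z ∈ convexHull ℝ (range g), ‖c - z‖ < 1 / ((k : ℝ) + 1) := by
    intro k c y
    by_cases hc : ‖c‖ ≤ 1
    · obtain ⟨g, hg⟩ := dau_seq h y c hc (1 / ((k : ℝ) + 1)) (by positivity) e he
      exact ⟨g, fun _ => hg⟩
    · exact ⟨fun _ => 0, fun h => absurd h hc⟩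
  choose G hG using hG
  let op : (ℕ × ℕ) ⊕ (ℚ × ℚ) → X → X → X := fun i => match i with
    | Sum.inl (k, j) => fun c y => G k c y j
    | Sum.inr (a, b) => fun x y => (a : ℝ) • x + (b : ℝ) • y
  obtain ⟨W, hW1, hW2, hW3⟩ := countable_closed_ops op S hS
  refine ⟨W, hW1, hW2, fun a b x hx y hy => hW3 (Sum.inr (a, b)) x hx y hy, ?_⟩
  intro c hc hc1 y hy δ hδ f
  obtain ⟨k, hk⟩ := exists_nat_one_div_lt (show 0 < δ / (‖f‖ + 1) by positivity)
  obtain ⟨h1, z, hz, hcz⟩ := hG k c y hc1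
  have hfp : 0 ≤ ‖f‖ := norm_nonneg f
  have hkδ : 1 / ((k : ℝ) + 1) * (‖f‖ + 1) < δ := by
    rwa [lt_div_iff₀ (by positivity)] at hk
  have hk0 : 0 < 1 / ((k : ℝ) + 1) := by positivity
  have hfz : f c - δ < f z := by
    have h2 := f.le_opNorm (c - z)
    rw [Real.norm_eq_abs, map_sub] at h2
    have h3 := le_abs_self (f c - f z)
    nlinarith
  have : ∃ j, f c - δ < f (G k c y j) := by
    by_contra hcon
    push Not at hcon
    have hsub : convexHull ℝ (range (G k c y)) ⊆ {x | f x ≤ f c - δ} := by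
      refine convexHull_min ?_ (convex_halfSpace_le f.toLinearMap.isLinear _)
      rintro _ ⟨j, rfl⟩
      exact hcon j
    have := hsub hz
    simp only [mem_setOf_eq] at this
    linarith
  obtain ⟨j, hj⟩ := this
  refine ⟨G k c y j, hW3 (Sum.inl (k, j)) c hc y hy, (h1 j).1, hj, ?_⟩
  have := (h1 j).2
  nlinarith

lemma finite_step {W C : Set X} (hC : ∀ x ∈ C, ‖x‖ ≤ 1)
    (hWC : ∀ c ∈ C, ∀ y ∈ W, ∀ δ > 0, ∀ f : X →L[ℝ] ℝ,
        ∃ x ∈ C, f c - δ < f x ∧ ‖y‖ + 1 - δ ≤ ‖y + x‖) (δ : ℝ) (hδ : 0 < δ)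
    (N : Set X) (hN : N.Finite) : N ⊆ W → 
    ∀ (f : X →L[ℝ] ℝ) (a : ℝ), (∃ c ∈ C, a < f c) →
      ∃ x ∈ C, a < f x ∧ ∀ y ∈ N, ‖y‖ + 1 - δ ≤ ‖y + x‖ := by
  induction N, hN using Set.Finite.induction_on with
  | empty => 
    rintro - f a ⟨c, hc, hac⟩
    exact ⟨c, hc, hac, by simp⟩
  | @insert y N _ _ ih =>
    rintro hNW f a ⟨c, hc, hac⟩
    have hbdd : BddAbove (f '' C) := by
      refine ⟨‖f‖, ?_⟩
      rintro _ ⟨x, hx, rfl⟩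
      have := f.le_opNorm x
      rw [Real.norm_eq_abs] at this
      nlinarith [le_abs_self (f x), norm_nonneg f, hC x hx]
    set M := sSup (f '' C) with hM
    have hMle : ∀ x ∈ C, f x ≤ M := fun x hx => le_csSup hbdd (mem_image_of_mem f hx)
    have haM : a < M := hac.trans_le (hMle c hc)
    set η := min δ (M - a) / 8 with hη
    have hη0 : 0 < η := by
      have : 0 < min δ (M - a) := lt_min hδ (by linarith)
      positivity
    have hη1 : 8 * η ≤ δ := by
      have := min_le_left δ (M - a); rw [hη]; linarith
    have hη2 : 8 * η ≤ M - a := by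
      have := min_le_right δ (M - a); rw [hη]; linarith
    obtain ⟨_, ⟨c', hc', rfl⟩, hlt⟩ := exists_lt_of_lt_csSup (s := f '' C) ⟨_, mem_image_of_mem f hc⟩
      (show M - η < sSup (f '' C) by linarith)
    obtain ⟨x, hx, hfx, hyx⟩ := hWC c' hc' y (hNW (mem_insert _ _)) η hη0 f
    obtain ⟨g, hg1, hg2⟩ := exists_dual_vector'' ℝ (y + x)
    simp only [map_add, RCLike.ofReal_real_eq_id, id_eq] at hg2
    have hgle : ∀ v, g v ≤ ‖v‖ := fun v => by
      have := g.le_opNorm v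
      rw [Real.norm_eq_abs] at this
      nlinarith [le_abs_self (g v), norm_nonneg v]
    have hgy := hgle y
    have hgx := hgle x
    have hx1 := hC x hx
    obtain ⟨x', hx', hfg, hN'⟩ := ih ((subset_insert _ _).trans hNW) (f + g) (M + 1 - 3 * η)
      ⟨x, hx, by simp only [ContinuousLinearMap.add_apply]; linarith⟩
    simp only [ContinuousLinearMap.add_apply] at hfg
    have hgx' := hgle x'
    have hx1' := hC x' hx'
    have hfx' := hMle x' hx'
    refine ⟨x', hx', by linarith, ?_⟩
    intro v hv
    rcases hv with rfl | hv
    · have := hgle (v + x')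
      rw [map_add] at this
      linarith
    · exact hN' v hv

lemma compact_step {W C : Set X} (hC : ∀ x ∈ C, ‖x‖ ≤ 1)
    (hWC : ∀ c ∈ C, ∀ y ∈ W, ∀ δ > 0, ∀ f : X →L[ℝ] ℝ,
        ∃ x ∈ C, f c - δ < f x ∧ ‖y‖ + 1 - δ ≤ ‖y + x‖) (δ : ℝ) (hδ : 0 < δ)
    (K : Set X) (hK : IsCompact K) (hKW : K ⊆ closure W)
    (f : X →L[ℝ] ℝ) (a : ℝ) (hfa : ∃ c ∈ C, a < f c) :
      ∃ x ∈ C, a < f x ∧ ∀ y ∈ K, ‖y‖ + 1 - δ ≤ ‖y + x‖ := by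
  obtain ⟨N, hNW, hNf, hNc⟩ := hK.elim_finite_subcover_image (b := W)
    (c := fun y => Metric.ball y (δ / 4)) (fun _ _ => Metric.isOpen_ball) (by
      intro y hy
      obtain ⟨w, hw, hd⟩ := Metric.mem_closure_iff.mp (hKW hy) (δ / 4) (by positivity)
      exact mem_iUnion₂.mpr ⟨w, hw, hd⟩)
  obtain ⟨x, hx, hax, hxN⟩ := finite_step hC hWC (δ / 4) (by positivity) N hNf hNW f a hfa
  refine ⟨x, hx, hax, fun y hy => ?_⟩
  obtain ⟨w, hw, hd⟩ := mem_iUnion₂.mp (hNc hy)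
  have h1 := hxN w hw
  rw [Metric.mem_ball, dist_eq_norm] at hd
  have h2 : ‖w + x‖ ≤ ‖y + x‖ + ‖y - w‖ := by
    have : w + x = (y + x) - (y - w) := by abel
    rw [this]; exact norm_sub_le _ _
  have h3 : ‖y‖ ≤ ‖w‖ + ‖y - w‖ := by
    have : y = w + (y - w) := by abel
    nth_rewrite 1 [this]; exact norm_add_le _ _
  linarith

/-- Set with strongly exposed generators is SCD. -/
lemma scd_of_exposed (p : ℕ → X) (g : ℕ → X →L[ℝ] ℝ) (κ : ℕ → ℝ) (hκ : ∀ n, 0 < κ n)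
    (hg : ∀ n, g n ≠ 0) (hp : ∀ n m, ‖p m - p n‖ ≤ κ n * (g n (p n) - g n (p m))) :
    IsSCD (closure (convexHull ℝ (range p))) := by
  set A := closure (convexHull ℝ (range p)) with hA
  have hpA : ∀ n, p n ∈ A := fun n => subset_closure (subset_convexHull ℝ _ (mem_range_self n))
  have key : ∀ n, ∀ x ∈ A, ‖x - p n‖ ≤ κ n * (g n (p n) - g n x) := by
    intro n
    have hclosed : IsClosed {x | ‖x - p n‖ ≤ κ n * (g n (p n) - g n x)} :=
      isClosed_le (by fun_prop) (by fun_prop)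
    have hconv : Convex ℝ {x | ‖x - p n‖ ≤ κ n * (g n (p n) - g n x)} := by
      intro x hx y hy a b ha hb hab
      simp only [mem_setOf_eq] at *
      have e : a • x + b • y - p n = a • (x - p n) + b • (y - p n) := by
        have : p n = (a + b) • p n := by rw [hab, one_smul]
        nth_rewrite 1 [this]
        module
      rw [e]
      refine (norm_add_le _ _).trans ?_
      rw [norm_smul, norm_smul, Real.norm_eq_abs, Real.norm_eq_abs, abs_of_nonneg ha,
        abs_of_nonneg hb, map_add, map_smul, map_smul, smul_eq_mul, smul_eq_mul]
      have e2 : κ n * (g n (p n) - (a * g n x + b * g n y)) =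
          a * (κ n * (g n (p n) - g n x)) + b * (κ n * (g n (p n) - g n y)) := by
        have : g n (p n) = (a + b) * g n (p n) := by rw [hab, one_mul]
        nth_rewrite 1 [this]
        ring
      rw [e2]
      gcongr
    refine closure_minimal (convexHull_min ?_ hconv) hclosed
    rintro _ ⟨m, rfl⟩
    exact hp n m
  have hsup : ∀ n, sSup (g n '' A) = g n (p n) := by
    intro n
    refine IsGreatest.csSup_eq ⟨mem_image_of_mem _ (hpA n), ?_⟩
    rintro _ ⟨x, hx, rfl⟩
    have := key n x hx
    have h2 : 0 ≤ κ n * (g n (p n) - g n x) := (norm_nonneg _).trans this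
    have := nonneg_of_mul_nonneg_right h2 (hκ n)
    linarith
  refine ⟨fun i => sliceSet A (g i.unpair.1) (1 / ((i.unpair.2 : ℝ) + 1)), fun i => ?_, ?_⟩
  · have hpos : 0 < 1 / ((i.unpair.2 : ℝ) + 1) := by positivity
    refine ⟨⟨p i.unpair.1, hpA _, ?_⟩, g i.unpair.1, hg _, _, hpos, rfl⟩
    rw [hsup]; linarith
  · intro B hB
    refine closure_minimal (convexHull_min ?_ (convex_convexHull ℝ B).closure) isClosed_closure
    rintro _ ⟨n, rfl⟩
    refine closure_mono (subset_convexHull ℝ B) ?_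
    rw [Metric.mem_closure_iff]
    intro ε hε
    obtain ⟨k, hk⟩ := exists_nat_one_div_lt (show 0 < ε / κ n from div_pos hε (hκ n))
    obtain ⟨b, hbB, hbA, hb⟩ := hB (Nat.pair n k)
    simp only [Nat.unpair_pair] at hb
    rw [hsup] at hb
    refine ⟨b, hbB, ?_⟩
    rw [dist_comm, dist_eq_norm]
    refine (key n b hbA).trans_lt ?_
    rw [lt_div_iff₀ (hκ n)] at hk
    have := hκ n
    nlinarith

/-- The curve points. -/
noncomputable def curvePt (y : ℕ → X) (e₁ e₂ : X) (n : ℕ) : X :=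
  y n + (1 / ((n : ℝ) + 1)) • e₁ + (1 / ((n : ℝ) + 1)) ^ 2 • e₂

lemma inv_gap (n m : ℕ) (hnm : m ≠ n) :
    (1 / (((n : ℝ) + 1) * ((n : ℝ) + 2))) ^ 2 ≤ (1 / ((n : ℝ) + 1) - 1 / ((m : ℝ) + 1)) ^ 2 := by
  rw [← sq_abs (1 / ((n : ℝ) + 1) - 1 / ((m : ℝ) + 1))]
  refine pow_le_pow_left₀ (by positivity) ?_ 2
  have hn0 : (0 : ℝ) ≤ n := n.cast_nonneg
  have hm0 : (0 : ℝ) ≤ m := m.cast_nonneg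
  rcases lt_or_gt_of_ne hnm with hlt | hlt
  · have hc : (m : ℝ) + 1 ≤ n := by exact_mod_cast hlt
    refine le_trans ?_ (neg_le_abs _)
    rw [neg_sub, div_sub_div _ _ (by positivity) (by positivity),
      div_le_div_iff₀ (by positivity) (by positivity)]
    have h1 : (m : ℝ) + 1 ≤ (n - m) * (n + 2) := by nlinarith
    nlinarith [mul_le_mul_of_nonneg_right h1 (show (0 : ℝ) ≤ n + 1 by positivity)]
  · have hc : (n : ℝ) + 1 ≤ m := by exact_mod_cast hlt
    refine le_trans ?_ (le_abs_self _)
    rw [div_sub_div _ _ (by positivity) (by positivity),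
      div_le_div_iff₀ (by positivity) (by positivity)]
    nlinarith [mul_nonneg hn0 hm0, mul_nonneg hn0 (sub_nonneg.mpr hc)]

lemma curve_bound (y : ℕ → X) (R : ℝ) (hyR : ∀ n, ‖y n‖ ≤ R) (e₁ e₂ : X) (n : ℕ) :
    ‖curvePt y e₁ e₂ n‖ ≤ R + ‖e₁‖ + ‖e₂‖ := by
  have ht0 : 0 ≤ 1 / ((n : ℝ) + 1) := by positivity
  have ht1 : 1 / ((n : ℝ) + 1) ≤ 1 := by
    rw [div_le_one (by positivity)]; linarith [n.cast_nonneg (α := ℝ)]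
  unfold curvePt
  refine (norm_add₃_le).trans ?_
  rw [norm_smul, norm_smul, Real.norm_eq_abs, Real.norm_eq_abs, abs_of_nonneg ht0,
    abs_of_nonneg (by positivity)]
  have := hyR n
  have h1 := norm_nonneg e₁
  have h2 := norm_nonneg e₂
  have h3 : (1 / ((n : ℝ) + 1)) ^ 2 ≤ 1 := pow_le_one₀ ht0 ht1
  nlinarith

lemma curve_scd (y : ℕ → X) (R : ℝ) (hyR : ∀ n, ‖y n‖ ≤ R) (e₁ e₂ : X) (h₁ h₂ : X →L[ℝ] ℝ)
    (h11 : h₁ e₁ = 1) (h12 : h₁ e₂ = 0) (h21 : h₂ e₁ = 0) (h22 : h₂ e₂ = 1)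
    (hy1 : ∀ n, h₁ (y n) = 0) (hy2 : ∀ n, h₂ (y n) = 0) :
    IsSCD (closure (convexHull ℝ (range (curvePt y e₁ e₂)))) := by
  set L := R + ‖e₁‖ + ‖e₂‖ with hL
  have hL0 : 0 ≤ L := (norm_nonneg _).trans (curve_bound y R hyR e₁ e₂ 0)
  have hval : ∀ n m, ((2 * (1 / ((n : ℝ) + 1))) • h₁ - h₂) (curvePt y e₁ e₂ m) =
      (1 / ((n : ℝ) + 1)) ^ 2 - (1 / ((n : ℝ) + 1) - 1 / ((m : ℝ) + 1)) ^ 2 := by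
    intro n m
    simp only [curvePt, map_add, map_smul, ContinuousLinearMap.sub_apply,
      ContinuousLinearMap.smul_apply, h11, h12, h21, h22, hy1, hy2, smul_eq_mul]
    ring
  refine scd_of_exposed (curvePt y e₁ e₂) (fun n => (2 * (1 / ((n : ℝ) + 1))) • h₁ - h₂)
    (fun n => (2 * L + 1) / (1 / (((n : ℝ) + 1) * ((n : ℝ) + 2))) ^ 2) ?_ ?_ ?_
  · intro n; positivity
  · intro n h0
    have h1 := hval n n
    have h0 : (2 * (1 / ((n : ℝ) + 1))) • h₁ - h₂ = 0 := h0
    rw [h0] at h1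
    have : 0 < (1 / ((n : ℝ) + 1)) ^ 2 := by positivity
    rw [sub_self, zero_pow two_ne_zero, sub_zero] at h1
    exact absurd h1 this.ne
  · intro n m
    rw [hval, hval]
    by_cases hmn : m = n
    · subst hmn; simp
    · have h1 := inv_gap n m hmn
      have h2 : ‖curvePt y e₁ e₂ m - curvePt y e₁ e₂ n‖ ≤ 2 * L + 1 := by
        refine (norm_sub_le _ _).trans ?_
        linarith [curve_bound y R hyR e₁ e₂ n, curve_bound y R hyR e₁ e₂ m]
      refine h2.trans ?_
      have hpos : 0 < (1 / (((n : ℝ) + 1) * ((n : ℝ) + 2))) ^ 2 := by positivity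
      rw [div_mul_eq_mul_div, le_div_iff₀ hpos]
      refine mul_le_mul_of_nonneg_left ?_ (by linarith)
      linarith

lemma curve_bdd (y : ℕ → X) (R : ℝ) (hyR : ∀ n, ‖y n‖ ≤ R) (e₁ e₂ : X) :
    IsBounded (closure (convexHull ℝ (range (curvePt y e₁ e₂)))) := by
  refine IsBounded.closure (isBounded_convexHull.mpr ?_)
  refine isBounded_iff_forall_norm_le.mpr ⟨R + ‖e₁‖ + ‖e₂‖, ?_⟩
  rintro _ ⟨n, rfl⟩
  exact curve_bound y R hyR e₁ e₂ n

lemma curve_sup (q : ℕ → X) (e₁ e₂ : X) :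
    closure (convexHull ℝ (range q)) ⊆
      closure (convexHull ℝ (range (curvePt (fun n => q n.unpair.1) e₁ e₂))) := by
  refine closure_minimal (convexHull_min ?_ (convex_convexHull ℝ _).closure) isClosed_closure
  rintro _ ⟨n, rfl⟩
  have ht : Filter.Tendsto (fun k : ℕ => 1 / (((Nat.pair n k : ℕ) : ℝ) + 1)) Filter.atTop
      (nhds 0) := by
    refine tendsto_one_div_add_atTop_nhds_zero_nat.comp ?_
    exact Filter.tendsto_atTop_mono (fun k => Nat.right_le_pair n k) Filter.tendsto_id
  have hlim : Filter.Tendsto (fun k : ℕ => curvePt (fun n => q n.unpair.1) e₁ e₂ (Nat.pair n k))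
      Filter.atTop (nhds (q n + (0 : ℝ) • e₁ + (0 : ℝ) ^ 2 • e₂)) := by
    unfold curvePt
    simp only [Nat.unpair_pair]
    exact (tendsto_const_nhds.add (ht.smul_const e₁)).add ((ht.pow 2).smul_const e₂)
  simp only [zero_smul, add_zero, ne_eq, OfNat.ofNat_ne_zero, not_false_eq_true, zero_pow] at hlim
  exact mem_closure_of_tendsto hlim (Filter.Eventually.of_forall fun k =>
    subset_convexHull ℝ _ (mem_range_self _))

lemma curve_sub (q : ℕ → X) (e₁ e₂ : X) (h₁ h₂ : X →L[ℝ] ℝ)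
    (h11 : h₁ e₁ = 1) (h12 : h₁ e₂ = 0) (h21 : h₂ e₁ = 0) (h22 : h₂ e₂ = 1)
    (hy1 : ∀ n, h₁ (q n) = 0) (hy2 : ∀ n, h₂ (q n) = 0) :
    closure (convexHull ℝ (range (curvePt (fun n => q n.unpair.1) e₁ e₂))) ⊆
      {x | 0 ≤ h₂ x ∧ h₂ x ≤ h₁ x ∧
        x - h₁ x • e₁ - h₂ x • e₂ ∈ closure (convexHull ℝ (range q))} := by
  have hQ : IsLinearMap ℝ (fun x : X => x - h₁ x • e₁ - h₂ x • e₂) := by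
    constructor
    · intro x y; simp only [map_add]; module
    · intro c x; simp only [map_smul, smul_eq_mul]; module
  refine closure_minimal (convexHull_min ?_ ?_) ?_
  · rintro _ ⟨n, rfl⟩
    have ht0 : 0 ≤ 1 / ((n : ℝ) + 1) := by positivity
    have ht1 : 1 / ((n : ℝ) + 1) ≤ 1 := by
      rw [div_le_one (by positivity)]; linarith [n.cast_nonneg (α := ℝ)]
    simp only [curvePt, mem_setOf_eq, map_add, map_smul, h11, h12, h21, h22, hy1, hy2, smul_eq_mul,
      mul_zero, mul_one, add_zero, zero_add]
    refine ⟨by positivity, by nlinarith, ?_⟩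
    refine subset_closure (subset_convexHull ℝ _ ⟨n.unpair.1, ?_⟩)
    abel
  · refine Convex.inter (t := {x | h₂ x ≤ h₁ x ∧ _}) (convex_halfSpace_ge h₂.toLinearMap.isLinear 0)
      (Convex.inter ?_ ((convex_convexHull ℝ (range q)).closure.is_linear_preimage hQ))
    have h3 := convex_halfSpace_le (h₂ - h₁).toLinearMap.isLinear 0
    have h4 : {w | (h₂ - h₁).toLinearMap w ≤ 0} = {x | h₂ x ≤ h₁ x} := by
      ext w; simp
    rw [h4] at h3
    exact h3
  · refine IsClosed.and (isClosed_le (by fun_prop) (by fun_prop))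
      (IsClosed.and (isClosed_le (by fun_prop) (by fun_prop)) ?_)
    exact isClosed_closure.preimage (f := fun x : X => x - h₁ x • e₁ - h₂ x • e₂) (by fun_prop)

lemma exists_biorth (h : DaugavetProperty X) : ∃ (e : X) (e₁ e₂ : X) (h₁ h₂ : X →L[ℝ] ℝ),
    ‖e‖ = 1 ∧ h₁ e₁ = 1 ∧ h₁ e₂ = 0 ∧ h₂ e₁ = 0 ∧ h₂ e₂ = 1 := by
  have hex : ∀ v : X, v ≠ 0 → ∃ g : X →L[ℝ] ℝ, g v = 1 := by
    intro v hv
    obtain ⟨g, -, hg⟩ := exists_dual_vector ℝ v (norm_ne_zero_iff.mpr hv)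
    have hv0 : ‖v‖ ≠ 0 := norm_ne_zero_iff.mpr hv
    refine ⟨‖v‖⁻¹ • g, ?_⟩
    simp only [ContinuousLinearMap.smul_apply, hg, smul_eq_mul]
    simp [hv0]
  have hrk : ∀ (f : X →L[ℝ] ℝ) (y : X), ∃ x, x + f x • y ≠ 0 := by
    intro f y
    by_contra hcon
    push Not at hcon
    have h0 : ContinuousLinearMap.id ℝ X + f.smulRight y = 0 := by
      ext x; simpa using hcon x
    have := h f y
    rw [h0, norm_zero] at this
    linarith [norm_nonneg (f.smulRight y)]
  obtain ⟨u, hu⟩ := hrk 0 0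
  have hu : u ≠ 0 := by simpa using hu
  obtain ⟨h₁, h11⟩ := hex u hu
  obtain ⟨x, hx⟩ := hrk h₁ (-u)
  obtain ⟨g, hg⟩ := hex _ hx
  have h12 : h₁ (x + h₁ x • -u) = 0 := by simp [h11]
  refine ⟨‖u‖⁻¹ • u, u, x + h₁ x • -u, h₁, g - g u • h₁, ?_, h11, h12, ?_, ?_⟩
  · rw [norm_smul, norm_inv, norm_norm, inv_mul_cancel₀ (norm_ne_zero_iff.mpr hu)]
  · simp [h11]
  · simp only [ContinuousLinearMap.sub_apply, ContinuousLinearMap.smul_apply, h12, hg]; simp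

lemma closure_lin {W : Set X} 
    (hW : ∀ a b : ℚ, ∀ x ∈ W, ∀ y ∈ W, (a : ℝ) • x + (b : ℝ) • y ∈ W) (r : ℝ) (x y : X)
    (hx : x ∈ closure W) (hy : y ∈ closure W) : x + r • y ∈ closure W := by
  have hr : r ∈ closure (range ((↑) : ℚ → ℝ)) := Rat.denseRange_cast r
  have h1 : r • y ∈ closure W := by
    refine map_mem_closure₂ (f := fun (r : ℝ) (y : X) => r • y) (by fun_prop) hr hy ?_
    rintro _ ⟨a, rfl⟩ y hy
    simpa using hW a 0 y hy y hy
  refine map_mem_closure₂ (f := fun (x : X) (y : X) => x + y) (by fun_prop) hx h1 ?_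
  intro x hx y hy
  simpa using hW 1 1 x hx y hy

lemma not_scd_core {W C : Set X} (hC : ∀ x ∈ C, ‖x‖ ≤ 1) (hCW : C ⊆ W)
    (hW : ∀ a b : ℚ, ∀ x ∈ W, ∀ y ∈ W, (a : ℝ) • x + (b : ℝ) • y ∈ W)
    (hWC : ∀ c ∈ C, ∀ y ∈ W, ∀ δ > 0, ∀ f : X →L[ℝ] ℝ,
        ∃ x ∈ C, f c - δ < f x ∧ ‖y‖ + 1 - δ ≤ ‖y + x‖)
    (e₁ e₂ : X) (he₁ : e₁ ∈ W) (he₂ : e₂ ∈ W) (h₁ h₂ : X →L[ℝ] ℝ) (h0 : (0 : X) ∈ C)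
    (Q : X →L[ℝ] X) (hQ : ∀ x, Q x = x - h₁ x • e₁ - h₂ x • e₂) :
    ¬ IsSCD (closure (convexHull ℝ (Q '' C))) := by
  rintro ⟨V, hV, hdet⟩
  have hVs : ∀ n, ∃ (f : X →L[ℝ] ℝ) (a : ℝ), (∃ c ∈ C, a < f c) ∧
      ∀ c ∈ C, a < f c → Q c ∈ V n := by
    intro n
    obtain ⟨⟨v, hv⟩, f, -, ε, hε, hVe⟩ := hV n
    refine ⟨f.comp Q, sSup (f '' closure (convexHull ℝ (Q '' C))) - ε, ?_, ?_⟩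
    · by_contra hcon
      push Not at hcon
      rw [hVe] at hv
      obtain ⟨hv1, hv2⟩ := hv
      have hsub : closure (convexHull ℝ (Q '' C)) ⊆
          {x | f x ≤ sSup (f '' closure (convexHull ℝ (Q '' C))) - ε} := by
        refine closure_minimal (convexHull_min ?_ (convex_halfSpace_le f.toLinearMap.isLinear _))
          (isClosed_le (by fun_prop) (by fun_prop))
        rintro _ ⟨c, hc, rfl⟩
        exact hcon c hc
      exact absurd (hsub hv1) (not_le.mpr hv2)
    · intro c hc hac
      rw [hVe]
      exact ⟨subset_closure (subset_convexHull ℝ _ (mem_image_of_mem Q hc)), hac⟩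
  choose f a hfa hfV using hVs
  have hstep : ∀ (n : ℕ) (K : Set X), ∃ x ∈ C, a n < f n x ∧ (IsCompact K → K ⊆ closure W →
      ∀ y ∈ K, ‖y‖ + 1 - (1 / 4) * (1 / 2 : ℝ) ^ n ≤ ‖y + x‖) := by
    intro n K
    by_cases hK : IsCompact K ∧ K ⊆ closure W
    · obtain ⟨x, hx, hax, hxK⟩ := compact_step hC hWC ((1 / 4) * (1 / 2 : ℝ) ^ n) (by positivity)
        K hK.1 hK.2 (f n) (a n) (hfa n)
      exact ⟨x, hx, hax, fun _ _ => hxK⟩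
    · obtain ⟨c, hc, hac⟩ := hfa n
      exact ⟨c, hc, hac, fun h1 h2 => absurd ⟨h1, h2⟩ hK⟩
  choose s hsC hsa hsK using hstep
  set M := max ‖h₁‖ ‖h₂‖ with hM
  let K : ℕ → Set X := fun n => Nat.rec
    ((fun c : ℝ × ℝ => (0 : X) + c.1 • e₁ + c.2 • e₂) '' (Icc (-M) M ×ˢ Icc (-M) M))
    (fun n U => (fun c : X × ℝ => c.1 + c.2 • s n U) '' (U ×ˢ Icc 0 1)) n
  have hKs : ∀ n, K (n + 1) = (fun c : X × ℝ => c.1 + c.2 • s n (K n)) '' (K n ×ˢ Icc 0 1) :=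
    fun n => rfl
  have hK0 : K 0 = (fun c : ℝ × ℝ => (0 : X) + c.1 • e₁ + c.2 • e₂) '' (Icc (-M) M ×ˢ Icc (-M) M) :=
    rfl
  have hKc : ∀ n, IsCompact (K n) := by
    intro n
    induction n with
    | zero =>
      rw [hK0]
      exact (isCompact_Icc.prod isCompact_Icc).image (by fun_prop)
    | succ n ih =>
      rw [hKs]
      exact (ih.prod isCompact_Icc).image (by fun_prop)
  have hKW : ∀ n, K n ⊆ closure W := by
    intro n
    induction n with
    | zero =>
      rw [hK0]
      rintro _ ⟨c, -, rfl⟩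
      exact closure_lin hW _ _ _ (closure_lin hW _ _ _ (subset_closure (hCW h0))
        (subset_closure he₁)) (subset_closure he₂)
    | succ n ih =>
      rw [hKs]
      rintro _ ⟨c, hc, rfl⟩
      exact closure_lin hW _ _ _ (ih hc.1) (subset_closure (hCW (hsC _ _)))
  set x : ℕ → X := fun n => s n (K n) with hx
  have hxC : ∀ n, x n ∈ C := fun n => hsC _ _
  have hind : ∀ (c₁ c₂ : ℝ) (w : ℕ → ℝ), c₁ ∈ Icc (-M) M → c₂ ∈ Icc (-M) M →
      (∀ k, w k ∈ Icc (0 : ℝ) 1) → ∀ n,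
      (0 + c₁ • e₁ + c₂ • e₂ + ∑ k ∈ Finset.range n, w k • x k ∈ K n ∧
      ∑ k ∈ Finset.range n, w k - (1 / 2) * (1 - (1 / 2 : ℝ) ^ n) ≤
        ‖0 + c₁ • e₁ + c₂ • e₂ + ∑ k ∈ Finset.range n, w k • x k‖) := by
    intro c₁ c₂ w hc₁ hc₂ hw n
    induction n with
    | zero =>
      refine ⟨?_, by simp⟩
      rw [hK0]
      exact ⟨(c₁, c₂), ⟨hc₁, hc₂⟩, by simp⟩
    | succ n ih =>
      obtain ⟨ih1, ih2⟩ := ih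
      rw [Finset.sum_range_succ, Finset.sum_range_succ, ← add_assoc]
      set y := 0 + c₁ • e₁ + c₂ • e₂ + ∑ k ∈ Finset.range n, w k • x k with hy
      refine ⟨?_, ?_⟩
      · rw [hKs]
        exact ⟨(y, w n), ⟨ih1, hw n⟩, rfl⟩
      · have h1 := hsK n (K n) (hKc n) (hKW n) y ih1
        have h2 : ‖y + x n‖ ≤ ‖y + w n • x n‖ + (1 - w n) := by
          have e : y + x n = (y + w n • x n) + (1 - w n) • x n := by module
          rw [e]
          refine (norm_add_le _ _).trans ?_
          rw [norm_smul, Real.norm_eq_abs, abs_of_nonneg (by linarith [(hw n).2])]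
          nlinarith [hC _ (hxC n), (hw n).2]
        have h3 : ‖y‖ + 1 - (1 / 4) * (1 / 2 : ℝ) ^ n ≤ ‖y + x n‖ := h1
        rw [pow_succ]
        linarith
  have hhull : ∀ z ∈ convexHull ℝ (range fun n => Q (x n)), 1 / 2 ≤ ‖z‖ := by
    intro z hz
    rw [convexHull_range_eq_exists_affineCombination] at hz
    obtain ⟨t, w, hw0, hw1, rfl⟩ := hz
    rw [Finset.affineCombination_eq_linear_combination _ _ _ hw1]
    obtain ⟨n, hn⟩ := t.exists_nat_subset_range
    let w' : ℕ → ℝ := fun k => if k ∈ t then w k else 0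
    have hw'0 : ∀ k, 0 ≤ w' k := by
      intro k
      by_cases hk : k ∈ t
      · simp only [w', hk, if_true]; exact hw0 k hk
      · simp [w', hk]
    have hsum : ∑ k ∈ Finset.range n, w' k = 1 := by
      rw [← hw1, ← Finset.sum_subset hn (fun k _ hk => by simp [w', hk])]
      exact Finset.sum_congr rfl (fun k hk => by simp [w', hk])
    have hw'1 : ∀ k, w' k ≤ 1 := by
      intro k
      by_cases hk : k ∈ t
      · rw [← hsum]
        exact Finset.single_le_sum (fun i _ => hw'0 i) (hn hk)
      · simp [w', hk]
    have hbound : ∀ g : X →L[ℝ] ℝ, ‖g‖ ≤ M →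
        -(∑ k ∈ Finset.range n, w' k * g (x k)) ∈ Icc (-M) M := by
      intro g hg
      have : |∑ k ∈ Finset.range n, w' k * g (x k)| ≤ M := by
        refine (Finset.abs_sum_le_sum_abs _ _).trans ?_
        calc ∑ k ∈ Finset.range n, |w' k * g (x k)| ≤ ∑ k ∈ Finset.range n, w' k * M := by
              refine Finset.sum_le_sum fun k _ => ?_
              rw [abs_mul, abs_of_nonneg (hw'0 k)]
              refine mul_le_mul_of_nonneg_left ?_ (hw'0 k)
              have h5 := g.le_opNorm (x k)
              rw [Real.norm_eq_abs] at h5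
              nlinarith [hC _ (hxC k), norm_nonneg g]
          _ = M := by rw [← Finset.sum_mul, hsum, one_mul]
      rw [abs_le] at this
      exact ⟨by linarith [this.2], by linarith [this.1]⟩
    obtain ⟨-, hfin⟩ := hind _ _ w' (hbound h₁ (le_max_left _ _)) (hbound h₂ (le_max_right _ _))
      (fun k => ⟨hw'0 k, hw'1 k⟩) n
    have heq : ∑ k ∈ t, w k • Q (x k) = 0 + (-(∑ k ∈ Finset.range n, w' k * h₁ (x k))) • e₁
        + (-(∑ k ∈ Finset.range n, w' k * h₂ (x k))) • e₂ + ∑ k ∈ Finset.range n, w' k • x k := by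
      have e1 : ∑ k ∈ t, w k • Q (x k) = ∑ k ∈ Finset.range n, w' k • Q (x k) := by
        rw [← Finset.sum_subset hn (fun k _ hk => by simp [w', hk])]
        exact Finset.sum_congr rfl (fun k hk => by simp [w', hk])
      rw [e1]
      simp only [hQ, smul_sub, Finset.sum_sub_distrib, neg_smul, Finset.sum_smul, mul_smul]
      abel
    rw [heq]
    rw [hsum] at hfin
    have : 0 < (1 / 2 : ℝ) ^ n := by positivity
    linarith
  have hz := hdet (range fun n => Q (x n)) (fun n => ⟨Q (x n), mem_range_self n,
    hfV n _ (hxC n) (hsa _ _)⟩)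
    (subset_closure (subset_convexHull ℝ _ (⟨0, h0, map_zero Q⟩ : (0 : X) ∈ Q '' C)))
  obtain ⟨z, hz1, hz2⟩ := Metric.mem_closure_iff.mp hz (1 / 2) (by norm_num)
  have := hhull z hz1
  rw [dist_zero_left] at hz2
  linarith

theorem exists_scd_sets_inter_not_scd
    {X : Type*} [NormedAddCommGroup X] [NormedSpace ℝ X] [CompleteSpace X]
    (h : DaugavetProperty X) :
    ∃ A D : Set X,
      Convex ℝ A ∧ IsClosed A ∧ IsBounded A ∧ IsSCD A ∧
      Convex ℝ D ∧ IsClosed D ∧ IsBounded D ∧ IsSCD D ∧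
      (A ∩ D).Nonempty ∧ ¬ IsSCD (A ∩ D) := by
  obtain ⟨e, e₁, e₂, h₁, h₂, he, h11, h12, h21, h22⟩ := exists_biorth h
  obtain ⟨W, hWc, hSW, hWl, hWD⟩ := exists_W h e he {0, e₁, e₂} (by
    exact (Set.toFinite _).countable)
  have h0W : (0 : X) ∈ W := hSW (by simp)
  have he₁ : e₁ ∈ W := hSW (by simp)
  have he₂ : e₂ ∈ W := hSW (by simp)
  set C : Set X := {x | x ∈ W ∧ ‖x‖ ≤ 1} with hC
  have h0C : (0 : X) ∈ C := ⟨h0W, by simp⟩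
  let Q : X →L[ℝ] X := ContinuousLinearMap.id ℝ X - h₁.smulRight e₁ - h₂.smulRight e₂
  have hQ : ∀ x, Q x = x - h₁ x • e₁ - h₂ x • e₂ := fun x => by simp [Q]
  have hnot := not_scd_core (W := W) (C := C) (fun x hx => hx.2) (fun x hx => hx.1) hWl
    (fun c hc y hy δ hδ f => by
      obtain ⟨x, h1, h2, h3, h4⟩ := hWD c hc.1 hc.2 y hy δ hδ f
      exact ⟨x, ⟨h1, h2⟩, h3, h4⟩) e₁ e₂ he₁ he₂ h₁ h₂ h0C Q hQ
  have hCc : (Q '' C).Countable := (hWc.mono (fun x hx => hx.1)).image Q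
  obtain ⟨q, hq⟩ := hCc.exists_eq_range ⟨_, mem_image_of_mem Q h0C⟩
  have hqC : ∀ n, ∃ c ∈ C, Q c = q n := fun n => by
    have : q n ∈ Q '' C := hq ▸ mem_range_self n
    exact this
  have hq1 : ∀ n, h₁ (q n) = 0 := fun n => by
    obtain ⟨c, -, hc⟩ := hqC n
    rw [← hc, hQ]; simp [h11, h12]
  have hq2 : ∀ n, h₂ (q n) = 0 := fun n => by
    obtain ⟨c, -, hc⟩ := hqC n
    rw [← hc, hQ]; simp [h21, h22]
  have hqR : ∀ n, ‖q n‖ ≤ ‖Q‖ := fun n => by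
    obtain ⟨c, hcC, hc⟩ := hqC n
    rw [← hc]
    have h1 := Q.le_opNorm c
    have h2 : ‖c‖ ≤ 1 := hcC.2
    nlinarith [norm_nonneg Q]
  have hA := curve_sub q e₁ e₂ h₁ h₂ h11 h12 h21 h22 hq1 hq2
  have hD := curve_sub q (-e₁) e₂ (-h₁) h₂ (by simp [h11]) (by simp [h12]) (by simp [h21]) h22
    (by simp [hq1]) hq2
  have hinter : closure (convexHull ℝ (range (curvePt (fun n => q n.unpair.1) e₁ e₂))) ∩
      closure (convexHull ℝ (range (curvePt (fun n => q n.unpair.1) (-e₁) e₂))) =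
      closure (convexHull ℝ (Q '' C)) := by
    rw [hq]
    refine Subset.antisymm ?_ (subset_inter (curve_sup q e₁ e₂) (curve_sup q (-e₁) e₂))
    rintro x ⟨hx1, hx2⟩
    obtain ⟨a1, a2, a3⟩ := hA hx1
    obtain ⟨b1, b2, -⟩ := hD hx2
    simp only [ContinuousLinearMap.neg_apply] at b2
    have z1 : h₁ x = 0 := by linarith
    have z2 : h₂ x = 0 := by linarith
    simpa [z1, z2] using a3
  refine ⟨closure (convexHull ℝ (range (curvePt (fun n => q n.unpair.1) e₁ e₂))),
    closure (convexHull ℝ (range (curvePt (fun n => q n.unpair.1) (-e₁) e₂))),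
    (convex_convexHull ℝ _).closure, isClosed_closure, curve_bdd _ ‖Q‖ (fun n => hqR _) _ _,
    curve_scd _ ‖Q‖ (fun n => hqR _) _ _ h₁ h₂ h11 h12 h21 h22 (fun n => hq1 _) (fun n => hq2 _),
    (convex_convexHull ℝ _).closure, isClosed_closure, curve_bdd _ ‖Q‖ (fun n => hqR _) _ _,
    curve_scd _ ‖Q‖ (fun n => hqR _) _ _ (-h₁) h₂ (by simp [h11]) (by simp [h12]) (by simp [h21])
      h22 (fun n => by simp [hq1]) (fun n => hq2 _), ?_, ?_⟩
  · rw [hinter]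
    exact ⟨_, subset_closure (subset_convexHull ℝ _ (mem_image_of_mem Q h0C))⟩
  · rw [hinter]
    exact hnot
end

section
/- Let X be a real Banach space and B₁, B₂ ⊂ X nonempty bounded subsets. Then the Minkowski sum B₁ + B₂ is SCD if and only if there exists a countable family (x_n*, ε_n) of pairs of nonzero continuous linear functionals on X and positive reals such that for every nonzero continuous linear functional x* on X and every ε > 0 there is m ∈ ℕ with S(B₁, x_m*, ε_m) ⊂ S(B₁, x*, ε) and S(B₂, x_m*, ε_m) ⊂ S(B₂, x*, ε). -/
open Bornology Set Pointwise

variable {X : Type*} [NormedAddCommGroup X] [NormedSpace ℝ X]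

lemma bdd_img {X : Type*} [NormedAddCommGroup X] [NormedSpace ℝ X] {A : Set X}
    (hA : IsBounded A) (f : X →L[ℝ] ℝ) : BddAbove (f '' A) :=
  (f.lipschitz.isBounded_image hA).bddAbove

lemma slice_ne {X : Type*} [NormedAddCommGroup X] [NormedSpace ℝ X] {A : Set X}
    (hn : A.Nonempty) (f : X →L[ℝ] ℝ) {ε : ℝ} (hε : 0 < ε) :
    (sliceSet A f ε).Nonempty := by
  obtain ⟨_, ⟨x, hx, rfl⟩, h⟩ := exists_lt_of_lt_csSup (hn.image f) (sub_lt_self _ hε)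
  exact ⟨x, hx, h⟩

lemma slice_sup_add {X : Type*} [NormedAddCommGroup X] [NormedSpace ℝ X] {A B : Set X}
    (hA : A.Nonempty) (hAb : IsBounded A) (hB : B.Nonempty) (hBb : IsBounded B)
    (f : X →L[ℝ] ℝ) : sSup (f '' (A + B)) = sSup (f '' A) + sSup (f '' B) := by
  rw [Set.image_add, csSup_add (hA.image f) (bdd_img hAb f) (hB.image f) (bdd_img hBb f)]

theorem sum_isSCD_iff
    {X : Type*} [NormedAddCommGroup X] [NormedSpace ℝ X] [CompleteSpace X]
    (B₁ B₂ : Set X) (h₁ : B₁.Nonempty) (h₁b : IsBounded B₁)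
    (h₂ : B₂.Nonempty) (h₂b : IsBounded B₂) :
    IsSCD (B₁ + B₂) ↔
      ∃ (f : ℕ → X →L[ℝ] ℝ) (ε : ℕ → ℝ), (∀ n, f n ≠ 0) ∧ (∀ n, 0 < ε n) ∧
        ∀ (g : X →L[ℝ] ℝ), g ≠ 0 → ∀ δ : ℝ, 0 < δ → ∃ m,
          sliceSet B₁ (f m) (ε m) ⊆ sliceSet B₁ g δ ∧
          sliceSet B₂ (f m) (ε m) ⊆ sliceSet B₂ g δ := by
  have hsum := slice_sup_add h₁ h₁b h₂ h₂b
  have le₁ : ∀ (f : X →L[ℝ] ℝ) x, x ∈ B₁ → f x ≤ sSup (f '' B₁) := fun f x hx =>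
    le_csSup (bdd_img h₁b f) (mem_image_of_mem f hx)
  have le₂ : ∀ (f : X →L[ℝ] ℝ) x, x ∈ B₂ → f x ≤ sSup (f '' B₂) := fun f x hx =>
    le_csSup (bdd_img h₂b f) (mem_image_of_mem f hx)
  constructor
  · rintro ⟨V, hV, hdet⟩
    choose hne f hf ε hε hVe using hV
    refine ⟨f, fun n => ε n / 2, hf, fun n => half_pos (hε n), ?_⟩
    intro g hg δ hδ
    have key : ∃ m, V m ⊆ sliceSet (B₁ + B₂) g δ := by
      by_contra! hcon
      have hcon' : ∀ m, ∃ x, x ∈ V m ∧ x ∉ sliceSet (B₁ + B₂) g δ := fun m =>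
        not_subset.1 (hcon m)
      choose b hb hb' using hcon'
      have hsub := hdet (range b) (fun n => ⟨b n, mem_range_self n, hb n⟩)
      have hhalf : closure (convexHull ℝ (range b)) ⊆
          {x | g x ≤ sSup (g '' (B₁ + B₂)) - δ} := by
        apply closure_minimal
        · apply convexHull_min
          · rintro _ ⟨n, rfl⟩
            have hbA : b n ∈ B₁ + B₂ := by
              have := hb n
              rw [hVe n] at this
              exact this.1
            by_contra hlt
            exact hb' n ⟨hbA, not_le.1 hlt⟩
          · exact convex_halfSpace_le g.toLinearMap.isLinear _
        · exact isClosed_le g.continuous continuous_const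
      obtain ⟨x, hx, hxg⟩ := slice_ne (h₁.add h₂) g hδ
      have : g x ≤ _ := hhalf (hsub hx)
      linarith
    obtain ⟨m, hm⟩ := key
    have main : ∀ x ∈ sliceSet B₁ (f m) (ε m / 2), ∀ y ∈ sliceSet B₂ (f m) (ε m / 2),
        sSup (g '' B₁) + sSup (g '' B₂) - δ < g x + g y := by
      intro x hx y hy
      have : x + y ∈ V m := by
        rw [hVe m]
        refine ⟨add_mem_add hx.1 hy.1, ?_⟩
        rw [hsum, map_add]
        linarith [hx.2, hy.2]
      have h := (hm this).2
      rwa [hsum, map_add] at h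
    obtain ⟨x₀, hx₀⟩ := slice_ne h₁ (f m) (half_pos (hε m))
    obtain ⟨y₀, hy₀⟩ := slice_ne h₂ (f m) (half_pos (hε m))
    refine ⟨m, fun x hx => ⟨hx.1, ?_⟩, fun y hy => ⟨hy.1, ?_⟩⟩
    · linarith [main x hx y₀ hy₀, le₂ g y₀ hy₀.1]
    · linarith [main x₀ hx₀ y hy, le₁ g x₀ hx₀.1]
  · rintro ⟨f, ε, hf, hε, H⟩
    refine ⟨fun n => sliceSet (B₁ + B₂) (f n) (ε n),
      fun n => ⟨slice_ne (h₁.add h₂) _ (hε n), f n, hf n, ε n, hε n, rfl⟩, ?_⟩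
    intro B hB a ha
    by_contra hna
    obtain ⟨g, u, hgu, hua⟩ := geometric_hahn_banach_closed_point
      (convex_convexHull ℝ B).closure isClosed_closure hna
    have hgB : ∀ b ∈ B, g b < u := fun b hb => hgu b (subset_closure (subset_convexHull ℝ B hb))
    obtain ⟨b₀, hb₀, -⟩ := hB 0
    have hg : g ≠ 0 := by
      rintro rfl
      have := hgB b₀ hb₀
      simp at this hua
      linarith
    have hs : g a ≤ sSup (g '' (B₁ + B₂)) :=
      le_csSup (bdd_img (h₁b.add h₂b) g) (mem_image_of_mem g ha)
    rw [hsum] at hs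
    obtain ⟨m, hm₁, hm₂⟩ := H g hg ((sSup (g '' B₁) + sSup (g '' B₂) - u) / 2) (by linarith)
    obtain ⟨b, hbB, hb, hbf⟩ := hB m
    obtain ⟨x, hx, y, hy, rfl⟩ := hb
    simp only [hsum, map_add] at hbf
    have hx' := (hm₁ ⟨hx, by linarith [le₂ (f m) y hy]⟩).2
    have hy' := (hm₂ ⟨hy, by linarith [le₁ (f m) x hx]⟩).2
    have := hgB _ hbB
    simp only [map_add] at this
    linarith
end

section
/- Let X be a real Banach space and B₁, B₂ ⊂ X nonempty bounded subsets such that the Minkowski sum B₁ + B₂ is SCD. Then B₁ is SCD (and, by symmetry, so is B₂). -/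
open Bornology Set Pointwise

variable {X : Type*} [NormedAddCommGroup X] [NormedSpace ℝ X]

theorem scd_aux_bdd {X : Type*} [NormedAddCommGroup X] [NormedSpace ℝ X]
    (B : Set X) (hb : IsBounded B) (f : X →L[ℝ] ℝ) : BddAbove (f '' B) :=
  (f.lipschitz.isBounded_image hb).bddAbove

theorem scd_aux_slice {X : Type*} [NormedAddCommGroup X] [NormedSpace ℝ X]
    (B : Set X) (h : B.Nonempty) (f : X →L[ℝ] ℝ) (e : ℝ) (he : 0 < e) :
    (sliceSet B f e).Nonempty := by
  obtain ⟨_, ⟨x, hx, rfl⟩, hlt⟩ := exists_lt_of_lt_csSup (h.image f)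
    (show sSup (f '' B) - e < sSup (f '' B) by linarith)
  exact ⟨x, hx, hlt⟩

theorem scd_aux {X : Type*} [NormedAddCommGroup X] [NormedSpace ℝ X]
    (B₁ B₂ : Set X) (h₁ : B₁.Nonempty) (h₁b : IsBounded B₁)
    (h₂ : B₂.Nonempty) (h₂b : IsBounded B₂)
    (hsum : IsSCD (B₁ + B₂)) : IsSCD B₁ := by
  obtain ⟨V, hV, hdet⟩ := hsum
  choose hne f hf e he hVe using hV
  refine ⟨fun n => sliceSet B₁ (f n) (e n / 2), fun n =>
    ⟨scd_aux_slice B₁ h₁ _ _ (half_pos (he n)), f n, hf n, _, half_pos (he n), rfl⟩, ?_⟩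
  intro B hB
  choose b hbB hbV using hB
  choose w hw using fun n => scd_aux_slice B₂ h₂ (f n) _ (half_pos (he n))
  have key := hdet (range fun n => b n + w n) (fun n => by
    refine ⟨b n + w n, ⟨n, rfl⟩, ?_⟩
    rw [hVe n]
    refine ⟨add_mem_add (hbV n).1 (hw n).1, ?_⟩
    have hs : sSup (f n '' (B₁ + B₂)) ≤ sSup (f n '' B₁) + sSup (f n '' B₂) := by
      apply csSup_le ((h₁.add h₂).image _)
      rintro _ ⟨_, ⟨x, hx, y, hy, rfl⟩, rfl⟩
      have h3 := le_csSup (scd_aux_bdd B₁ h₁b (f n)) (mem_image_of_mem _ hx)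
      have h4 := le_csSup (scd_aux_bdd B₂ h₂b (f n)) (mem_image_of_mem _ hy)
      simp only [map_add]
      linarith
    have h5 := (hbV n).2
    have h6 := (hw n).2
    rw [map_add]
    linarith)
  intro a ha
  by_contra hna
  obtain ⟨g, u, hgu, hua⟩ := geometric_hahn_banach_closed_point
    ((convex_convexHull ℝ B).closure) isClosed_closure hna
  have hsub : closure (convexHull ℝ (range fun n => b n + w n)) ⊆
      {x | g x ≤ u + sSup (g '' B₂)} := by
    apply closure_minimal
    · apply convexHull_min
      · rintro _ ⟨n, rfl⟩
        have h3 := hgu _ (subset_closure (subset_convexHull ℝ B (hbB n)))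
        have h4 := le_csSup (scd_aux_bdd B₂ h₂b g) (mem_image_of_mem _ (hw n).1)
        simp only [mem_setOf_eq, map_add]
        linarith
      · exact convex_halfSpace_le g.toLinearMap.isLinear _
    · exact isClosed_le g.continuous continuous_const
  have hfin : sSup (g '' B₂) ≤ u + sSup (g '' B₂) - g a := by
    apply csSup_le (h₂.image _)
    rintro _ ⟨c, hc, rfl⟩
    have h7 := hsub (key (add_mem_add ha hc))
    simp only [mem_setOf_eq, map_add] at h7
    linarith
  linarith

theorem isSCD_of_sum_isSCD
    {X : Type*} [NormedAddCommGroup X] [NormedSpace ℝ X] [CompleteSpace X]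
    (B₁ B₂ : Set X) (h₁ : B₁.Nonempty) (h₁b : IsBounded B₁)
    (h₂ : B₂.Nonempty) (h₂b : IsBounded B₂)
    (hsum : IsSCD (B₁ + B₂)) :
    IsSCD B₁ ∧ IsSCD B₂ :=
  ⟨scd_aux B₁ B₂ h₁ h₁b h₂ h₂b hsum,
    scd_aux B₂ B₁ h₂ h₂b h₁ h₁b (by rwa [add_comm])⟩
end

section
/- Let X be a real Banach space with the Daugavet property. Then there exists a bounded, non-convex set U ⊂ X which is not SCD but which admits a determining sequence consisting of nonempty relatively weakly open subsets of U. -/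
open Bornology Set Pointwise

variable {X : Type*} [NormedAddCommGroup X] [NormedSpace ℝ X]

/-- `V` is a relatively weakly open subset of `U`: the intersection of `U` with an
open set of the weak topology `σ(X, X*)`. -/
def RelWeaklyOpenIn {X : Type*} [NormedAddCommGroup X] [NormedSpace ℝ X]
    (U V : Set X) : Prop :=
  ∃ W : Set (WeakSpace ℝ X), IsOpen W ∧ V = U ∩ (toWeakSpace ℝ X ⁻¹' W)


lemma aux_exists_slice (g : X →L[ℝ] ℝ) (a : ℝ) (ha : a < ‖g‖) (hg : g ≠ 0) :
    ∃ x, ‖x‖ ≤ 1 ∧ a < g x := by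
  have hpos : 0 < ‖g‖ := norm_pos_iff.mpr hg
  have h2 : max a 0 < ‖g‖ := max_lt ha hpos
  obtain ⟨x, hx, hgx⟩ := g.exists_lt_apply_of_lt_opNorm h2
  rw [Real.norm_eq_abs] at hgx
  have h3 := lt_of_le_of_lt (le_max_left a 0) hgx
  rcases abs_cases (g x) with ⟨h, _⟩ | ⟨h, _⟩
  · exact ⟨x, hx.le, by linarith⟩
  · exact ⟨-x, by simpa using hx.le, by rw [map_neg]; linarith⟩

lemma aux_le_s6 {g : X →L[ℝ] ℝ} {x : X} (hx : ‖x‖ ≤ 1) : |g x| ≤ ‖g‖ := by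
  have := g.le_opNorm_of_le hx
  simpa using this

lemma aux_subslice (h : DaugavetProperty X) (g : X →L[ℝ] ℝ) (a : ℝ) (ha : a < ‖g‖) (hg : g ≠ 0)
    (w : X) (η : ℝ) (hη : 0 < η) :
    ∃ (g' : X →L[ℝ] ℝ) (a' : ℝ), a' < ‖g'‖ ∧ g' ≠ 0 ∧
      ∀ x, ‖x‖ ≤ 1 → a' < g' x → a < g x ∧ ‖w‖ + 1 - η < ‖w + x‖ := by
  have hpos : 0 < ‖g‖ := norm_pos_iff.mpr hg
  by_cases hw : w = 0
  · subst hw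
    refine ⟨g, max a (‖g‖ * (1 - η)), max_lt ha (by nlinarith), hg, fun x hx hax => ?_⟩
    have h1 := lt_of_le_of_lt (le_max_left _ _) hax
    have h2 := lt_of_le_of_lt (le_max_right _ _) hax
    refine ⟨h1, ?_⟩
    have h3 := (le_abs_self _).trans (g.le_opNorm x)
    have h4 : ‖g‖ * (1 - η) < ‖g‖ * ‖x‖ := lt_of_lt_of_le h2 h3
    have := lt_of_mul_lt_mul_left h4 hpos.le
    simp; linarith
  · have hwpos : 0 < ‖w‖ := norm_pos_iff.mpr hw
    obtain ⟨δ, hδ0, hδ1, hδ2, hδ3, hδ4⟩ : ∃ δ > 0, δ ≤ η / 2 ∧ δ ≤ ‖g‖ * η / 2 ∧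
        δ ≤ (‖g‖ - a) * ‖w‖ ∧ δ ≤ ‖g‖ * ‖w‖ := by
      refine ⟨min (min (η/2) (‖g‖ * η / 2)) (min ((‖g‖ - a) * ‖w‖) (‖g‖ * ‖w‖)), ?_, ?_, ?_, ?_, ?_⟩
      · have : 0 < ‖g‖ - a := by linarith
        refine lt_min (lt_min ?_ ?_) (lt_min ?_ ?_) <;> positivity
      · exact (min_le_left _ _).trans (min_le_left _ _)
      · exact (min_le_left _ _).trans (min_le_right _ _)
      · exact (min_le_right _ _).trans (min_le_left _ _)
      · exact (min_le_right _ _).trans (min_le_right _ _)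
    have hD := h g w
    rw [ContinuousLinearMap.norm_smulRight_apply] at hD
    obtain ⟨x, hx, hx2⟩ := ContinuousLinearMap.exists_lt_apply_of_lt_opNorm
      (ContinuousLinearMap.id ℝ X + g.smulRight w)
      (r := 1 + ‖g‖ * ‖w‖ - δ) (by rw [hD]; linarith)
    simp only [ContinuousLinearMap.add_apply, ContinuousLinearMap.id_apply,
      ContinuousLinearMap.smulRight_apply] at hx2
    obtain ⟨φ, hφ, hφ2⟩ := exists_dual_vector'' ℝ (x + g x • w)
    have hφ3 : 1 + ‖g‖ * ‖w‖ - δ < φ x + g x * φ w := by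
      have : φ (x + g x • w) = φ x + g x * φ w := by simp
      rw [← this, hφ2]; exact hx2
    -- arrange the sign
    obtain ⟨ψ, z, hψ, hz, hψw, hψz⟩ : ∃ (ψ : X →L[ℝ] ℝ) (z : X), ‖ψ‖ ≤ 1 ∧ ‖z‖ ≤ 1 ∧ 0 ≤ ψ w ∧
        1 + ‖g‖ * ‖w‖ - δ < ψ z + g z * ψ w := by
      rcases le_total 0 (φ w) with h0 | h0
      · exact ⟨φ, x, hφ, hx.le, h0, hφ3⟩
      · refine ⟨-φ, -x, by simpa using hφ, by simpa using hx.le, by simpa using h0, ?_⟩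
        simpa using hφ3
    have hb : ∀ y : X, |ψ y| ≤ ‖y‖ := fun y => by
      have := ψ.le_of_opNorm_le hψ y
      simpa using this
    have hψw' : ψ w ≤ ‖w‖ := (le_abs_self _).trans (hb w)
    have hψw2 : ‖w‖ - η / 2 ≤ ψ w := by
      have h1 : ψ z ≤ 1 := (le_abs_self _).trans ((hb z).trans hz)
      have h2 : g z ≤ ‖g‖ := (le_abs_self _).trans (aux_le_s6 hz)
      have h3 : g z * ψ w ≤ ‖g‖ * ψ w := by gcongr
      have h4 : ‖g‖ * (‖w‖ - η / 2) ≤ ‖g‖ * ψ w := by nlinarith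
      exact le_of_mul_le_mul_left h4 hpos
    refine ⟨ψ + ψ w • g, 1 + ‖g‖ * ‖w‖ - δ, ?_, ?_, ?_⟩
    · refine lt_of_lt_of_le ?_ ((le_abs_self _).trans (aux_le_s6 hz))
      simp; linarith
    · intro h0
      have := congrArg (fun k : X →L[ℝ] ℝ => k z) h0
      simp at this
      linarith
    · intro y hy hay
      simp only [ContinuousLinearMap.add_apply, ContinuousLinearMap.smul_apply, smul_eq_mul] at hay
      have h1 : ψ y ≤ 1 := (le_abs_self _).trans ((hb y).trans hy)
      have h2 : g y ≤ ‖g‖ := (le_abs_self _).trans (aux_le_s6 hy)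
      have h3 : ψ w * g y ≤ ‖w‖ * ‖g‖ := by
        calc ψ w * g y ≤ ψ w * ‖g‖ := by gcongr
          _ ≤ ‖w‖ * ‖g‖ := by gcongr
      have h5 : 0 < ψ w * g y := by linarith
      have h6 : 0 < g y := by
        by_contra hc
        push Not at hc
        nlinarith
      have h7 : ψ w * g y ≤ ‖w‖ * g y := by gcongr
      refine ⟨?_, ?_⟩
      · have : ‖w‖ * a < ‖w‖ * g y := by nlinarith
        exact lt_of_mul_lt_mul_left this hwpos.le
      · have h8 := (le_abs_self _).trans (hb (w + y))
        rw [map_add] at h8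
        linarith

lemma aux_finite_s6 (h : DaugavetProperty X) (A : Set X) (hA : A.Finite) :
    ∀ (g : X →L[ℝ] ℝ) (a : ℝ), a < ‖g‖ → g ≠ 0 →
      ∃ z, ‖z‖ ≤ 1 ∧ a < g z ∧ ∀ w ∈ A, ‖w‖ + 1 / 2 < ‖w + z‖ := by
  induction A, hA using Set.Finite.induction_on with
  | empty =>
    intro g a ha hg
    obtain ⟨x, hx, hax⟩ := aux_exists_slice g a ha hg
    exact ⟨x, hx, hax, by simp⟩
  | @insert w A _ _ ih =>
    intro g a ha hg
    obtain ⟨g', a', ha', hg', H⟩ := aux_subslice h g a ha hg w (1/2) (by norm_num)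
    obtain ⟨z, hz, hz2, hz3⟩ := ih g' a' ha' hg'
    obtain ⟨h1, h2⟩ := H z hz hz2
    refine ⟨z, hz, h1, ?_⟩
    intro v hv
    rcases hv with rfl | hv
    · linarith
    · exact hz3 v hv

def farSet (F : Submodule ℝ X) (r : ℝ) : Set X :=
  {z | ‖z‖ ≤ 1 ∧ ∀ w ∈ F, r * ‖w‖ ≤ ‖w + z‖}

lemma aux_far (h : DaugavetProperty X) (F : Submodule ℝ X) [FiniteDimensional ℝ F] (r : ℝ)
    (hr : r < 1) (y : X) (hy : ‖y‖ ≤ 1) : y ∈ closure (convexHull ℝ (farSet F r)) := by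
  by_contra hc
  obtain ⟨g, u, hgu, huy⟩ := geometric_hahn_banach_closed_point (convex_convexHull ℝ _).closure
    isClosed_closure hc
  have hsub : ∀ z ∈ farSet F r, g z < u := fun z hz =>
    hgu z (subset_closure (subset_convexHull ℝ _ hz))
  have h0 : (0 : ℝ) < u := by
    have := hsub 0 ⟨by simp, fun w _ => by
      rw [add_zero]; nlinarith [norm_nonneg w]⟩
    simpa using this
  have hg : g ≠ 0 := by
    rintro rfl
    simp at huy; linarith
  have hu : u < ‖g‖ := lt_of_lt_of_le huy ((le_abs_self _).trans (aux_le_s6 hy))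
  obtain ⟨t, _, htf, htc⟩ := (isCompact_closedBall (0 : F) (1 / (1 - r))).finite_cover_balls
    (e := 1/4) (by norm_num)
  obtain ⟨z, hz, huz, hz2⟩ := aux_finite_s6 h ((fun v : F => (v : X)) '' t) (htf.image _) g u hu hg
  have : z ∈ farSet F r := by
    refine ⟨hz, fun w hw => ?_⟩
    by_cases hwR : ‖w‖ ≤ 1 / (1 - r)
    · have hm : (⟨w, hw⟩ : F) ∈ Metric.closedBall (0 : F) (1 / (1 - r)) := by
        simpa using hwR
      have := htc hm
      simp only [Set.mem_iUnion] at this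
      obtain ⟨v, hv, hvb⟩ := this
      have h1 := hz2 v ⟨v, hv, rfl⟩
      have h2 : ‖w - (v : X)‖ < 1 / 4 := by
        rw [Metric.mem_ball, dist_eq_norm] at hvb
        simpa using hvb
      have h3 : ‖(v : X) + z‖ ≤ ‖w + z‖ + ‖w - (v : X)‖ := by
        have := norm_sub_le (w + z) (w - (v : X))
        have e : w + z - (w - (v : X)) = v + z := by abel
        rwa [e] at this
      have h4 : ‖w‖ ≤ ‖(v : X)‖ + ‖w - (v : X)‖ := by
        have := norm_add_le (v : X) (w - v)
        simpa using this
      nlinarith [norm_nonneg w]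
    · push Not at hwR
      rw [div_lt_iff₀ (by linarith)] at hwR
      have := norm_sub_le (w + z) z
      simp only [add_sub_cancel_right] at this
      nlinarith
  linarith [hsub z this]

lemma aux_countable (Z : Set X) (y : X) (hy : y ∈ closure (convexHull ℝ Z)) :
    ∃ Z' ⊆ Z, Z'.Countable ∧ y ∈ closure (convexHull ℝ Z') := by
  obtain ⟨u, hu, hlim⟩ := mem_closure_iff_seq_limit.mp hy
  have : ∀ n, ∃ t : Finset X, (t : Set X) ⊆ Z ∧ u n ∈ convexHull ℝ (t : Set X) := by
    intro n
    have := hu n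
    rw [convexHull_eq_union_convexHull_finite_subsets] at this
    simp only [Set.mem_iUnion] at this
    obtain ⟨t, ht, h⟩ := this
    exact ⟨t, ht, h⟩
  choose t ht hut using this
  refine ⟨⋃ n, (t n : Set X), Set.iUnion_subset ht,
    Set.countable_iUnion fun n => (t n).countable_toSet, ?_⟩
  exact mem_closure_of_tendsto hlim (Filter.Eventually.of_forall fun n =>
    convexHull_mono (Set.subset_iUnion (fun n => (t n : Set X)) n) (hut n))

lemma aux_step (h : DaugavetProperty X) (e : X) (r : ℕ → ℝ) (hr : ∀ n, r n < 1) (A : Set X) :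
    ∃ A' : Set X, A ⊆ A' ∧ (A.Countable → (∀ y ∈ A, ‖y‖ ≤ 1) → (A'.Countable ∧ (∀ y ∈ A', ‖y‖ ≤ 1) ∧
      ∀ y ∈ A, ∀ t : Finset X, (t : Set X) ⊆ A → ∀ n,
        y ∈ closure (convexHull ℝ (A' ∩ farSet (Submodule.span ℝ (insert e (t : Set X))) (r n))))) := by
  by_cases hA : A.Countable ∧ (∀ y ∈ A, ‖y‖ ≤ 1)
  swap
  · exact ⟨A, subset_rfl, fun h1 h2 => (hA ⟨h1, h2⟩).elim⟩
  obtain ⟨hc, hb⟩ := hA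
  have key : ∀ (y : X) (t : Finset X) (n : ℕ), ∃ Z' : Set X, ‖y‖ ≤ 1 →
      Z' ⊆ farSet (Submodule.span ℝ (insert e (t : Set X))) (r n) ∧
      Z'.Countable ∧ y ∈ closure (convexHull ℝ Z') := by
    intro y t n
    by_cases hy : ‖y‖ ≤ 1
    · have hf : FiniteDimensional ℝ (Submodule.span ℝ (insert e (t : Set X))) :=
        FiniteDimensional.span_of_finite ℝ (t.finite_toSet.insert e)
      obtain ⟨Z', h1, h2, h3⟩ := aux_countable _ y (aux_far h (Submodule.span ℝ (insert e (t : Set X))) (r n) (hr n) y hy)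
      exact ⟨Z', fun _ => ⟨h1, h2, h3⟩⟩
    · exact ⟨∅, fun h => (hy h).elim⟩
  choose Z hZ using key
  have hT : {t : Finset X | (t : Set X) ⊆ A}.Countable := by
    have h1 := Set.countable_ofPred_finite_subset hc
    refine (h1.preimage (f := fun t : Finset X => (t : Set X)) Finset.coe_injective).mono ?_
    intro t ht
    exact ⟨t.finite_toSet, ht⟩
  refine ⟨A ∪ ⋃ y ∈ A, ⋃ t ∈ {t : Finset X | (t : Set X) ⊆ A}, ⋃ n, Z y t n,
    subset_union_left, fun _ _ => ⟨?_, ?_, ?_⟩⟩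
  · refine hc.union (hc.biUnion fun y hy => hT.biUnion fun t ht => countable_iUnion fun n => ?_)
    exact (hZ y t n (hb y hy)).2.1
  · rintro z (hz | hz)
    · exact hb z hz
    · simp only [Set.mem_iUnion] at hz
      obtain ⟨y, hy, t, ht, n, hz⟩ := hz
      exact ((hZ y t n (hb y hy)).1 hz).1
  · intro y hy t ht n
    refine closure_mono (convexHull_mono ?_) (hZ y t n (hb y hy)).2.2
    refine subset_inter ?_ (hZ y t n (hb y hy)).1
    intro z hz
    right
    simp only [Set.mem_iUnion]
    exact ⟨y, hy, t, ht, n, hz⟩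

lemma aux_Y (h : DaugavetProperty X) (e : X) (r : ℕ → ℝ) (hr : ∀ n, r n < 1) (y₀ : X)
    (hy₀ : ‖y₀‖ ≤ 1) :
    ∃ Y : Set X, y₀ ∈ Y ∧ Y.Countable ∧ (∀ y ∈ Y, ‖y‖ ≤ 1) ∧
      ∀ y ∈ Y, ∀ t : Finset X, (t : Set X) ⊆ Y → ∀ n,
        y ∈ closure (convexHull ℝ (Y ∩ farSet (Submodule.span ℝ (insert e (t : Set X))) (r n))) := by
  choose S hS1 hS2 using aux_step h e r hr
  let A : ℕ → Set X := fun n => S^[n] {y₀}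
  have hA1 : ∀ n, A (n+1) = S (A n) := fun n => Function.iterate_succ_apply' S n _
  have hA : ∀ n, (A n).Countable ∧ ∀ y ∈ A n, ‖y‖ ≤ 1 := by
    intro n
    induction n with
    | zero => simpa [A] using hy₀
    | succ n ih =>
      rw [hA1]
      have := hS2 (A n) ih.1 ih.2
      exact ⟨this.1, this.2.1⟩
  have hmono : Monotone A := monotone_nat_of_le_succ fun n => by rw [hA1]; exact hS1 _
  refine ⟨⋃ n, A n, mem_iUnion.mpr ⟨0, by simp [A]⟩, countable_iUnion fun n => (hA n).1, ?_, ?_⟩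
  · intro y hy
    obtain ⟨n, hn⟩ := mem_iUnion.mp hy
    exact (hA n).2 y hn
  · intro y hy t ht n
    obtain ⟨i, hi⟩ := mem_iUnion.mp hy
    obtain ⟨j, hj⟩ : ∃ j, (t : Set X) ⊆ A j :=
      hmono.directed_le.exists_mem_subset_of_finset_subset_biUnion ht
    have h1 := (hS2 (A (max i j)) (hA _).1 (hA _).2).2.2 y (hmono (le_max_left _ _) hi) t
      (hj.trans (hmono (le_max_right _ _))) n
    refine closure_mono (convexHull_mono (inter_subset_inter_left _ ?_)) h1
    rw [← hA1]
    exact subset_iUnion A _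

lemma aux_seq (Y : Set X) (hc : Y.Countable) (hne : Y.Nonempty) :
    ∃ y : ℕ → X, (∀ n, y n ∈ Y) ∧ ∀ z ∈ Y, ∃ k : ℕ → ℕ, (∀ N, N ≤ k N) ∧
      ∀ N, y (2 * k N) = z ∧ y (2 * k N + 1) = z := by
  obtain ⟨u, rfl⟩ := hc.exists_eq_range hne
  refine ⟨fun n => u (Nat.unpair (n / 2)).1, fun n => ⟨_, rfl⟩, ?_⟩
  rintro _ ⟨j, rfl⟩
  refine ⟨fun N => Nat.pair j N, fun N => Nat.right_le_pair j N, fun N => ⟨?_, ?_⟩⟩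
  · have : 2 * Nat.pair j N / 2 = Nat.pair j N := by omega
    simp [this]
  · have : (2 * Nat.pair j N + 1) / 2 = Nat.pair j N := by omega
    simp [this]

noncomputable def sgt (n : ℕ) : ℝ := (-1) ^ n * (((n : ℝ) + 1) / (n + 2))

lemma abs_sq' (n : ℕ) : |sgt n| = ((n : ℝ) + 1) / (n + 2) := by
  unfold sgt
  rw [abs_mul, abs_pow, abs_neg, abs_one, one_pow, one_mul, abs_of_nonneg (by positivity)]

lemma abs_sq_le (n : ℕ) : |sgt n| ≤ 1 := by
  rw [abs_sq', div_le_one (by positivity)]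
  linarith

lemma sq_tendsto : Filter.Tendsto (fun n : ℕ => ((n : ℝ) + 1) / (n + 2)) Filter.atTop (nhds 1) := by
  have h1 : Filter.Tendsto (fun n : ℕ => 1 - 1 / (((n + 1 : ℕ) : ℝ) + 1)) Filter.atTop
      (nhds (1 - 0)) :=
    tendsto_const_nhds.sub ((Filter.tendsto_add_atTop_iff_nat 1).mpr
      (tendsto_one_div_add_atTop_nhds_zero_nat (𝕜 := ℝ)))
  rw [sub_zero] at h1
  refine h1.congr fun n => ?_
  push_cast
  have : (n : ℝ) + 2 ≠ 0 := by positivity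
  have h3 : (n : ℝ) + 1 + 1 ≠ 0 := by positivity
  field_simp
  ring

lemma sq_even (k : ℕ → ℕ) (hk : ∀ N, N ≤ k N) :
    Filter.Tendsto (fun N => sgt (2 * k N)) Filter.atTop (nhds 1) := by
  have h1 : Filter.Tendsto (fun N => 2 * k N) Filter.atTop Filter.atTop :=
    Filter.tendsto_atTop_mono (fun N => by have := hk N; simp only [id]; omega) Filter.tendsto_id
  refine (sq_tendsto.comp h1).congr fun N => ?_
  simp [sgt]

lemma sq_odd (k : ℕ → ℕ) (hk : ∀ N, N ≤ k N) :
    Filter.Tendsto (fun N => sgt (2 * k N + 1)) Filter.atTop (nhds (-1)) := by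
  have h1 : Filter.Tendsto (fun N => 2 * k N + 1) Filter.atTop Filter.atTop :=
    Filter.tendsto_atTop_mono (fun N => by have := hk N; simp only [id]; omega) Filter.tendsto_id
  refine (sq_tendsto.comp h1).neg.congr fun N => ?_
  simp [sgt, pow_succ]

noncomputable def cc (n : ℕ) : ℝ := 1 / 2 + 1 / ((n : ℝ) + 2)

lemma cc_pos (n : ℕ) : 1 / 2 < cc n := by
  unfold cc
  have : 0 < 1 / ((n : ℝ) + 2) := by positivity
  linarith

lemma cc_lt (n : ℕ) : cc (n + 1) / cc n < 1 := by
  rw [div_lt_one (by linarith [cc_pos n])]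
  unfold cc
  have : 1 / (((n + 1 : ℕ) : ℝ) + 2) < 1 / ((n : ℝ) + 2) := by
    apply one_div_lt_one_div_of_lt (by positivity)
    push_cast; linarith
  linarith

lemma far_smul {F : Submodule ℝ X} {r : ℝ} {z : X} (hr : r ≤ 1) (hz : z ∈ farSet F r)
    (w : X) (hw : w ∈ F) (a : ℝ) : r * ‖w‖ ≤ ‖w + a • z‖ := by
  by_cases ha : a = 0
  · subst ha
    rw [zero_smul, add_zero]
    nlinarith [norm_nonneg w]
  · have h1 := hz.2 (a⁻¹ • w) (F.smul_mem _ hw)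
    have h2 : w + a • z = a • (a⁻¹ • w + z) := by
      rw [smul_add, smul_inv_smul₀ ha]
    have h3 : ‖w‖ = |a| * ‖a⁻¹ • w‖ := by
      rw [← Real.norm_eq_abs, ← norm_smul, smul_inv_smul₀ ha]
    rw [h2, norm_smul, Real.norm_eq_abs, h3]
    have := mul_le_mul_of_nonneg_left h1 (abs_nonneg a)
    linarith

theorem exists_nonconvex_non_scd_with_determining_weakly_open
    {X : Type*} [NormedAddCommGroup X] [NormedSpace ℝ X] [CompleteSpace X]
    (h : DaugavetProperty X) :
    ∃ U : Set X, IsBounded U ∧ ¬ Convex ℝ U ∧ ¬ IsSCD U ∧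
      ∃ V : ℕ → Set X, (∀ n, (V n).Nonempty ∧ RelWeaklyOpenIn U (V n)) ∧
        Determining U V := by
  classical
  -- a nonzero vector and a functional
  have hnt : ∃ e₀ : X, e₀ ≠ 0 := by
    by_contra hc
    push Not at hc
    have h0 := h 0 0
    have : (ContinuousLinearMap.id ℝ X + (0 : X →L[ℝ] ℝ).smulRight (0 : X)) = 0 := by
      ext x; rw [hc x]; simp
    rw [this, norm_zero] at h0
    linarith [norm_nonneg ((0 : X →L[ℝ] ℝ).smulRight (0 : X))]
  obtain ⟨e, he⟩ := hnt
  obtain ⟨f, hfe⟩ : ∃ f : X →L[ℝ] ℝ, f e = 1 := by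
    obtain ⟨f, _, hf⟩ := exists_dual_vector ℝ e (norm_ne_zero_iff.mpr he)
    have hn : ‖e‖ ≠ 0 := norm_ne_zero_iff.mpr he
    refine ⟨‖e‖⁻¹ • f, ?_⟩
    have hf' : f e = ‖e‖ := by simpa using hf
    simp [hf', hn]
  let P : X →L[ℝ] X := ContinuousLinearMap.id ℝ X - f.smulRight e
  have hP : ∀ x, P x = x - f x • e := fun x => by simp [P]
  have hPe : P e = 0 := by rw [hP, hfe, one_smul, sub_self]
  have hfP : ∀ x, f (P x) = 0 := fun x => by rw [hP]; simp [hfe]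
  obtain ⟨y₀, hy₀, hPy₀⟩ : ∃ y₀ : X, ‖y₀‖ ≤ 1 ∧ P y₀ ≠ 0 := by
    by_contra hc
    push Not at hc
    have hP0 : P = 0 := by
      ext x
      by_cases hx : x = 0
      · simp [hx]
      have hn : ‖x‖ ≠ 0 := norm_ne_zero_iff.mpr hx
      have h1 := hc (‖x‖⁻¹ • x) (by rw [norm_smul, norm_inv, norm_norm, inv_mul_cancel₀ hn])
      rw [map_smul, smul_eq_zero] at h1
      rcases h1 with h1 | h1
      · exact (inv_ne_zero hn h1).elim
      · simpa using h1
    have h2 := h f (-e)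
    have h3 : ContinuousLinearMap.id ℝ X + f.smulRight (-e) = P := by
      ext x; simp [P, sub_eq_add_neg]
    rw [h3, hP0, norm_zero] at h2
    linarith [norm_nonneg (f.smulRight (-e))]
  let r : ℕ → ℝ := fun n => cc (n + 1) / cc n
  obtain ⟨Y, hy₀Y, hYc, hYb, hYfar⟩ := aux_Y h e r cc_lt y₀ hy₀
  obtain ⟨y, hyY, hyk⟩ := aux_seq Y hYc ⟨y₀, hy₀Y⟩
  let c : ℕ → X := fun n => P (y n) + sgt n • e
  have hfc : ∀ n, f (c n) = sgt n := fun n => by simp [c, hfP, hfe]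
  have hcy : ∀ n, ∃ τ : ℝ, c n = y n + τ • e := fun n =>
    ⟨sgt n - f (y n), by simp only [c, hP, sub_smul]; abel⟩
  refine ⟨Set.range c, ?_, ?_, ?_, fun n => {c n}, fun n => ⟨⟨_, rfl⟩, ?_⟩, ?_⟩
  · rw [isBounded_iff_forall_norm_le]
    refine ⟨‖P‖ + ‖e‖, ?_⟩
    rintro _ ⟨n, rfl⟩
    refine (norm_add_le _ _).trans (add_le_add ?_ ?_)
    · simpa using P.le_opNorm_of_le (hYb _ (hyY n))
    · rw [norm_smul, Real.norm_eq_abs]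
      exact mul_le_of_le_one_left (norm_nonneg _) (abs_sq_le n)
  · intro hconv
    obtain ⟨m, hm⟩ := hconv (mem_range_self 0) (mem_range_self 1)
      (show (0 : ℝ) ≤ 4 / 7 by norm_num) (show (0 : ℝ) ≤ 3 / 7 by norm_num) (by norm_num)
    have h1 := congrArg f hm
    rw [hfc, map_add, map_smul, map_smul, hfc, hfc] at h1
    have h2 : sgt m = 0 := by
      rw [h1]; norm_num [sgt]
    have h3 := abs_sq' m
    rw [h2, abs_zero] at h3
    have : 0 < ((m : ℝ) + 1) / (m + 2) := by positivity
    linarith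
  · rintro ⟨V, hV, hdet⟩
    have key : ∀ (n : ℕ) (t : Finset X), ∃ z x : X, (t : Set X) ⊆ Y →
        z ∈ Y ∧ z ∈ farSet (Submodule.span ℝ (insert e (t : Set X))) (r n) ∧ x ∈ V n ∧
        ∃ τ : ℝ, x = z + τ • e := by
      intro n t
      by_cases ht : (t : Set X) ⊆ Y
      swap
      · exact ⟨0, 0, fun h => (ht h).elim⟩
      obtain ⟨⟨x₀, hx₀⟩, g, _, ε, _, hVn⟩ := hV n
      rw [hVn] at hx₀ ⊢
      obtain ⟨⟨m, rfl⟩, ha⟩ := hx₀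
      unfold sliceSet
      set a := sSup (g '' range c) - ε
      by_contra hcon
      push Not at hcon
      have hall : ∀ z ∈ Y ∩ farSet (Submodule.span ℝ (insert e (t : Set X))) (r n),
          g (P z) ≤ a - |g e| := by
        rintro z ⟨hzY, hzf⟩
        obtain ⟨k, hk, hkz⟩ := hyk z hzY
        have hcl : ∀ i, y i = z → g (P z) + sgt i * g e ≤ a := by
          intro i hi
          by_contra hlt
          push Not at hlt
          obtain ⟨τ, hτ⟩ := hcy i
          obtain ⟨_, hh⟩ := hcon z (c i)
          refine hh hzY hzf ⟨mem_range_self i, ?_⟩ τ (by rw [hτ, hi])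
          simpa [c, hi] using hlt
        have h1 : g (P z) + 1 * g e ≤ a :=
          le_of_tendsto' (((sq_even k hk).mul_const (g e)).const_add (g (P z)))
            fun N => hcl _ (hkz N).1
        have h2 : g (P z) + (-1) * g e ≤ a :=
          le_of_tendsto' (((sq_odd k hk).mul_const (g e)).const_add (g (P z)))
            fun N => hcl _ (hkz N).2
        rcases abs_cases (g e) with ⟨h, _⟩ | ⟨h, _⟩ <;> linarith
      have hsub : closure (convexHull ℝ
          (Y ∩ farSet (Submodule.span ℝ (insert e (t : Set X))) (r n))) ⊆
          {z | (g.comp P) z ≤ a - |g e|} := by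
        refine closure_minimal (convexHull_min hall ?_) ?_
        · exact convex_halfSpace_le (g.comp P).toLinearMap.isLinear _
        · exact isClosed_le (g.comp P).continuous continuous_const
      have h1 : g (P (y m)) ≤ a - |g e| := hsub (hYfar (y m) (hyY m) t ht n)
      have h2 : g (c m) = g (P (y m)) + sgt m * g e := by simp [c]
      have h3 : sgt m * g e ≤ |g e| := by
        refine (le_abs_self _).trans ?_
        rw [abs_mul]
        exact mul_le_of_le_one_left (abs_nonneg _) (abs_sq_le m)
      linarith
    choose zf xf hzx using key
    obtain ⟨T, hT0, hTs⟩ : ∃ T : ℕ → Finset X, T 0 = ∅ ∧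
        ∀ n, T (n + 1) = insert (zf n (insert y₀ (T n))) (T n) :=
      ⟨fun n => Nat.rec ∅ (fun n t => insert (zf n (insert y₀ t)) t) n, rfl, fun n => rfl⟩
    let z : ℕ → X := fun n => zf n (insert y₀ (T n))
    let x : ℕ → X := fun n => xf n (insert y₀ (T n))
    have hTs : ∀ n, T (n + 1) = insert (z n) (T n) := hTs
    have hTY : ∀ n, ((insert y₀ (T n) : Finset X) : Set X) ⊆ Y := by
      intro n
      induction n with
      | zero => simpa [hT0] using hy₀Y
      | succ n ih =>
        have h1 := (hzx n _ ih).1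
        rw [hTs]
        rw [Finset.coe_insert, Set.insert_subset_iff] at ih ⊢
        rw [Finset.coe_insert, Set.insert_subset_iff]
        exact ⟨ih.1, h1, ih.2⟩
    have hz := fun n => hzx n _ (hTY n)
    let G : ℕ → Submodule ℝ X := fun n => Submodule.span ℝ (insert e ((T n : Finset X) : Set X))
    have hGs : ∀ n, G (n + 1) = Submodule.span ℝ (insert (z n) (insert e ((T n : Finset X) : Set X))) := by
      intro n
      simp only [G, hTs, Finset.coe_insert, Set.insert_comm]
    have hGmono : Monotone G := monotone_nat_of_le_succ fun n => by
      rw [hGs]; exact Submodule.span_mono (Set.subset_insert _ _)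
    have heG : ∀ n, e ∈ G n := fun n => Submodule.subset_span (Set.mem_insert _ _)
    have hPpos : 0 < ‖P‖ := by
      rw [norm_pos_iff]; intro h0; apply hPy₀; rw [h0]; simp
    set d := ‖P y₀‖ / ‖P‖ with hd
    have hdpos : 0 < d := div_pos (norm_pos_iff.mpr hPy₀) hPpos
    have hest : ∀ n, ∀ v ∈ G n, cc n * d ≤ ‖y₀ + v‖ := by
      intro n
      induction n with
      | zero =>
        intro v hv
        simp only [G, hT0, Finset.coe_empty] at hv
        obtain ⟨τ, rfl⟩ : ∃ τ : ℝ, τ • e = v := by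
          apply Submodule.mem_span_singleton.mp
          simpa using hv
        have h1 : cc 0 = 1 := by norm_num [cc]
        rw [h1, one_mul, hd, div_le_iff₀ hPpos, mul_comm]
        have h2 := P.le_opNorm (y₀ + τ • e)
        rwa [map_add, map_smul, hPe, smul_zero, add_zero] at h2
      | succ n ih =>
        intro v hv
        rw [hGs, Submodule.mem_span_insert] at hv
        obtain ⟨a, v', hv', rfl⟩ := hv
        have hw : y₀ + v' ∈ Submodule.span ℝ
            (insert e ((insert y₀ (T n) : Finset X) : Set X)) := by
          apply Submodule.add_mem
          · exact Submodule.subset_span (by simp)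
          · refine Submodule.span_mono ?_ hv'
            rw [Finset.coe_insert]
            exact Set.insert_subset_insert (Set.subset_insert _ _)
        have h1 := far_smul (cc_lt n).le (hz n).2.1 _ hw a
        have h2 := ih v' hv'
        have h3 : y₀ + (a • z n + v') = y₀ + v' + a • z n := by abel
        rw [h3]
        refine le_trans ?_ h1
        have hc0 : 0 < cc n := by linarith [cc_pos n]
        have hc1 : 0 < cc (n + 1) := by linarith [cc_pos (n + 1)]
        calc cc (n + 1) * d = cc (n + 1) / cc n * (cc n * d) := by field_simp
          _ ≤ cc (n + 1) / cc n * ‖y₀ + v'‖ := by gcongr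
    have hxG : ∀ n, x n ∈ G (n + 1) := by
      intro n
      obtain ⟨τ, hτ⟩ := (hz n).2.2.2
      change x n = z n + τ • e at hτ
      rw [hτ]
      refine Submodule.add_mem _ ?_ (Submodule.smul_mem _ _ (heG _))
      rw [hGs]
      exact Submodule.subset_span (Set.mem_insert _ _)
    have hU := hdet (Set.range x) fun n => ⟨x n, mem_range_self n, (hz n).2.2.1⟩
    obtain ⟨k, _, hk⟩ := hyk y₀ hy₀Y
    have hmem := hU (mem_range_self (2 * k 0))
    obtain ⟨τ, hτ⟩ := hcy (2 * k 0)
    rw [hτ, (hk 0).1] at hmem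
    have hsub : closure (convexHull ℝ (Set.range x)) ⊆
        {v | d / 2 ≤ ‖y₀ + τ • e - v‖} := by
      refine closure_minimal ?_ (isClosed_le continuous_const (by fun_prop))
      have h1 : convexHull ℝ (Set.range x) ⊆ ((⨆ n, G n : Submodule ℝ X) : Set X) := by
        refine convexHull_min ?_ (Submodule.convex _)
        rintro _ ⟨n, rfl⟩
        exact (le_iSup G (n + 1)) (hxG n)
      intro v hv
      obtain ⟨n, hn⟩ := (Submodule.mem_iSup_of_directed G hGmono.directed_le).mp (h1 hv)
      have h2 := hest n (τ • e - v) (Submodule.sub_mem _ (Submodule.smul_mem _ _ (heG n)) hn)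
      rw [← add_sub_assoc] at h2
      refine le_trans ?_ h2
      have := cc_pos n
      nlinarith
    have := hsub hmem
    simp only [Set.mem_setOf_eq, sub_self, norm_zero] at this
    linarith
  · refine ⟨{w | (n : ℝ) / (n + 1) < |f ((toWeakSpace ℝ X).symm w)| ∧
      |f ((toWeakSpace ℝ X).symm w)| < ((n : ℝ) + 2) / (n + 3)}, ?_, ?_⟩
    · have hcont : Continuous fun w : WeakSpace ℝ X => f ((toWeakSpace ℝ X).symm w) :=
        WeakBilin.eval_continuous (topDualPairing ℝ X).flip f
      exact (isOpen_lt continuous_const hcont.abs).inter (isOpen_lt hcont.abs continuous_const)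
    · ext v
      constructor
      · rintro rfl
        refine ⟨mem_range_self n, ?_⟩
        simp only [Set.mem_preimage, Set.mem_setOf_eq, LinearEquiv.symm_apply_apply, hfc, abs_sq']
        constructor
        · rw [div_lt_div_iff₀ (by positivity) (by positivity)]; nlinarith
        · rw [div_lt_div_iff₀ (by positivity) (by positivity)]; nlinarith
      · rintro ⟨⟨m, rfl⟩, hm⟩
        simp only [Set.mem_preimage, Set.mem_setOf_eq, LinearEquiv.symm_apply_apply, hfc,
          abs_sq'] at hm
        obtain ⟨h1, h2⟩ := hm
        rw [div_lt_div_iff₀ (by positivity) (by positivity)] at h1 h2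
        have h3 : (n : ℝ) < m + 1 := by nlinarith
        have h4 : (m : ℝ) < n + 1 := by nlinarith
        have h5 : n < m + 1 := by exact_mod_cast h3
        have h6 : m < n + 1 := by exact_mod_cast h4
        have : m = n := by omega
        rw [this]; rfl
  · intro B hB
    rintro _ ⟨n, rfl⟩
    obtain ⟨b, hb, hbn⟩ := hB n
    rw [Set.mem_singleton_iff] at hbn
    subst hbn
    exact subset_closure (subset_convexHull ℝ _ hb)
end

section
/- Let X be a real Banach space with the Daugavet property. Then there exist convex, closed, bounded SCD sets A, D ⊂ X such that the Minkowski sum A + D is not SCD. -/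
open Bornology Set Pointwise

variable {X : Type*} [NormedAddCommGroup X] [NormedSpace ℝ X]

lemma dau_norm (h : DaugavetProperty X) : ‖ContinuousLinearMap.id ℝ X‖ = 1 := by
  have := h 0 0
  simpa using this

lemma dau_nontrivial (h : DaugavetProperty X) : Nontrivial X := by
  by_contra hn
  rw [not_nontrivial_iff_subsingleton] at hn
  have h1 := dau_norm h
  have : ContinuousLinearMap.id ℝ X = 0 := by
    ext x; exact Subsingleton.elim _ _
  rw [this] at h1
  simp at h1

/-- reduce a slice of the ball to one given by a normalized functional -/
lemma slice_normalize (h : DaugavetProperty X) (g : X →L[ℝ] ℝ) (c : ℝ)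
    (hne : ∃ x, ‖x‖ ≤ 1 ∧ c < g x) :
    ∃ (g1 : X →L[ℝ] ℝ) (d : ℝ), ‖g1‖ = 1 ∧ d < 1 ∧ ∀ x, d < g1 x → c < g x := by
  have := dau_nontrivial h
  obtain ⟨x, hx, hc⟩ := hne
  by_cases hg : g = 0
  · obtain ⟨y, hy⟩ := exists_ne (0 : X)
    obtain ⟨g1, h1, _⟩ := exists_dual_vector' ℝ y
    refine ⟨g1, 0, h1, by norm_num, fun z _ => ?_⟩
    subst hg
    simpa using hc
  · have hp : 0 < ‖g‖ := norm_pos_iff.2 hg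
    refine ⟨‖g‖⁻¹ • g, c / ‖g‖, ?_, ?_, fun z hz => ?_⟩
    · rw [norm_smul, norm_inv, norm_norm, inv_mul_cancel₀ hp.ne']
    · rw [div_lt_one hp]
      calc c < g x := hc
        _ ≤ ‖g x‖ := Real.le_norm_self _
        _ ≤ ‖g‖ * ‖x‖ := g.le_opNorm x
        _ ≤ ‖g‖ * 1 := by gcongr
        _ = ‖g‖ := mul_one _
    · have : c / ‖g‖ < ‖g‖⁻¹ * g z := by simpa using hz
      rw [div_eq_inv_mul] at this
      exact lt_of_mul_lt_mul_left this (by positivity)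

lemma slice_one (h : DaugavetProperty X) (g : X →L[ℝ] ℝ) (c : ℝ)
    (hne : ∃ x, ‖x‖ ≤ 1 ∧ c < g x) (u : X) (hu : ‖u‖ = 1) (η : ℝ) (hη : 0 < η) :
    ∃ (g' : X →L[ℝ] ℝ) (c' : ℝ), (∃ x, ‖x‖ ≤ 1 ∧ c' < g' x) ∧
      ∀ x, ‖x‖ ≤ 1 → c' < g' x → c < g x ∧ 2 - η < ‖x + u‖ := by
  obtain ⟨g1, d, hg1, hd, hsub⟩ := slice_normalize h g c hne
  set e : ℝ := min (η / 3) (min ((1 - d) / 2) (1 / 2)) with he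
  have e0 : 0 < e := by
    refine lt_min (by positivity) (lt_min (by linarith) (by norm_num))
  have e1 : e ≤ η / 3 := min_le_left _ _
  have e2 : e ≤ (1 - d) / 2 := (min_le_right _ _).trans (min_le_left _ _)
  have e3 : e ≤ 1 / 2 := (min_le_right _ _).trans (min_le_right _ _)
  have hT := h g1 u
  rw [ContinuousLinearMap.norm_smulRight_apply, hg1, hu] at hT
  obtain ⟨x, hx, hxx⟩ := ContinuousLinearMap.exists_lt_apply_of_lt_opNorm
    (ContinuousLinearMap.id ℝ X + g1.smulRight u) (r := 2 - e) (by rw [hT]; linarith)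
  have hxx' : 2 - e < ‖x + g1 x • u‖ := by simpa using hxx
  -- sign normalization
  obtain ⟨x, hx, hpos, hxx⟩ : ∃ x : X, ‖x‖ < 1 ∧ 0 ≤ g1 x ∧ 2 - e < ‖x + g1 x • u‖ := by
    rcases le_total 0 (g1 x) with h0 | h0
    · exact ⟨x, hx, h0, hxx'⟩
    · refine ⟨-x, by simpa using hx, by simpa using h0, ?_⟩
      have : -x + g1 (-x) • u = -(x + g1 x • u) := by
        rw [map_neg, neg_smul]; abel
      rwa [this, norm_neg]
  have := dau_nontrivial h
  obtain ⟨k, hk, hkx⟩ := exists_dual_vector' ℝ (x + g1 x • u)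
  have hkx' : k x + g1 x * k u = ‖x + g1 x • u‖ := by
    rw [← smul_eq_mul, ← map_smul, ← map_add]; exact hkx
  have bd : ∀ (f : X →L[ℝ] ℝ), ‖f‖ = 1 → ∀ z : X, ‖z‖ ≤ 1 → f z ≤ 1 := by
    intro f hf z hz
    calc f z ≤ ‖f z‖ := Real.le_norm_self _
      _ ≤ ‖f‖ * ‖z‖ := f.le_opNorm z
      _ ≤ 1 := by rw [hf, one_mul]; exact hz
  have k1 := bd k hk x hx.le
  have k2 := bd k hk u hu.le
  have k3 := bd g1 hg1 x hx.le
  have k4 : 1 - e < g1 x := by nlinarith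
  have k5 : 1 - e < k u := by
    by_contra hcon
    push Not at hcon
    nlinarith
  have k6 : 1 - e < k x := by nlinarith
  refine ⟨k + g1, 2 - 2 * e, ⟨x, hx.le, ?_⟩, fun z hz hkz => ?_⟩
  · simp only [_root_.add_apply]; linarith
  · simp only [_root_.add_apply] at hkz
    have := bd k hk z hz
    have := bd g1 hg1 z hz
    refine ⟨hsub z (by linarith), ?_⟩
    have : k (z + u) ≤ ‖z + u‖ := by
      calc k (z + u) ≤ ‖k (z + u)‖ := Real.le_norm_self _
        _ ≤ ‖k‖ * ‖z + u‖ := k.le_opNorm _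
        _ = ‖z + u‖ := by rw [hk, one_mul]
    rw [map_add] at this
    linarith

lemma slice_finset (h : DaugavetProperty X) (η : ℝ) (hη : 0 < η) (t : Finset X) :
    ∀ (g : X →L[ℝ] ℝ) (c : ℝ), (∃ x, ‖x‖ ≤ 1 ∧ c < g x) →
    ∃ z, ‖z‖ ≤ 1 ∧ c < g z ∧ ∀ u ∈ t, ‖u‖ = 1 → 2 - η < ‖z + u‖ := by
  classical
  induction t using Finset.induction_on with
  | empty =>
    rintro g c ⟨x, hx, hc⟩
    exact ⟨x, hx, hc, by simp⟩
  | insert a s ha ih =>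
    intro g c hne
    by_cases h1 : ‖a‖ = 1
    · obtain ⟨g', c', hne', hs⟩ := slice_one h g c hne a h1 η hη
      obtain ⟨z, hz, hcz, hzs⟩ := ih g' c' hne'
      refine ⟨z, hz, (hs z hz hcz).1, fun u hu hu1 => ?_⟩
      rcases Finset.mem_insert.1 hu with rfl | hu
      · exact (hs z hz hcz).2
      · exact hzs u hu hu1
    · obtain ⟨z, hz, hcz, hzs⟩ := ih g c hne
      refine ⟨z, hz, hcz, fun u hu hu1 => ?_⟩
      rcases Finset.mem_insert.1 hu with rfl | hu
      · exact absurd hu1 h1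
      · exact hzs u hu hu1

/-- points of the ball almost orthogonal to the span of `t` -/
def FarSet (t : Set X) (θ : ℝ) : Set X :=
  {z | ‖z‖ ≤ 1 ∧ ∀ u ∈ Submodule.span ℝ t, ∀ l : ℝ, θ * ‖u‖ ≤ ‖u + l • z‖}

lemma far_aux (u z : X) (hu : ‖u‖ = 1) (hz : ‖z‖ ≤ 1) (η : ℝ) (h2 : 2 - η ≤ ‖z + u‖) (hη : η ≤ 1)
    (a b : ℝ) (ha : 0 ≤ a) (hb : 0 ≤ b) : (1 - η) * a ≤ ‖a • u + b • z‖ := by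
  rcases le_total b a with hab | hab
  · have e : a • (z + u) = (a • u + b • z) + (a - b) • z := by
      module
    have h3 : ‖a • (z + u)‖ ≤ ‖a • u + b • z‖ + ‖(a - b) • z‖ := by
      rw [e]; exact norm_add_le _ _
    rw [norm_smul, norm_smul, Real.norm_of_nonneg ha, Real.norm_of_nonneg (sub_nonneg.2 hab)] at h3
    have h4 : (a - b) * ‖z‖ ≤ (a - b) * 1 := mul_le_mul_of_nonneg_left hz (by linarith)
    have h5 : a * (2 - η) ≤ a * ‖z + u‖ := mul_le_mul_of_nonneg_left h2 ha
    nlinarith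
  · have e : b • (z + u) = (a • u + b • z) + (b - a) • u := by
      module
    have h3 : ‖b • (z + u)‖ ≤ ‖a • u + b • z‖ + ‖(b - a) • u‖ := by
      rw [e]; exact norm_add_le _ _
    rw [norm_smul, norm_smul, Real.norm_of_nonneg hb, Real.norm_of_nonneg (sub_nonneg.2 hab), hu] at h3
    have h5 : b * (2 - η) ≤ b * ‖z + u‖ := mul_le_mul_of_nonneg_left h2 hb
    nlinarith

lemma slice_far (h : DaugavetProperty X) (t : Set X) (ht : t.Finite) (θ : ℝ) (hθ : θ < 1)
    (g : X →L[ℝ] ℝ) (c : ℝ) (hne : ∃ x, ‖x‖ ≤ 1 ∧ c < g x) :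
    ∃ z ∈ FarSet t θ, c < g z := by
  set η : ℝ := min ((1 - θ) / 2) (1 / 2) with hη
  have η0 : 0 < η := lt_min (by linarith) (by norm_num)
  have η1 : η ≤ (1 - θ) / 2 := min_le_left _ _
  have η2 : η ≤ 1 / 2 := min_le_right _ _
  have : FiniteDimensional ℝ (Submodule.span ℝ t) := FiniteDimensional.span_of_finite ℝ ht
  have hcomp : IsCompact (Metric.sphere (0 : Submodule.span ℝ t) 1) := isCompact_sphere _ _
  obtain ⟨s, hs, hsf, hcov⟩ := hcomp.finite_cover_balls η0
  obtain ⟨z, hz, hcz, hzs⟩ := slice_finset h η η0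
    ((hsf.image (fun v : Submodule.span ℝ t => (v : X))).toFinset) g c hne
  have key : ∀ u ∈ Submodule.span ℝ t, ‖u‖ = 1 → 2 - 2 * η ≤ ‖z + u‖ := by
    intro u hu hu1
    have : (⟨u, hu⟩ : Submodule.span ℝ t) ∈ Metric.sphere (0 : Submodule.span ℝ t) 1 := by
      simpa using hu1
    have := hcov this
    simp only [mem_iUnion, Metric.mem_ball] at this
    obtain ⟨v, hv, hd⟩ := this
    have hv1 : ‖(v : X)‖ = 1 := by simpa using hs hv
    have h1 := hzs (v : X) (by simpa using hv) hv1
    have hd' : ‖u - (v : X)‖ < η := by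
      rw [← dist_eq_norm]; exact hd
    have : ‖z + (v : X)‖ ≤ ‖z + u‖ + ‖u - v‖ := by
      have : z + (v : X) = (z + u) - (u - v) := by abel
      rw [this]; exact norm_sub_le _ _
    linarith
  refine ⟨z, ⟨hz, fun u hu l => ?_⟩, hcz⟩
  by_cases hu0 : u = 0
  · simp [hu0]
  have hup : 0 < ‖u‖ := norm_pos_iff.2 hu0
  have main : ∀ w ∈ Submodule.span ℝ t, w ≠ 0 → ∀ b : ℝ, 0 ≤ b → θ * ‖w‖ ≤ ‖w + b • z‖ := by
    intro w hw hw0 b hb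
    have hwp : 0 < ‖w‖ := norm_pos_iff.2 hw0
    have hn : ‖(‖w‖⁻¹ • w)‖ = 1 := by
      rw [norm_smul, norm_inv, norm_norm, inv_mul_cancel₀ hwp.ne']
    have h1 := key (‖w‖⁻¹ • w) (Submodule.smul_mem _ _ hw) hn
    have h2 := far_aux (‖w‖⁻¹ • w) z hn hz (2 * η) h1 (by linarith) ‖w‖ b hwp.le hb
    rw [smul_smul, mul_inv_cancel₀ hwp.ne', one_smul] at h2
    nlinarith
  rcases le_total 0 l with hl | hl
  · exact main u hu hu0 l hl
  · have := main (-u) (Submodule.neg_mem _ hu) (neg_ne_zero.2 hu0) (-l) (by linarith)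
    have e : -u + (-l) • z = -(u + l • z) := by module
    rwa [e, norm_neg, norm_neg] at this

lemma far_hull (h : DaugavetProperty X) (t : Set X) (ht : t.Finite) (θ : ℝ) (hθ : θ < 1)
    (x : X) (hx : ‖x‖ ≤ 1) : x ∈ closure (convexHull ℝ (FarSet t θ)) := by
  by_contra hcon
  obtain ⟨f, s, hs, hsx⟩ := geometric_hahn_banach_closed_point
    ((convex_convexHull ℝ (FarSet t θ)).closure) isClosed_closure hcon
  obtain ⟨z, hz, hsz⟩ := slice_far h t ht θ hθ f s ⟨x, hx, hsx⟩
  exact lt_asymm hsz (hs z (subset_closure (subset_convexHull ℝ _ hz)))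

lemma far_countable (h : DaugavetProperty X) (t : Set X) (ht : t.Finite) (θ : ℝ) (hθ : θ < 1)
    (x : X) (hx : ‖x‖ ≤ 1) :
    ∃ W : Set X, W.Countable ∧ W ⊆ FarSet t θ ∧ x ∈ closure (convexHull ℝ W) := by
  obtain ⟨u, hu, hlim⟩ := mem_closure_iff_seq_limit.1 (far_hull h t ht θ hθ x hx)
  have : ∀ n, ∃ F : Finset X, (F : Set X) ⊆ FarSet t θ ∧ u n ∈ convexHull ℝ (F : Set X) := by
    intro n
    have := hu n
    rw [convexHull_eq_union_convexHull_finite_subsets] at this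
    simpa using this
  choose F hF huF using this
  refine ⟨⋃ n, (F n : Set X), countable_iUnion fun n => (F n).countable_toSet,
    iUnion_subset hF, ?_⟩
  refine mem_closure_of_tendsto hlim (Filter.Eventually.of_forall fun n => ?_)
  exact convexHull_mono (subset_iUnion (fun n => (F n : Set X)) n) (huF n)

lemma dau_not_fd (h : DaugavetProperty X) : ¬ FiniteDimensional ℝ X := by
  intro hfd
  have := dau_nontrivial h
  obtain ⟨s, hs⟩ := hfd.fg_top
  obtain ⟨y, hy⟩ := exists_ne (0 : X)
  obtain ⟨g, hg, _⟩ := exists_dual_vector' ℝ y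
  obtain ⟨x, hx, hgx⟩ := ContinuousLinearMap.exists_lt_apply_of_lt_opNorm g (r := 1/2)
    (by rw [hg]; norm_num)
  have hne : ∃ x, ‖x‖ ≤ 1 ∧ (0:ℝ) < g x := by
    rcases lt_or_ge 0 (g x) with h0 | h0
    · exact ⟨x, hx.le, h0⟩
    · refine ⟨-x, by simpa using hx.le, ?_⟩
      rw [Real.norm_of_nonpos h0] at hgx
      rw [map_neg]; linarith
  obtain ⟨z, hz, hgz⟩ := slice_far h (s : Set X) s.finite_toSet (1/2) (by norm_num) g 0 hne
  have := hz.2 z (by rw [hs]; trivial) (-1)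
  have e : z + (-1 : ℝ) • z = 0 := by module
  rw [e, norm_zero] at this
  have : z = 0 := by
    rw [← norm_le_zero_iff]; linarith
  simp [this] at hgz

lemma exists_biorth_s7 (h : DaugavetProperty X) :
    ∃ (e : Fin 4 → X) (α : Fin 4 → X →L[ℝ] ℝ), ∀ i j, α i (e j) = if i = j then 1 else 0 := by
  have hr : ((4 : ℕ) : Cardinal) ≤ Module.rank ℝ X := by
    have : Cardinal.aleph0 ≤ Module.rank ℝ X := by
      by_contra hc
      push Not at hc
      exact dau_not_fd h (Module.rank_lt_aleph0_iff.1 hc)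
    exact (Cardinal.natCast_lt_aleph0).le.trans this
  obtain ⟨e, he⟩ := exists_linearIndependent_of_le_rank hr
  have hinj : Function.Injective (Fintype.linearCombination ℝ e) :=
    linearIndependent_iff_injective_fintypeLinearCombination.1 he
  have hsur := SeparatingDual.dualMap_surjective_iff.2 hinj
  choose α hα using fun i : Fin 4 => hsur (LinearMap.proj i)
  refine ⟨e, α, fun i j => ?_⟩
  have := LinearMap.congr_fun (hα i) (Pi.single j 1)
  simpa [Fintype.linearCombination_apply_single, Pi.single_apply] using this

/-- the countable self-reproducing set -/
lemma exists_net (h : DaugavetProperty X) (E : Set X) (hE : E.Finite) (z0 : X) (hz0 : ‖z0‖ ≤ 1) :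
    ∃ N : Set X, N.Countable ∧ z0 ∈ N ∧ (∀ x ∈ N, ‖x‖ ≤ 1) ∧
      ∀ x ∈ N, ∀ t ⊆ N, t.Finite → ∀ θ < (1 : ℝ),
        x ∈ closure (convexHull ℝ (N ∩ FarSet (E ∪ t) θ)) := by
  classical
  have hW : ∀ (x : X) (t : Set X) (m : ℕ), ∃ W : Set X, W.Countable ∧ (∀ y ∈ W, ‖y‖ ≤ 1) ∧
      (‖x‖ ≤ 1 → t.Finite → W ⊆ FarSet (E ∪ t) (1 - 1 / ((m : ℝ) + 1)) ∧
        x ∈ closure (convexHull ℝ W)) := by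
    intro x t m
    by_cases hc : ‖x‖ ≤ 1 ∧ t.Finite
    · obtain ⟨W, h1, h2, h3⟩ := far_countable h (E ∪ t) (hE.union hc.2) (1 - 1 / ((m : ℝ) + 1))
        (by have : 0 < 1 / ((m : ℝ) + 1) := by positivity
            linarith) x hc.1
      exact ⟨W, h1, fun y hy => (h2 hy).1, fun _ _ => ⟨h2, h3⟩⟩
    · exact ⟨∅, countable_empty, by simp, fun h1 h2 => absurd ⟨h1, h2⟩ hc⟩
  choose W hWc hWb hWf using hW
  let step : Set X → Set X := fun S =>
    S ∪ ⋃ x ∈ S, ⋃ t ∈ {t : Set X | t.Finite ∧ t ⊆ S}, ⋃ m : ℕ, W x t m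
  let Nk : ℕ → Set X := fun k => Nat.rec {z0} (fun _ S => step S) k
  have hsucc : ∀ k, Nk (k + 1) = step (Nk k) := fun k => rfl
  have hmono : Monotone Nk := monotone_nat_of_le_succ fun k => by
    rw [hsucc]; exact subset_union_left
  have hcount : ∀ k, (Nk k).Countable := by
    intro k
    induction k with
    | zero => exact countable_singleton z0
    | succ k ih =>
      rw [hsucc]
      refine ih.union (ih.biUnion fun x _ => ?_)
      exact (countable_ofPred_finite_subset ih).biUnion fun t _ => countable_iUnion fun m => hWc x t m
  have hb : ∀ k, ∀ x ∈ Nk k, ‖x‖ ≤ 1 := by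
    intro k
    induction k with
    | zero =>
      intro x hx
      have : x = z0 := hx
      rw [this]; exact hz0
    | succ k ih =>
      intro x hx
      rw [hsucc] at hx
      rcases hx with hx | hx
      · exact ih x hx
      · simp only [mem_iUnion] at hx
        obtain ⟨y, _, t, _, m, hm⟩ := hx
        exact hWb y t m x hm
  refine ⟨⋃ k, Nk k, countable_iUnion hcount, mem_iUnion.2 ⟨0, rfl⟩, ?_, ?_⟩
  · intro x hx
    obtain ⟨k, hk⟩ := mem_iUnion.1 hx
    exact hb k x hk
  · intro x hx t ht htf θ hθ
    obtain ⟨k, hk⟩ := mem_iUnion.1 hx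
    obtain ⟨k', hk'⟩ : ∃ k', t ⊆ Nk k' :=
      by
      have hch : ∀ y : X, ∃ k, y ∈ t → y ∈ Nk k := by
        intro y
        by_cases hy : y ∈ t
        · obtain ⟨k, hk⟩ := mem_iUnion.1 (ht hy)
          exact ⟨k, fun _ => hk⟩
        · exact ⟨0, fun h => absurd h hy⟩
      choose κ hκ using hch
      obtain ⟨b, hb⟩ := (htf.image κ).bddAbove
      exact ⟨b, fun y hy => hmono (hb (mem_image_of_mem κ hy)) (hκ y hy)⟩
    obtain ⟨m, hm⟩ := exists_nat_one_div_lt (sub_pos.2 hθ)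
    set K := max k k'
    have hxK : x ∈ Nk K := hmono (le_max_left _ _) hk
    have htK : t ⊆ Nk K := hk'.trans (hmono (le_max_right _ _))
    obtain ⟨h1, h2⟩ := hWf x t m (hb k x hk) htf
    refine closure_mono (convexHull_mono ?_) h2
    intro y hy
    refine ⟨mem_iUnion.2 ⟨K + 1, ?_⟩, (h1 hy).1, fun u hu l => ?_⟩
    · rw [hsucc]
      refine Or.inr ?_
      simp only [mem_iUnion]
      exact ⟨x, hxK, t, ⟨htf, htK⟩, m, hy⟩
    · refine le_trans ?_ ((h1 hy).2 u hu l)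
      exact mul_le_mul_of_nonneg_right (by linarith) (norm_nonneg _)

lemma exists_index (ν : ℕ → X) :
    ∃ (x : ℕ → X) (a : ℕ → ℝ), Function.Injective a ∧ (∀ n, |a n| ≤ 2) ∧
      (∀ n, x n ∈ range ν) ∧
      ∀ n m (η : ℝ), 0 < η → ∃ k, n ≤ k ∧ x k = ν m ∧ |a k - a n| < η := by
  obtain ⟨e⟩ : Nonempty (ℕ ≃ ℕ × ℚ) := ⟨(Denumerable.eqv (ℕ × ℚ)).symm⟩
  refine ⟨fun n => ν (e n).1, fun n => Real.arctan ((e n).2 + (e n).1 * √2), ?_, ?_,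
    fun n => mem_range_self _, ?_⟩
  · intro i j hij
    have h1 : ((e i).2 : ℝ) + (e i).1 * √2 = (e j).2 + (e j).1 * √2 := Real.arctan_injective hij
    have h2 : (e i).1 = (e j).1 := by
      by_contra hne
      have hne' : ((e i).1 : ℚ) - (e j).1 ≠ 0 := by
        rw [sub_ne_zero]; exact_mod_cast hne
      have hirr : Irrational ((((e i).1 : ℚ) - (e j).1 : ℚ) * √2) :=
        irrational_sqrt_two.ratCast_mul hne'
      apply hirr
      refine ⟨(e j).2 - (e i).2, ?_⟩
      push_cast
      linarith
    have h3 : (e i).2 = (e j).2 := by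
      rw [h2] at h1
      exact_mod_cast add_right_cancel h1
    exact e.injective (Prod.ext h2 h3)
  · intro n
    have h1 := Real.arctan_lt_pi_div_two ((e n).2 + (e n).1 * √2)
    have h2 := Real.neg_pi_div_two_lt_arctan ((e n).2 + (e n).1 * √2)
    have := Real.pi_le_four
    rw [abs_le]; constructor <;> linarith
  · intro n m η hη
    set r : ℝ := (e n).2 + (e n).1 * √2
    obtain ⟨d, hd, hcont⟩ := Metric.continuousAt_iff.1 (Real.continuous_arctan.continuousAt (x := r)) η hη
    have hinf : (Set.Infinite {q : ℚ | r - m * √2 < q ∧ (q : ℝ) < r - m * √2 + d}) := by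
      intro hfin
      obtain ⟨q0, hq1, hq2⟩ := exists_rat_btwn (show r - m * √2 < r - m * √2 + d by linarith)
      obtain ⟨q, hq⟩ := hfin.exists_minimal ⟨q0, hq1, hq2⟩
      obtain ⟨q', h1, h2⟩ := exists_rat_btwn hq.1.1
      have : q ≤ q' := hq.2 ⟨h1, h2.trans hq.1.2⟩ (by exact_mod_cast h2.le)
      have : (q : ℝ) ≤ q' := by exact_mod_cast this
      linarith
    have hinf2 : (Set.Infinite ((fun q : ℚ => e.symm (m, q)) ''
        {q : ℚ | r - m * √2 < q ∧ (q : ℝ) < r - m * √2 + d})) := by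
      refine hinf.image (fun p _ q _ hpq => ?_)
      have := e.symm.injective hpq
      exact (Prod.ext_iff.1 this).2
    obtain ⟨k, ⟨q, hq, rfl⟩, hk⟩ := hinf2.exists_gt n
    refine ⟨e.symm (m, q), hk.le, by simp, ?_⟩
    have := hcont (x := q + m * √2) (by rw [Real.dist_eq, abs_lt]; constructor <;> linarith [hq.1, hq.2])
    rw [Real.dist_eq] at this
    simpa using this

lemma scd_of_exposed_s7 (y : ℕ → X) (M : ℝ) (hM : ∀ n, ‖y n‖ ≤ M)
    (hexp : ∀ n, ∃ f : X →L[ℝ] ℝ, ∃ κ : ℝ, 0 < κ ∧ ∀ k, k ≠ n → f (y k) ≤ f (y n) - κ) :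
    IsSCD (closure (convexHull ℝ (range y))) := by
  set A := closure (convexHull ℝ (range y)) with hA
  choose f κ hκ hf using hexp
  have hyA : ∀ n, y n ∈ A := fun n => subset_closure (subset_convexHull ℝ _ (mem_range_self n))
  have hM0 : 0 ≤ M := (norm_nonneg _).trans (hM 0)
  have hbound : ∀ n, ∀ b ∈ A, ‖b - y n‖ ≤ (2 * M / κ n) * (f n (y n) - f n b) := by
    intro n
    have hsub : A ⊆ {b | ‖b - y n‖ ≤ (2 * M / κ n) * (f n (y n) - f n b)} := by
      refine closure_minimal (convexHull_min ?_ ?_) ?_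
      · rintro _ ⟨k, rfl⟩
        simp only [mem_ofPred_eq]
        by_cases hk : k = n
        · subst hk; simp
        · have h1 := hf n k hk
          have h2 : ‖y k - y n‖ ≤ 2 * M := by
            have := norm_sub_le (y k) (y n)
            linarith [hM k, hM n]
          calc ‖y k - y n‖ ≤ 2 * M := h2
            _ = (2 * M / κ n) * κ n := by field_simp [(hκ n).ne']
            _ ≤ _ := by
              apply mul_le_mul_of_nonneg_left (by linarith)
              exact div_nonneg (by linarith) (hκ n).le
      · intro p hp q hq s t hs ht hst
        simp only [mem_ofPred_eq] at hp hq ⊢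
        have e : s • p + t • q - y n = s • (p - y n) + t • (q - y n) := by
          have : y n = (s + t) • y n := by rw [hst, one_smul]
          nth_rewrite 1 [this]
          module
        calc ‖s • p + t • q - y n‖ ≤ s * ‖p - y n‖ + t * ‖q - y n‖ := by
              rw [e]
              refine (norm_add_le _ _).trans ?_
              rw [norm_smul, norm_smul, Real.norm_of_nonneg hs, Real.norm_of_nonneg ht]
          _ ≤ s * ((2 * M / κ n) * (f n (y n) - f n p)) + t * ((2 * M / κ n) * (f n (y n) - f n q)) := by
              gcongr
          _ = (2 * M / κ n) * ((s + t) * f n (y n) - f n (s • p + t • q)) := by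
              rw [map_add, map_smul, map_smul, smul_eq_mul, smul_eq_mul]; ring
          _ = _ := by rw [hst, one_mul]
      · exact isClosed_le (by fun_prop) (by fun_prop)
    exact fun b hb => hsub hb
  have hle : ∀ n, ∀ b ∈ A, f n b ≤ f n (y n) := by
    intro n
    have hsub : A ⊆ {b | f n b ≤ f n (y n)} := by
      refine closure_minimal (convexHull_min ?_ ?_) ?_
      · rintro _ ⟨k, rfl⟩
        simp only [mem_ofPred_eq]
        by_cases hk : k = n
        · subst hk; simp
        · have h1 := hf n k hk
          linarith [hκ n]
      · exact convex_halfSpace_le (f n).isLinear _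
      · exact isClosed_le (by fun_prop) (by fun_prop)
    exact fun b hb => hsub hb
  have hsup : ∀ n, sSup (f n '' A) = f n (y n) := by
    intro n
    refine IsGreatest.csSup_eq ⟨mem_image_of_mem _ (hyA n), ?_⟩
    rintro _ ⟨b, hb, rfl⟩
    exact hle n b hb
  refine ⟨fun i => sliceSet A (f i.unpair.1) (1 / ((i.unpair.2 : ℝ) + 1)), fun i => ⟨?_, f i.unpair.1, ?_,
    1 / ((i.unpair.2 : ℝ) + 1), by positivity, rfl⟩, ?_⟩
  · refine ⟨y i.unpair.1, hyA _, ?_⟩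
    rw [hsup]
    have : 0 < 1 / ((i.unpair.2 : ℝ) + 1) := by positivity
    linarith
  · intro h0
    have := hf i.unpair.1 (i.unpair.1 + 1) (by omega)
    rw [h0] at this
    have h1 := hκ i.unpair.1
    simp at this
    linarith
  · intro B hB
    have hyB : ∀ n, y n ∈ closure B := by
      intro n
      rw [Metric.mem_closure_iff]
      intro ε hε
      obtain ⟨m, hm⟩ := exists_nat_one_div_lt (show 0 < ε / (2 * M / κ n + 1) by
        have : 0 ≤ 2 * M / κ n := div_nonneg (by linarith) (hκ n).le
        positivity)
      obtain ⟨b, hbB, hbA, hb⟩ := hB (Nat.pair n m)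
      simp only [Nat.unpair_pair] at hbA hb
      rw [hsup] at hb
      refine ⟨b, hbB, ?_⟩
      rw [dist_comm, dist_eq_norm]
      have h0 : 0 ≤ 2 * M / κ n := div_nonneg (by linarith) (hκ n).le
      have h1 := hbound n b hbA
      rw [lt_div_iff₀ (by positivity)] at hm
      have h2 := hle n b hbA
      nlinarith
    have hcl : closure B ⊆ closure (convexHull ℝ B) := closure_mono (subset_convexHull ℝ B)
    refine closure_minimal (convexHull_min ?_ (convex_convexHull ℝ B).closure) isClosed_closure
    rintro _ ⟨n, rfl⟩
    exact hcl (hyB n)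

lemma seq_choice (N : Set X) (P : ℕ → Finset X → X → Prop)
    (hP : ∀ n (t : Finset X), (t : Set X) ⊆ N → ∃ z ∈ N, P n t z) :
    ∃ (z : ℕ → X) (T : ℕ → Finset X), (∀ n, (T n : Set X) = z '' Iio n) ∧
      ∀ n, z n ∈ N ∧ P n (T n) (z n) := by
  classical
  have hP' : ∀ n (t : Finset X), ∃ z, (t : Set X) ⊆ N → z ∈ N ∧ P n t z := by
    intro n t
    by_cases ht : (t : Set X) ⊆ N
    · obtain ⟨z, hz⟩ := hP n t ht
      exact ⟨z, fun _ => hz⟩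
    · exact ⟨0, fun h => absurd h ht⟩
  choose g hg using hP'
  obtain ⟨T, hT0, hs⟩ : ∃ T : ℕ → Finset X, T 0 = ∅ ∧
      ∀ n, T (n + 1) = insert (g n (T n)) (T n) :=
    ⟨fun n => Nat.rec (motive := fun _ => Finset X) ∅ (fun k S => insert (g k S) S) n,
      rfl, fun n => rfl⟩
  have hN : ∀ n, (T n : Set X) ⊆ N := by
    intro n
    induction n with
    | zero => simp [hT0]
    | succ n ih =>
      rw [hs, Finset.coe_insert]
      exact insert_subset (hg n _ ih).1 ih
  refine ⟨fun n => g n (T n), T, fun n => ?_, fun n => hg n _ (hN n)⟩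
  induction n with
  | zero => simp [hT0]
  | succ n ih =>
    rw [hs, Finset.coe_insert, ih]
    have : Iio (n + 1) = insert n (Iio n) := by
      ext i; simp only [mem_Iio, mem_insert_iff]; omega
    rw [this, image_insert_eq]

lemma far_growth (E : Set X) (z : ℕ → X)
    (hz : ∀ n : ℕ, z n ∈ FarSet (E ∪ z '' Iio n)
      ((((n : ℝ) + 1) * (n + 3)) / ((n + 2) * (n + 2)))) (n : ℕ) :
    ∀ u ∈ Submodule.span ℝ E, ∀ v ∈ Submodule.span ℝ (z '' Iio n),
      (((n : ℝ) + 2) / (2 * (n + 1))) * ‖u‖ ≤ ‖u + v‖ := by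
  induction n with
  | zero =>
    intro u hu v hv
    have : v = 0 := by simpa using hv
    subst this
    simp
  | succ n ih =>
    intro u hu v hv
    have hI : Iio (n + 1) = insert n (Iio n) := by
      ext i; simp only [mem_Iio, mem_insert_iff]; omega
    rw [hI, image_insert_eq, Submodule.mem_span_insert] at hv
    obtain ⟨l, v', hv', rfl⟩ := hv
    have h1 := ih u hu v' hv'
    have hmem : u + v' ∈ Submodule.span ℝ (E ∪ z '' Iio n) :=
      Submodule.add_mem _ (Submodule.span_mono subset_union_left hu)
        (Submodule.span_mono subset_union_right hv')
    have h2 := (hz n).2 (u + v') hmem l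
    have e : u + (l • z n + v') = u + v' + l • z n := by abel
    rw [e]
    refine le_trans ?_ h2
    calc (((n + 1 : ℕ) : ℝ) + 2) / (2 * (((n + 1 : ℕ) : ℝ) + 1)) * ‖u‖
        = ((((n : ℝ) + 1) * (n + 3)) / ((n + 2) * (n + 2))) *
          ((((n : ℝ) + 2) / (2 * (n + 1))) * ‖u‖) := by
          push_cast
          field_simp
          ring
      _ ≤ _ := by gcongr

lemma far_sep (E G : Set X) (z : ℕ → X)
    (hz : ∀ n : ℕ, z n ∈ FarSet (E ∪ z '' Iio n)
      ((((n : ℝ) + 1) * (n + 3)) / ((n + 2) * (n + 2))))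
    (z0 : X) (hz0 : z0 ∈ E) (hG : G ⊆ E) (β : X →L[ℝ] ℝ) (h1 : β z0 ≠ 0) (h2 : ∀ g ∈ G, β g = 0) :
    ∃ φ : X →L[ℝ] ℝ, φ z0 = 1 ∧ (∀ g ∈ G, φ g = 0) ∧ ∀ n, φ (z n) = 0 := by
  have hβ : 0 < ‖β‖ := norm_pos_iff.2 (by rintro rfl; simp at h1)
  have hrange : ∀ v ∈ Submodule.span ℝ (range z), ∃ n, v ∈ Submodule.span ℝ (z '' Iio n) := by
    intro v hv
    have hmono : ∀ {m n : ℕ}, m ≤ n →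
        Submodule.span ℝ (z '' Iio m) ≤ Submodule.span ℝ (z '' Iio n) := fun h =>
      Submodule.span_mono (image_mono (Iio_subset_Iio h))
    induction hv using Submodule.span_induction with
    | mem x hx =>
      obtain ⟨n, rfl⟩ := hx
      exact ⟨n + 1, Submodule.subset_span (mem_image_of_mem _ (by simp))⟩
    | zero => exact ⟨0, Submodule.zero_mem _⟩
    | add x y _ _ hx hy =>
      obtain ⟨m, hm⟩ := hx
      obtain ⟨n, hn⟩ := hy
      exact ⟨max m n, Submodule.add_mem _ (hmono (le_max_left _ _) hm)
        (hmono (le_max_right _ _) hn)⟩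
    | smul c x _ hx =>
      obtain ⟨m, hm⟩ := hx
      exact ⟨m, Submodule.smul_mem _ _ hm⟩
  set F : Submodule ℝ X := Submodule.span ℝ (G ∪ range z) with hF
  have hdist : ∀ w ∈ F, |β z0| / (2 * ‖β‖) ≤ ‖z0 - w‖ := by
    intro w hw
    rw [hF, Submodule.span_union] at hw
    obtain ⟨g, hg, v, hv, rfl⟩ := Submodule.mem_sup.1 hw
    obtain ⟨n, hn⟩ := hrange v hv
    have hu : z0 - g ∈ Submodule.span ℝ E :=
      Submodule.sub_mem _ (Submodule.subset_span hz0) (Submodule.span_mono hG hg)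
    have h3 := far_growth E z hz n (z0 - g) hu (-v) (Submodule.neg_mem _ hn)
    have e : z0 - g + -v = z0 - (g + v) := by abel
    rw [e] at h3
    have hβg : β g = 0 := by
      have : Submodule.span ℝ G ≤ LinearMap.ker (β : X →ₗ[ℝ] ℝ) :=
        Submodule.span_le.2 fun x hx => h2 x hx
      exact this hg
    have h4 : |β z0| ≤ ‖β‖ * ‖z0 - g‖ := by
      have := β.le_opNorm (z0 - g)
      rwa [map_sub, hβg, sub_zero, Real.norm_eq_abs] at this
    have h5 : (1 / 2 : ℝ) ≤ ((n : ℝ) + 2) / (2 * (n + 1)) := by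
      rw [div_le_div_iff₀ (by norm_num) (by positivity)]
      linarith
    have h6 : (1 / 2 : ℝ) * ‖z0 - g‖ ≤ ‖z0 - (g + v)‖ :=
      le_trans (mul_le_mul_of_nonneg_right h5 (norm_nonneg _)) h3
    rw [div_le_iff₀ (by positivity)]
    nlinarith
  have hnot : z0 ∉ closure (F : Set X) := by
    intro hc
    rw [Metric.mem_closure_iff] at hc
    have : 0 < |β z0| / (2 * ‖β‖) := by
      have := abs_pos.2 h1
      positivity
    obtain ⟨w, hw, hd⟩ := hc _ this
    rw [dist_eq_norm] at hd
    exact absurd (hdist w hw) (not_le.2 hd)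
  obtain ⟨f, s, hs, hsx⟩ := geometric_hahn_banach_closed_point
    (F.convex.closure) isClosed_closure hnot
  have hs' : ∀ w ∈ F, f w < s := fun w hw => hs w (subset_closure hw)
  have hs0 : 0 < s := by simpa using hs' 0 F.zero_mem
  have hf0 : ∀ w ∈ F, f w = 0 := by
    intro w hw
    by_contra hne
    have := hs' ((s / f w) • w) (F.smul_mem _ hw)
    rw [map_smul, smul_eq_mul, div_mul_cancel₀ _ hne] at this
    exact lt_irrefl _ this
  have hfz : f z0 ≠ 0 := (hs0.trans hsx).ne'
  refine ⟨(f z0)⁻¹ • f, by simp [hfz], fun g hg => ?_, fun n => ?_⟩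
  · simp [hf0 g (Submodule.subset_span (Or.inl hg))]
  · simp [hf0 (z n) (Submodule.subset_span (Or.inr (mem_range_self n)))]

lemma exposed_of_parabola (y : ℕ → X) (a : ℕ → ℝ) (ha : Function.Injective a)
    (p q r : X →L[ℝ] ℝ) (hp : ∀ n, p (y n) = a n) (hq : ∀ n, q (y n) = a n ^ 2)
    (hr : ∀ n, r (y n) = (1 / 2) ^ n) (n : ℕ) :
    ∃ f : X →L[ℝ] ℝ, ∃ κ : ℝ, 0 < κ ∧ ∀ k, k ≠ n → f (y k) ≤ f (y n) - κ := by
  obtain ⟨μ, hμ0, hμ⟩ : ∃ μ : ℝ, 0 < μ ∧ ∀ k < n, μ ≤ (a k - a n) ^ 2 := by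
    have : ∀ m ≤ n, ∃ μ : ℝ, 0 < μ ∧ ∀ k < m, μ ≤ (a k - a n) ^ 2 := by
      intro m
      induction m with
      | zero => exact fun _ => ⟨1, one_pos, by simp⟩
      | succ m ih =>
        intro hm
        obtain ⟨μ, h0, h1⟩ := ih (by omega)
        have hne : a m - a n ≠ 0 := sub_ne_zero.2 fun h => by
          have := ha h
          omega
        refine ⟨min μ ((a m - a n) ^ 2), lt_min h0 (by positivity), fun k hk => ?_⟩
        rcases Nat.lt_succ_iff_lt_or_eq.1 hk with h | rfl
        · exact (min_le_left _ _).trans (h1 k h)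
        · exact min_le_right _ _
    exact this n le_rfl
  have hδ : (0 : ℝ) < (1 / 2) ^ n := by positivity
  have hev : ∀ k, ((2 * a n) • p - q + (μ / 2) • r) (y k) =
      a n ^ 2 - (a k - a n) ^ 2 + μ / 2 * (1 / 2) ^ k := by
    intro k
    simp only [_root_.add_apply, _root_.sub_apply, _root_.smul_apply, smul_eq_mul, hp, hq, hr]
    ring
  refine ⟨(2 * a n) • p - q + (μ / 2) • r, μ / 2 * (1 / 2) ^ n / 2, by positivity, fun k hk => ?_⟩
  rw [hev, hev]
  rcases lt_or_gt_of_ne hk with h | h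
  · have h1 := hμ k h
    have h2 : ((1 : ℝ) / 2) ^ k ≤ 1 := pow_le_one₀ (by norm_num) (by norm_num)
    nlinarith
  · have h2 : ((1 : ℝ) / 2) ^ k ≤ (1 / 2) ^ (n + 1) :=
      pow_le_pow_of_le_one (by norm_num) (by norm_num) h
    rw [pow_succ] at h2
    nlinarith [sq_nonneg (a k - a n)]

lemma sup_le_hull (y : ℕ → X) (f : X →L[ℝ] ℝ) (c : ℝ) (hc : ∀ n, f (y n) ≤ c) :
    ∀ b ∈ closure (convexHull ℝ (range y)), f b ≤ c := by
  have hsub : closure (convexHull ℝ (range y)) ⊆ {b | f b ≤ c} := by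
    refine closure_minimal (convexHull_min ?_ (convex_halfSpace_le f.isLinear _))
      (isClosed_le (by fun_prop) (by fun_prop))
    rintro _ ⟨k, rfl⟩
    exact hc k
  exact fun b hb => hsub hb

lemma hull_bounded (y : ℕ → X) (M : ℝ) (hM : ∀ n, ‖y n‖ ≤ M) :
    ∀ b ∈ closure (convexHull ℝ (range y)), ‖b‖ ≤ M := by
  have hsub : closure (convexHull ℝ (range y)) ⊆ Metric.closedBall 0 M := by
    refine closure_minimal (convexHull_min ?_ (convex_closedBall _ _)) Metric.isClosed_closedBall
    rintro _ ⟨k, rfl⟩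
    simpa using hM k
  exact fun b hb => by simpa using hsub hb

lemma sup_gen (y : ℕ → X) (f : X →L[ℝ] ℝ) (ε : ℝ) (hε : 0 < ε) :
    ∃ n, sSup (f '' closure (convexHull ℝ (range y))) - ε < f (y n) := by
  by_contra hcon
  push Not at hcon
  have h1 := sup_le_hull y f _ hcon
  have : sSup (f '' closure (convexHull ℝ (range y))) ≤
      sSup (f '' closure (convexHull ℝ (range y))) - ε := by
    refine csSup_le ⟨f (y 0), mem_image_of_mem _
      (subset_closure (subset_convexHull ℝ _ (mem_range_self 0)))⟩ ?_
    rintro _ ⟨b, hb, rfl⟩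
    exact h1 b hb
  linarith

lemma sup_add_sets (A D : Set X) (hA : A.Nonempty) (hD : D.Nonempty) (M : ℝ)
    (hAM : ∀ b ∈ A, ‖b‖ ≤ M) (hDM : ∀ b ∈ D, ‖b‖ ≤ M) (f : X →L[ℝ] ℝ) :
    sSup (f '' (A + D)) ≤ sSup (f '' A) + sSup (f '' D) := by
  have hb : ∀ S : Set X, (∀ b ∈ S, ‖b‖ ≤ M) → BddAbove (f '' S) := by
    intro S hS
    refine ⟨‖f‖ * M, ?_⟩
    rintro _ ⟨b, hb, rfl⟩
    calc f b ≤ ‖f b‖ := Real.le_norm_self _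
      _ ≤ ‖f‖ * ‖b‖ := f.le_opNorm b
      _ ≤ ‖f‖ * M := by gcongr; exact hS b hb
  refine csSup_le ((hA.add hD).image f) ?_
  rintro _ ⟨_, ⟨a, ha, d, hd, rfl⟩, rfl⟩
  rw [map_add]
  exact add_le_add (le_csSup (hb A hAM) (mem_image_of_mem f ha))
    (le_csSup (hb D hDM) (mem_image_of_mem f hd))

/-- the generators -/
noncomputable def genPt (P : X →L[ℝ] X) (e0 e1 e2 : X) (x : ℕ → X) (a : ℕ → ℝ) (σ : ℝ) (n : ℕ) : X :=
  P (x n) + a n • e0 + (a n ^ 2) • e1 + (σ * (1 / 2) ^ n) • e2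

lemma far_gen (N E t : Set X) (θ : ℝ) (x : ℕ → X) (a : ℕ → ℝ)
    (habs : ∀ n, |a n| ≤ 2)
    (hidx : ∀ n, ∀ z ∈ N, ∀ η : ℝ, 0 < η → ∃ k, n ≤ k ∧ x k = z ∧ |a k - a n| < η)
    (hnet : ∀ n, x n ∈ closure (convexHull ℝ (N ∩ FarSet (E ∪ t) θ)))
    (P : X →L[ℝ] X) (e0 e1 e2 : X) (σ : ℝ) (f : X →L[ℝ] ℝ) (ε : ℝ) (hε : 0 < ε)
    (hσ : σ * f e2 ≤ 0) :
    ∃ k, x k ∈ FarSet (E ∪ t) θ ∧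
      sSup (f '' closure (convexHull ℝ (range (genPt P e0 e1 e2 x a σ)))) - ε <
        f (genPt P e0 e1 e2 x a σ k) := by
  obtain ⟨n, hn⟩ := sup_gen (genPt P e0 e1 e2 x a σ) f (ε / 3) (by positivity)
  obtain ⟨z, hz, hfz⟩ : ∃ z ∈ N ∩ FarSet (E ∪ t) θ, f (P (x n)) - ε / 3 < f (P z) := by
    by_contra hcon
    push Not at hcon
    have hsub : closure (convexHull ℝ (N ∩ FarSet (E ∪ t) θ)) ⊆
        {b | (f.comp P) b ≤ f (P (x n)) - ε / 3} := by
      refine closure_minimal (convexHull_min hcon (convex_halfSpace_le (f.comp P).isLinear _))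
        (isClosed_le (by fun_prop) (by fun_prop))
    have h1 : f (P (x n)) ≤ f (P (x n)) - ε / 3 := hsub (hnet n)
    linarith
  have hden : 0 < |f e0| + 4 * |f e1| + 1 := by positivity
  obtain ⟨k, hnk, hxk, hak⟩ := hidx n z hz.1 (ε / 3 / (|f e0| + 4 * |f e1| + 1)) (by positivity)
  refine ⟨k, hxk ▸ hz.2, ?_⟩
  have hδ : ((1 : ℝ) / 2) ^ k ≤ (1 / 2) ^ n :=
    pow_le_pow_of_le_one (by norm_num) (by norm_num) hnk
  have hev : ∀ m, f (genPt P e0 e1 e2 x a σ m) =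
      f (P (x m)) + a m * f e0 + a m ^ 2 * f e1 + (σ * f e2) * (1 / 2) ^ m := by
    intro m
    simp only [genPt, map_add, map_smul, smul_eq_mul]
    ring
  rw [hev] at hn
  rw [hev, hxk]
  have h1 : (σ * f e2) * (1 / 2) ^ n ≤ (σ * f e2) * (1 / 2) ^ k :=
    mul_le_mul_of_nonpos_left hδ hσ
  have h2 : |(a k - a n) * f e0| = |a k - a n| * |f e0| := abs_mul _ _
  have h3 : |(a k ^ 2 - a n ^ 2) * f e1| ≤ |a k - a n| * (4 * |f e1|) := by
    have : a k ^ 2 - a n ^ 2 = (a k - a n) * (a k + a n) := by ring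
    rw [this, abs_mul, abs_mul, mul_assoc]
    have h4 : |a k + a n| ≤ 4 := (abs_add_le _ _).trans (by linarith [habs k, habs n])
    gcongr
  have h5 := neg_abs_le ((a k - a n) * f e0)
  have h6 := neg_abs_le ((a k ^ 2 - a n ^ 2) * f e1)
  rw [lt_div_iff₀ hden] at hak
  have h7 := abs_nonneg (a k - a n)
  nlinarith

theorem exists_scd_sets_sum_not_scd
    {X : Type*} [NormedAddCommGroup X] [NormedSpace ℝ X] [CompleteSpace X]
    (h : DaugavetProperty X) :
    ∃ A D : Set X,
      Convex ℝ A ∧ IsClosed A ∧ IsBounded A ∧ IsSCD A ∧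
      Convex ℝ D ∧ IsClosed D ∧ IsBounded D ∧ IsSCD D ∧
      ¬ IsSCD (A + D) := by
  obtain ⟨e, α, hα⟩ := exists_biorth_s7 h
  have hα' : ∀ i j, i ≠ j → α i (e j) = 0 := fun i j hij => by rw [hα, if_neg hij]
  have hα1 : ∀ i, α i (e i) = 1 := fun i => by rw [hα, if_pos rfl]
  have he3 : e 3 ≠ 0 := by
    intro h0
    have := hα1 3
    rw [h0, map_zero] at this
    exact zero_ne_one this
  have he3p : 0 < ‖e 3‖ := norm_pos_iff.2 he3
  set z0 : X := ‖e 3‖⁻¹ • e 3 with hz0def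
  have hz0 : ‖z0‖ ≤ 1 := by
    rw [hz0def, norm_smul, norm_inv, norm_norm, inv_mul_cancel₀ he3p.ne']
  have hβ : α 3 z0 ≠ 0 := by
    rw [hz0def, map_smul, hα1, smul_eq_mul, mul_one]
    positivity
  set G : Set X := {e 0, e 1, e 2} with hG
  set E : Set X := insert z0 G with hEdef
  have hE : E.Finite := by
    rw [hEdef, hG]; exact Set.toFinite _
  obtain ⟨N, hNc, hz0N, hN1, hNnet⟩ := exists_net h E hE z0 hz0
  obtain ⟨ν, rfl⟩ := hNc.exists_eq_range ⟨z0, hz0N⟩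
  obtain ⟨x, a, hainj, habs, hxr, hidx0⟩ := exists_index ν
  set N : Set X := range ν with hNdef
  have hidx : ∀ n, ∀ z ∈ N, ∀ η : ℝ, 0 < η → ∃ k, n ≤ k ∧ x k = z ∧ |a k - a n| < η := by
    rintro n _ ⟨m, rfl⟩ η hη
    exact hidx0 n m η hη
  let P : X →L[ℝ] X := ContinuousLinearMap.id ℝ X - (α 0).smulRight (e 0) -
    (α 1).smulRight (e 1) - (α 2).smulRight (e 2)
  have hPx : ∀ v, P v = v - α 0 v • e 0 - α 1 v • e 1 - α 2 v • e 2 := fun v => rfl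
  let y : ℝ → ℕ → X := genPt P (e 0) (e 1) (e 2) x a
  have hy : ∀ σ n, y σ n = P (x n) + a n • e 0 + (a n ^ 2) • e 1 + (σ * (1 / 2) ^ n) • e 2 :=
    fun σ n => rfl
  have hc0 : ∀ σ n, α 0 (y σ n) = a n := by
    intro σ n
    simp [hy, hPx, hα]
  have hc1 : ∀ σ n, α 1 (y σ n) = a n ^ 2 := by
    intro σ n
    simp [hy, hPx, hα]
  have hc2 : ∀ σ n, α 2 (y σ n) = σ * (1 / 2) ^ n := by
    intro σ n
    simp [hy, hPx, hα]
  set M : ℝ := ‖P‖ + 2 * ‖e 0‖ + 4 * ‖e 1‖ + ‖e 2‖ with hMdef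
  have hM : ∀ σ : ℝ, |σ| ≤ 1 → ∀ n, ‖y σ n‖ ≤ M := by
    intro σ hσ n
    rw [hy]
    have h1 : ‖P (x n)‖ ≤ ‖P‖ :=
      (P.le_opNorm _).trans (mul_le_of_le_one_right (norm_nonneg _) (hN1 _ (hxr n)))
    have h2 : ‖a n • e 0‖ ≤ 2 * ‖e 0‖ := by
      rw [norm_smul, Real.norm_eq_abs]
      exact mul_le_mul_of_nonneg_right (habs n) (norm_nonneg _)
    have h3 : ‖(a n ^ 2) • e 1‖ ≤ 4 * ‖e 1‖ := by
      rw [norm_smul, Real.norm_eq_abs, abs_pow]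
      refine mul_le_mul_of_nonneg_right ?_ (norm_nonneg _)
      nlinarith [habs n, abs_nonneg (a n)]
    have h4 : ‖(σ * (1 / 2) ^ n) • e 2‖ ≤ ‖e 2‖ := by
      rw [norm_smul, Real.norm_eq_abs, abs_mul]
      refine mul_le_of_le_one_left (norm_nonneg _) ?_
      refine mul_le_one₀ hσ (abs_nonneg _) ?_
      rw [abs_of_pos (by positivity)]
      exact pow_le_one₀ (by norm_num) (by norm_num)
    refine (norm_add_le _ _).trans (add_le_add ((norm_add_le _ _).trans (add_le_add
      ((norm_add_le _ _).trans (add_le_add h1 h2)) h3)) h4)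
  have hM1 := hM 1 (by norm_num)
  have hM2 := hM (-1) (by norm_num)
  set A : Set X := closure (convexHull ℝ (range (y 1))) with hA
  set D : Set X := closure (convexHull ℝ (range (y (-1)))) with hD
  have hbA := hull_bounded (y 1) M hM1
  have hbD := hull_bounded (y (-1)) M hM2
  have hyA : ∀ n, y 1 n ∈ A := fun n => subset_closure (subset_convexHull ℝ _ (mem_range_self n))
  have hyD : ∀ n, y (-1) n ∈ D := fun n => subset_closure (subset_convexHull ℝ _ (mem_range_self n))
  have bdd : ∀ S : Set X, (∀ b ∈ S, ‖b‖ ≤ M) → IsBounded S := fun S hS =>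
    (Metric.isBounded_closedBall (x := (0 : X)) (r := M)).subset fun b hb => by simpa using hS b hb
  refine ⟨A, D, (convex_convexHull ℝ _).closure, isClosed_closure, bdd A hbA, ?_,
    (convex_convexHull ℝ _).closure, isClosed_closure, bdd D hbD, ?_, ?_⟩
  · refine scd_of_exposed_s7 (y 1) M hM1 (exposed_of_parabola (y 1) a hainj (α 0) (α 1) (α 2)
      (hc0 1) (hc1 1) fun n => ?_)
    rw [hc2, one_mul]
  · refine scd_of_exposed_s7 (y (-1)) M hM2 (exposed_of_parabola (y (-1)) a hainj (α 0) (α 1) (-α 2)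
      (hc0 (-1)) (hc1 (-1)) fun n => ?_)
    rw [_root_.neg_apply, hc2]
    ring
  rintro ⟨V, hV, hdet⟩
  have hyG : ∀ σ n, ∃ p ∈ Submodule.span ℝ G, y σ n = x n + p := by
    intro σ n
    have m0 : e 0 ∈ Submodule.span ℝ G := Submodule.subset_span (by simp [hG])
    have m1 : e 1 ∈ Submodule.span ℝ G := Submodule.subset_span (by simp [hG])
    have m2 : e 2 ∈ Submodule.span ℝ G := Submodule.subset_span (by simp [hG])
    refine ⟨(a n - α 0 (x n)) • e 0 + (a n ^ 2 - α 1 (x n)) • e 1 +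
      (σ * (1 / 2) ^ n - α 2 (x n)) • e 2, Submodule.add_mem _ (Submodule.add_mem _
        (Submodule.smul_mem _ _ m0) (Submodule.smul_mem _ _ m1)) (Submodule.smul_mem _ _ m2), ?_⟩
    rw [hy, hPx]
    module
  have hstep : ∀ (n : ℕ) (t : Finset X), (t : Set X) ⊆ N → ∃ z ∈ N,
      z ∈ FarSet (E ∪ t) ((((n : ℝ) + 1) * (n + 3)) / ((n + 2) * (n + 2))) ∧
      ∃ b ∈ V n, ∃ w ∈ N, ∃ p ∈ Submodule.span ℝ G, b = z + w + p := by
    intro n t ht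
    obtain ⟨-, f, -, ε, hε, hVn⟩ := hV n
    have hθ : (((n : ℝ) + 1) * (n + 3)) / ((n + 2) * (n + 2)) < 1 := by
      rw [div_lt_one (by positivity)]
      nlinarith
    have hnet := fun k => hNnet (x k) (hxr k) t ht t.finite_toSet _ hθ
    have hsup := sup_add_sets A D ⟨_, hyA 0⟩ ⟨_, hyD 0⟩ M hbA hbD f
    rcases le_total (f (e 2)) 0 with h2 | h2
    · obtain ⟨k, hk, hfk⟩ := far_gen N E t _ x a habs hidx hnet P (e 0) (e 1) (e 2) 1 f (ε / 2)
        (by positivity) (by linarith)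
      obtain ⟨k', hfk'⟩ := sup_gen (y (-1)) f (ε / 2) (by positivity)
      obtain ⟨p, hp, hpe⟩ := hyG 1 k
      obtain ⟨p', hp', hpe'⟩ := hyG (-1) k'
      refine ⟨x k, hxr k, hk, y 1 k + y (-1) k', ?_, x k', hxr k', p + p',
        Submodule.add_mem _ hp hp', by rw [hpe, hpe']; abel⟩
      rw [hVn]
      refine ⟨add_mem_add (hyA k) (hyD k'), ?_⟩
      rw [map_add]
      change sSup (f '' A) - ε / 2 < f (y 1 k) at hfk
      linarith
    · obtain ⟨k, hk, hfk⟩ := far_gen N E t _ x a habs hidx hnet P (e 0) (e 1) (e 2) (-1) f (ε / 2)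
        (by positivity) (by linarith)
      obtain ⟨k', hfk'⟩ := sup_gen (y 1) f (ε / 2) (by positivity)
      obtain ⟨p, hp, hpe⟩ := hyG (-1) k
      obtain ⟨p', hp', hpe'⟩ := hyG 1 k'
      refine ⟨x k, hxr k, hk, y 1 k' + y (-1) k, ?_, x k', hxr k', p + p',
        Submodule.add_mem _ hp hp', by rw [hpe, hpe']; abel⟩
      rw [hVn]
      refine ⟨add_mem_add (hyA k') (hyD k), ?_⟩
      rw [map_add]
      change sSup (f '' D) - ε / 2 < f (y (-1) k) at hfk
      linarith
  obtain ⟨z, T, hT, hz⟩ := seq_choice N (fun n t z =>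
    z ∈ FarSet (E ∪ t) ((((n : ℝ) + 1) * (n + 3)) / ((n + 2) * (n + 2))) ∧
      ∃ b ∈ V n, ∃ w ∈ N, ∃ p ∈ Submodule.span ℝ G, b = z + w + p) hstep
  have hzfar : ∀ n : ℕ, z n ∈ FarSet (E ∪ z '' Iio n)
      ((((n : ℝ) + 1) * (n + 3)) / ((n + 2) * (n + 2))) := by
    intro n
    rw [← hT]
    exact (hz n).2.1
  obtain ⟨φ, hφ0, hφG, hφz⟩ := far_sep E G z hzfar z0 (mem_insert _ _) (subset_insert _ _) (α 3) hβ
    (by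
      intro g hg
      rw [hG] at hg
      simp only [mem_insert_iff, mem_singleton_iff] at hg
      rcases hg with rfl | rfl | rfl <;> exact hα' _ _ (by decide))
  have hφG' : ∀ p ∈ Submodule.span ℝ G, φ p = 0 := by
    intro p hp
    have : Submodule.span ℝ G ≤ LinearMap.ker (φ : X →ₗ[ℝ] ℝ) :=
      Submodule.span_le.2 fun x hx => hφG x hx
    exact this hp
  have hbdd : BddAbove (φ '' N) := by
    refine ⟨‖φ‖, ?_⟩
    rintro _ ⟨w, hw, rfl⟩
    exact (Real.le_norm_self _).trans ((φ.le_opNorm w).trans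
      (mul_le_of_le_one_right (norm_nonneg _) (hN1 w hw)))
  set S : ℝ := sSup (φ '' N) with hS
  have hle : ∀ w ∈ N, φ w ≤ S := fun w hw => le_csSup hbdd (mem_image_of_mem φ hw)
  have hS1 : 1 ≤ S := hφ0 ▸ hle z0 hz0N
  choose b hbV w hwN p hpG hbe using fun n => (hz n).2.2
  have hdetB := hdet (range b) (fun n => ⟨b n, mem_range_self n, hbV n⟩)
  have hBle := sup_le_hull b φ S (fun n => by
    rw [hbe, map_add, map_add, hφz, hφG' _ (hpG n), zero_add, add_zero]
    exact hle _ (hwN n))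
  obtain ⟨_, ⟨v, hv, rfl⟩, hvS⟩ := exists_lt_of_lt_csSup
    (⟨φ z0, mem_image_of_mem φ hz0N⟩ : (φ '' N).Nonempty) (show S - 1 / 2 < sSup (φ '' N) by linarith)
  obtain ⟨k, -, hxk, -⟩ := hidx 0 v hv 1 one_pos
  have hfin := hBle _ (hdetB (add_mem_add (hyA k) (hyD k)))
  obtain ⟨p1, hp1, hpe1⟩ := hyG 1 k
  obtain ⟨p2, hp2, hpe2⟩ := hyG (-1) k
  rw [hpe1, hpe2, map_add, map_add, map_add, hφG' _ hp1, hφG' _ hp2, hxk] at hfin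
  linarith
end

section
/- Let X₁ and X₂ be real Banach spaces and let X = X₁ × X₂ be their product with the supremum norm ‖(x₁, x₂)‖ = max(‖x₁‖, ‖x₂‖). Let B₁ ⊂ X₁ and B₂ ⊂ X₂ be nonempty bounded SCD sets. Then the set B₁ × B₂ ⊂ X (which equals the Minkowski sum of B₁ × {0} and {0} × B₂) is SCD in X. -/
open Bornology Set Pointwise

variable {X : Type*} [NormedAddCommGroup X] [NormedSpace ℝ X]

lemma bddAbove_image_clm {X : Type*} [NormedAddCommGroup X] [NormedSpace ℝ X] {A : Set X}
    (hb : IsBounded A) (f : X →L[ℝ] ℝ) : BddAbove (f '' A) := by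
  obtain ⟨C, hC⟩ := hb.exists_norm_le
  refine ⟨‖f‖ * C, ?_⟩
  rintro _ ⟨x, hx, rfl⟩
  exact (le_abs_self _).trans ((f.le_opNorm x).trans
    (mul_le_mul_of_nonneg_left (hC x hx) (norm_nonneg f)))

lemma exists_near_sup {X : Type*} [NormedAddCommGroup X] [NormedSpace ℝ X] {A : Set X}
    (hne : A.Nonempty) (f : X →L[ℝ] ℝ) {ε : ℝ} (hε : 0 < ε) :
    ∃ a ∈ A, sSup (f '' A) - ε < f a := by
  obtain ⟨_, ⟨a, ha, rfl⟩, h⟩ :=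
    exists_lt_of_lt_csSup (hne.image f) (show sSup (f '' A) - ε < sSup (f '' A) by linarith)
  exact ⟨a, ha, h⟩

lemma exists_sub_slice {X : Type*} [NormedAddCommGroup X] [NormedSpace ℝ X] {A : Set X}
    (hne : A.Nonempty) {V : ℕ → Set X} (hV : Determining A V) (f : X →L[ℝ] ℝ)
    {ε : ℝ} (hε : 0 < ε) : ∃ n, ∀ x ∈ V n, sSup (f '' A) - ε < f x := by
  by_contra! h
  choose b hb hfb using h
  have h1 := hV (range b) (fun n => ⟨b n, mem_range_self n, hb n⟩)
  have hsub : closure (convexHull ℝ (range b)) ⊆ {x | f x ≤ sSup (f '' A) - ε} := by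
    apply closure_minimal
    · apply convexHull_min
      · rintro _ ⟨n, rfl⟩
        exact hfb n
      · exact convex_halfSpace_le f.toLinearMap.isLinear _
    · exact isClosed_le f.continuous continuous_const
  obtain ⟨a, ha, hfa⟩ := exists_near_sup hne f hε
  have : f a ≤ _ := hsub (h1 ha)
  linarith

theorem prod_isSCD
    {X₁ : Type*} [NormedAddCommGroup X₁] [NormedSpace ℝ X₁] [CompleteSpace X₁]
    {X₂ : Type*} [NormedAddCommGroup X₂] [NormedSpace ℝ X₂] [CompleteSpace X₂]
    (B₁ : Set X₁) (B₂ : Set X₂)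
    (h₁ : B₁.Nonempty) (h₁b : IsBounded B₁) (h₁s : IsSCD B₁)
    (h₂ : B₂.Nonempty) (h₂b : IsBounded B₂) (h₂s : IsSCD B₂) :
    IsSCD (B₁ ×ˢ B₂ : Set (X₁ × X₂)) := by
  obtain ⟨V, hV, hVd⟩ := h₁s
  obtain ⟨U, hU, hUd⟩ := h₂s
  choose _ g hg δ hδ hVe using hV
  choose _ h hh η hη hUe using hU
  let F : ℕ → ℕ → (X₁ × X₂ →L[ℝ] ℝ) := fun n m =>
    ((δ n)⁻¹ • g n).coprod ((η m)⁻¹ • h m)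
  have hF : ∀ n m x, F n m x = (δ n)⁻¹ * g n x.1 + (η m)⁻¹ * h m x.2 := by
    intro n m x
    simp [F]
  have hne : (B₁ ×ˢ B₂ : Set (X₁ × X₂)).Nonempty := h₁.prod h₂
  have hbd : IsBounded (B₁ ×ˢ B₂ : Set (X₁ × X₂)) := h₁b.prod h₂b
  let W : ℕ → ℕ → Set (X₁ × X₂) := fun n m => sliceSet (B₁ ×ˢ B₂) (F n m) 1
  have hW : ∀ n m x, x ∈ W n m → x.1 ∈ V n ∧ x.2 ∈ U m := by
    rintro n m ⟨x, y⟩ ⟨⟨hx, hy⟩, hs⟩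
    simp only at hx hy
    have key : ∀ a ∈ B₁, ∀ b ∈ B₂, (δ n)⁻¹ * g n a + (η m)⁻¹ * h m b ≤
        sSup (F n m '' (B₁ ×ˢ B₂)) := by
      intro a ha b hb
      have := le_csSup (bddAbove_image_clm hbd (F n m))
        (mem_image_of_mem (F n m) (show (a, b) ∈ B₁ ×ˢ B₂ from ⟨ha, hb⟩))
      rwa [hF] at this
    rw [hF] at hs
    simp only at hs ⊢
    have e1 := mul_inv_cancel₀ (hδ n).ne'
    have e2 := mul_inv_cancel₀ (hη m).ne'
    constructor
    · rw [hVe]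
      refine ⟨hx, ?_⟩
      set s := sSup (F n m '' (B₁ ×ˢ B₂)) with hsdef
      have : sSup (g n '' B₁) ≤ δ n * (s - (η m)⁻¹ * h m y) := by
        apply csSup_le (h₁.image _)
        rintro _ ⟨a, ha, rfl⟩
        have := mul_le_mul_of_nonneg_left (key a ha y hy) (hδ n).le
        linear_combination this - g n a * e1
      have h2 := mul_lt_mul_of_pos_left hs (hδ n)
      linear_combination this + h2 + g n x * e1
    · rw [hUe]
      refine ⟨hy, ?_⟩
      set s := sSup (F n m '' (B₁ ×ˢ B₂)) with hsdef
      have : sSup (h m '' B₂) ≤ η m * (s - (δ n)⁻¹ * g n x) := by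
        apply csSup_le (h₂.image _)
        rintro _ ⟨b, hb, rfl⟩
        have := mul_le_mul_of_nonneg_left (key x hx b hb) (hη m).le
        linear_combination this - h m b * e2
      have h2 := mul_lt_mul_of_pos_left hs (hη m)
      linear_combination this + h2 + h m y * e2
  refine ⟨fun k => W k.unpair.1 k.unpair.2, fun k => ?_, ?_⟩
  · beta_reduce
    generalize k.unpair.1 = n
    generalize k.unpair.2 = m
    refine ⟨?_, F n m, ?_, 1, one_pos, rfl⟩
    · obtain ⟨a, ha, hfa⟩ := exists_near_sup hne (F n m) one_pos
      exact ⟨a, ha, hfa⟩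
    · intro h0
      apply hg n
      ext x
      have := hF n m (x, 0)
      rw [h0] at this
      simpa [(hδ n).ne'] using this
  · intro B hB
    have hB' : ∀ n m, (B ∩ W n m).Nonempty := by
      intro n m
      simpa using hB (Nat.pair n m)
    intro a ha
    by_contra hna
    obtain ⟨f, u, hfu, hua⟩ := geometric_hahn_banach_closed_point
      (convex_convexHull ℝ B).closure isClosed_closure hna
    let f1 := f.comp (ContinuousLinearMap.inl ℝ X₁ X₂)
    let f2 := f.comp (ContinuousLinearMap.inr ℝ X₁ X₂)
    have hf : ∀ x, f x = f1 x.1 + f2 x.2 := by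
      intro x
      simp [f1, f2, ← map_add]
    have l1 := le_csSup (bddAbove_image_clm h₁b f1) (mem_image_of_mem f1 ha.1)
    have l2 := le_csSup (bddAbove_image_clm h₂b f2) (mem_image_of_mem f2 ha.2)
    rw [hf] at hua
    have hε : 0 < (sSup (f1 '' B₁) + sSup (f2 '' B₂) - u) / 2 := by linarith
    obtain ⟨n, hn⟩ := exists_sub_slice h₁ hVd f1 hε
    obtain ⟨m, hm⟩ := exists_sub_slice h₂ hUd f2 hε
    obtain ⟨b, hbB, hbW⟩ := hB' n m
    obtain ⟨q1, q2⟩ := hW n m b hbW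
    have := hfu b (subset_closure (subset_convexHull ℝ B hbB))
    rw [hf] at this
    linarith [hn _ q1, hm _ q2]
end
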